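/- arXiv:1910.03036 — 3 statements merged into one kernel-verified Lean document; each statement's English description precedes it below -/
import Mathlib

section
/- (Ingham's Tauberian theorem, real-axis variant.) Let D, \delta(t), \varphi, \chi, A, f, \psi be as in Ingham's Tauberian theorem, and suppose conditions (a) \varphi, \chi holomorphic on D and positive on (0,h]; (b) -t\varphi'(t) \to \infty as t \to 0^+; (c) -\delta(t)\varphi'(t)/(t\sqrt{\varphi''(t)}) \to \infty as t \to 0^+; (d) \varphi''(t+z) = O(\varphi''(t)) and \chi(t+z) = O(\chi(t)) uniformly over |z| < \delta(t) as t \to 0^+, all hold, and additionally that for some fixed k \in \mathbb{R} the function t \mapsto -t^k \varphi'(t) decreases to 0 as t \to 0^+. Assume (i') f(t) \sim \chi(t) e^{\varphi(t)} as t \to 0^+ along the positive reals, and (ii) for each fixed \Delta > 0, f(z) = O(\chi(|z|) e^{\varphi(|z|)}) as z \to 0 in the region |Im(z)| \le \Delta\,Re(z). Then A(x) \sim \frac{\chi(\psi(x)) e^{\varphi(\psi(x)) + x\psi(x)}}{\psi(x) \sqrt{2\pi \varphi''(\psi(x))}} as x \to \infty. -/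
/-!
Tilt the measure `dA` by `exp (-t * u)` at the saddle point `t = ψ x`, recentre it at `x = -φ' t`
and rescale by `t`. The real-axis asymptotics of `f`, together with the second-order Taylor
expansion of `φ` at `t`, show that the Laplace transform of the tilted law, normalised by
`σ = √φ'' t`, tends to `exp (s ^ 2 / 2)` for real `s`; Vitali's theorem extends this to imaginary
`s`, so that the characteristic function of the recentred and rescaled law is Gaussian at the scale
`1 / (t * σ)`, where `t * σ → ∞`. The bound for `f` in sectors and the monotonicity of
`-t ^ k * φ' t` dominate this characteristic function by a Gaussian on every bounded interval.
A comparison with the normal law through a positive band-limited kernel turns this into a local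
limit theorem: after multiplication by `t * σ` the laws converge to Lebesgue measure divided by
`√(2 * π)`. Testing against `exp u` on `u ≤ 0` recovers `A x`.

That `t * σ → ∞` is itself a consequence of the sector bound. If `t * φ'' t` were equal to a fixed
small multiple of `-φ' t`, the model `χ * exp φ` would be small compared with `f t` on a circle
about `t`, against the maximum principle; hence `t * φ'' t` stays on one side of that multiple, and
it cannot stay below it because `-t * φ' t` is unbounded.
-/

open Filter Topology MeasureTheory Set

noncomputable section

/-- The squared modulus of the Laplace-Fourier integral of the indicator of `[0, 1]`: a band-limited
kernel which, unlike the Fejér kernel, has no zeros, so that measures can be tilted by it. -/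
def bandKernel (u : ℝ) : ℝ :=
  ‖∫ ξ in (0:ℝ)..1, Complex.exp ((1 + u * Complex.I) * ξ)‖ ^ 2

/-- The Fourier transform at `ζ` of the measure with density `bandKernel` with respect to `m`. -/
def bandCharFun (m : Measure ℝ) (ζ : ℝ) : ℂ :=
  ∫ u, (bandKernel u : ℂ) * Complex.exp (ζ * u * Complex.I) ∂m

/-- The uniform distribution on the unit square. By Fubini, `bandKernel` is the Fourier transform of
the image of a density on the square under `p ↦ p.2 - p.1`. -/
def unitSquareMeasure : Measure (ℝ × ℝ) :=
  (volume.restrict (Ioc (0:ℝ) 1)).prod (volume.restrict (Ioc (0:ℝ) 1))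

section BandKernel

lemma bandKernel_eq (u : ℝ) :
    bandKernel u = ‖Complex.exp (1 + u * Complex.I) - 1‖ ^ 2 / (1 + u ^ 2) := by
  have hne : (1 + u * Complex.I : ℂ) ≠ 0 := fun h => by simpa using congrArg Complex.re h
  have hnorm : ‖(1 + u * Complex.I : ℂ)‖ ^ 2 = 1 + u ^ 2 := by
    rw [Complex.sq_norm, Complex.normSq_apply]; simp; ring
  rw [bandKernel, integral_exp_mul_complex hne, norm_div, div_pow, hnorm]
  simp

lemma norm_exp_one_add_mul_I (u : ℝ) : ‖Complex.exp (1 + u * Complex.I)‖ = Real.exp 1 := by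
  rw [Complex.norm_exp]; simp

lemma one_div_one_add_sq_le_bandKernel (u : ℝ) : 1 / (1 + u ^ 2) ≤ bandKernel u := by
  rw [bandKernel_eq]
  have h := norm_sub_norm_le (Complex.exp (1 + u * Complex.I)) 1
  rw [norm_exp_one_add_mul_I, norm_one] at h
  have := Real.add_one_le_exp (1:ℝ)
  gcongr
  nlinarith

lemma bandKernel_le_mul_inv (u : ℝ) : bandKernel u ≤ (Real.exp 1 + 1) ^ 2 * (1 + u ^ 2)⁻¹ := by
  rw [bandKernel_eq, div_eq_mul_inv]
  have h := norm_sub_le (Complex.exp (1 + u * Complex.I)) 1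
  rw [norm_exp_one_add_mul_I, norm_one] at h
  gcongr

lemma bandKernel_le (u : ℝ) : bandKernel u ≤ (Real.exp 1 + 1) ^ 2 :=
  (bandKernel_le_mul_inv u).trans (mul_le_of_le_one_right (by positivity)
    (inv_le_one_of_one_le₀ (by nlinarith [sq_nonneg u])))

lemma bandKernel_pos (u : ℝ) : 0 < bandKernel u :=
  lt_of_lt_of_le (by positivity) (one_div_one_add_sq_le_bandKernel u)

lemma norm_bandKernel (u : ℝ) : ‖bandKernel u‖ = bandKernel u :=
  Real.norm_of_nonneg (bandKernel_pos u).le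

lemma continuous_bandKernel : Continuous bandKernel := by
  rw [funext bandKernel_eq]
  exact Continuous.div (by fun_prop) (by fun_prop) fun u => by positivity

lemma integrable_bandKernel : Integrable bandKernel :=
  (integrable_inv_one_add_sq.const_mul _).mono' continuous_bandKernel.aestronglyMeasurable
    (Eventually.of_forall fun u => (norm_bandKernel u).trans_le (bandKernel_le_mul_inv u))

lemma integrable_bandKernel_of_isFiniteMeasure (m : Measure ℝ) [IsFiniteMeasure m] :
    Integrable bandKernel m :=
  Integrable.of_bound continuous_bandKernel.aestronglyMeasurable _
    (Eventually.of_forall fun u => (norm_bandKernel u).trans_le (bandKernel_le u))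

lemma integral_bandKernel_pos {m : Measure ℝ} [NeZero m] (hm : Integrable bandKernel m) :
    0 < ∫ u, bandKernel u ∂m := by
  rw [integral_pos_iff_support_of_nonneg (fun u => (bandKernel_pos u).le) hm,
    Function.support_eq_univ fun u => (bandKernel_pos u).ne']
  exact Measure.measure_univ_pos.2 (NeZero.ne m)

lemma bandCharFun_zero (m : Measure ℝ) : bandCharFun m 0 = ((∫ u, bandKernel u ∂m : ℝ) : ℂ) := by
  simp [bandCharFun, integral_complex_ofReal]

instance : IsProbabilityMeasure unitSquareMeasure := by
  have : IsProbabilityMeasure ((volume : Measure ℝ).restrict (Ioc 0 1)) := ⟨by simp⟩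
  unfold unitSquareMeasure; infer_instance

lemma ae_mem_unitSquare :
    ∀ᵐ p ∂unitSquareMeasure, p ∈ Ioc (0:ℝ) 1 ×ˢ Ioc (0:ℝ) 1 := by
  rw [unitSquareMeasure, Measure.prod_restrict]
  exact ae_restrict_mem (measurableSet_Ioc.prod measurableSet_Ioc)

lemma map_unitSquareMeasure_le (ζ : ℝ) :
    unitSquareMeasure.map (fun p => p.2 - p.1 + ζ) ≤ volume := by
  have : IsProbabilityMeasure ((volume : Measure ℝ).restrict (Ioc 0 1)) := ⟨by simp⟩
  have hshear : MeasurePreserving (fun p : ℝ × ℝ => (p.1, p.2 - p.1 + ζ))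
      ((volume.restrict (Ioc 0 1)).prod volume) ((volume.restrict (Ioc 0 1)).prod volume) := by
    refine (MeasurePreserving.id _).skew_product (g := fun x y => y - x + ζ) (by fun_prop) ?_
    refine Eventually.of_forall fun x => ?_
    simp_rw [sub_add]
    exact (measurePreserving_sub_right volume (x - ζ)).map_eq
  calc unitSquareMeasure.map (fun p => p.2 - p.1 + ζ)
      ≤ (((volume : Measure ℝ).restrict (Ioc 0 1)).prod volume).map (fun p => p.2 - p.1 + ζ) :=
        Measure.map_mono (Measure.prod_mono le_rfl Measure.restrict_le_self) (by fun_prop)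
    _ = volume := (measurePreserving_snd.comp hshear).map_eq

lemma integrable_comp_sub_add_unitSquareMeasure {g : ℝ → ℝ} (hg : Integrable g) (ζ : ℝ) :
    Integrable (fun p : ℝ × ℝ => g (p.2 - p.1 + ζ)) unitSquareMeasure :=
  (hg.mono_measure (map_unitSquareMeasure_le ζ)).comp_measurable (by fun_prop)

lemma integral_comp_sub_add_unitSquareMeasure_le {g : ℝ → ℝ} (hg : Integrable g) (hg0 : 0 ≤ g)
    (ζ : ℝ) : ∫ p, g (p.2 - p.1 + ζ) ∂unitSquareMeasure ≤ ∫ ξ, g ξ := by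
  have hm := map_unitSquareMeasure_le ζ
  rw [← integral_map (f := g) (φ := fun p : ℝ × ℝ => p.2 - p.1 + ζ) (by fun_prop)
    (hg.mono_measure hm).aestronglyMeasurable]
  exact integral_mono_measure hm (Eventually.of_forall hg0) hg

lemma bandKernel_mul_exp (u ζ : ℝ) :
    (bandKernel u : ℂ) * Complex.exp (ζ * u * Complex.I) =
      ∫ p, (Real.exp (p.1 + p.2) : ℂ) * Complex.exp (((p.2 - p.1 + ζ : ℝ) : ℂ) * u * Complex.I)
        ∂unitSquareMeasure := by
  have hconj : ∫ ξ in Ioc (0:ℝ) 1, Complex.exp ((1 - u * Complex.I) * ξ) =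
      (starRingEnd ℂ) (∫ ξ in Ioc (0:ℝ) 1, Complex.exp ((1 + u * Complex.I) * ξ)) := by
    rw [← integral_conj]
    congr 1
    ext ξ
    rw [← Complex.exp_conj]
    simp [sub_eq_add_neg]
  have hsq : (bandKernel u : ℂ) = (∫ ξ in Ioc (0:ℝ) 1, Complex.exp ((1 - u * Complex.I) * ξ)) *
      ∫ ξ in Ioc (0:ℝ) 1, Complex.exp ((1 + u * Complex.I) * ξ) := by
    rw [hconj, mul_comm, Complex.mul_conj, bandKernel,
      intervalIntegral.integral_of_le zero_le_one, Complex.normSq_eq_norm_sq]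
  rw [hsq, ← integral_prod_mul, ← integral_mul_const]
  refine integral_congr_ae (Eventually.of_forall fun p => ?_)
  simp only [Complex.ofReal_exp, ← Complex.exp_add]
  congr 1
  push_cast
  ring

lemma bandCharFun_eq_integral_charFun (m : Measure ℝ) [IsFiniteMeasure m] (ζ : ℝ) :
    bandCharFun m ζ =
      ∫ p, (Real.exp (p.1 + p.2) : ℂ) * charFun m (p.2 - p.1 + ζ) ∂unitSquareMeasure := by
  simp_rw [bandCharFun, bandKernel_mul_exp, charFun_apply_real, ← integral_const_mul]
  rw [integral_integral_swap]
  refine Integrable.of_bound (C := Real.exp 2) (Continuous.aestronglyMeasurable ?_) ?_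
  · simp only [Function.uncurry_def]
    fun_prop
  · have hsquare := (Measure.ae_prod_iff_ae_ae (μ := m) (ν := unitSquareMeasure)
      (p := fun z : ℝ × ℝ × ℝ => z.2 ∈ Ioc (0:ℝ) 1 ×ˢ Ioc (0:ℝ) 1)
      (measurable_snd (measurableSet_Ioc.prod measurableSet_Ioc))).2
      (Eventually.of_forall fun _ => ae_mem_unitSquare)
    filter_upwards [hsquare] with z ⟨⟨_, h1⟩, ⟨_, h2⟩⟩
    simp only [Function.uncurry_def, norm_mul, Complex.norm_real, Real.norm_eq_abs, Real.abs_exp]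
    rw [← Complex.ofReal_mul, Complex.norm_exp_ofReal_mul_I, mul_one]
    gcongr
    linarith

lemma integrable_exp_mul_charFun_unitSquareMeasure (m : Measure ℝ) [IsFiniteMeasure m] (ζ : ℝ) :
    Integrable (fun p : ℝ × ℝ => (Real.exp (p.1 + p.2) : ℂ) * charFun m (p.2 - p.1 + ζ))
      unitSquareMeasure := by
  refine Integrable.of_bound (C := Real.exp 2 * m.real univ) (Measurable.aestronglyMeasurable ?_) ?_
  · exact (by fun_prop : Measurable fun p : ℝ × ℝ => (Real.exp (p.1 + p.2) : ℂ)).mul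
      (measurable_charFun.comp (by fun_prop))
  · filter_upwards [ae_mem_unitSquare] with p ⟨⟨_, h1⟩, ⟨_, h2⟩⟩
    rw [norm_mul, Complex.norm_real, Real.norm_eq_abs, Real.abs_exp]
    gcongr
    · linarith
    · exact norm_charFun_le _

lemma integrableOn_norm_charFun_sub {s : Set ℝ} (hs : volume s ≠ ⊤) (m m' : Measure ℝ)
    [IsFiniteMeasure m] [IsFiniteMeasure m'] :
    IntegrableOn (fun ξ => ‖charFun m ξ - charFun m' ξ‖) s := by
  refine Measure.integrableOn_of_bounded hs
    (measurable_charFun.sub measurable_charFun).norm.aestronglyMeasurable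
    (M := m.real univ + m'.real univ) (Eventually.of_forall fun ξ => ?_)
  rw [norm_norm]
  exact (norm_sub_le _ _).trans (add_le_add (norm_charFun_le ξ) (norm_charFun_le ξ))

lemma norm_bandCharFun_sub_le (m m' : Measure ℝ) [IsFiniteMeasure m] [IsFiniteMeasure m']
    (ζ : ℝ) :
    ‖bandCharFun m ζ - bandCharFun m' ζ‖ ≤
      Real.exp 2 * ∫ ξ in Icc (-(1 + |ζ|)) (1 + |ζ|), ‖charFun m ξ - charFun m' ξ‖ := by
  set g : ℝ → ℝ := (Icc (-(1 + |ζ|)) (1 + |ζ|)).indicator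
    (fun ξ => ‖charFun m ξ - charFun m' ξ‖) with hg
  have hgi : Integrable g :=
    (integrableOn_norm_charFun_sub measure_Icc_lt_top.ne m m').integrable_indicator
      measurableSet_Icc
  have hg0 : 0 ≤ g := fun ξ => indicator_nonneg (fun _ _ => norm_nonneg _) ξ
  rw [bandCharFun_eq_integral_charFun, bandCharFun_eq_integral_charFun,
    ← integral_sub (integrable_exp_mul_charFun_unitSquareMeasure m ζ)
      (integrable_exp_mul_charFun_unitSquareMeasure m' ζ), ← integral_indicator measurableSet_Icc]
  calc _ ≤ ∫ p, Real.exp 2 * g (p.2 - p.1 + ζ) ∂unitSquareMeasure := by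
        refine norm_integral_le_of_norm_le
          ((integrable_comp_sub_add_unitSquareMeasure hgi ζ).const_mul _) ?_
        filter_upwards [ae_mem_unitSquare] with p ⟨⟨h1', h1⟩, ⟨h2', h2⟩⟩
        have hmem : p.2 - p.1 + ζ ∈ Icc (-(1 + |ζ|)) (1 + |ζ|) := by
          constructor <;> linarith [neg_abs_le ζ, le_abs_self ζ]
        rw [← mul_sub, norm_mul, Complex.norm_real, Real.norm_eq_abs, Real.abs_exp, hg,
          indicator_of_mem hmem]
        gcongr
        linarith
    _ = Real.exp 2 * ∫ p, g (p.2 - p.1 + ζ) ∂unitSquareMeasure := integral_const_mul _ _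
    _ ≤ _ := by
        gcongr
        exact integral_comp_sub_add_unitSquareMeasure_le hgi hg0 ζ

end BandKernel

/-- Probability measures that are nearly Gaussian with standard deviations `N n → ∞`: their
characteristic functions converge at scale `1 / N n`, with a Gaussian bound on bounded intervals. -/
structure IsLocallyGaussian (μ : ℕ → Measure ℝ) (N : ℕ → ℝ) : Prop where
  isProbabilityMeasure : ∀ n, IsProbabilityMeasure (μ n)
  tendsto_scale : Tendsto N atTop atTop
  tendsto_charFun : ∀ y : ℝ,
    Tendsto (fun n => charFun (μ n) (y / N n)) atTop (𝓝 (Real.exp (-y ^ 2 / 2) : ℂ))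
  eventually_norm_charFun_le : ∀ Δ : ℝ, ∃ C c : ℝ, 0 < c ∧ ∀ᶠ n in atTop, ∀ ξ : ℝ, |ξ| ≤ Δ →
    ‖charFun (μ n) ξ‖ ≤ C * Real.exp (-c * (N n * ξ) ^ 2)

section LocalLimit

open scoped Real

variable {μ : ℕ → Measure ℝ} {N : ℕ → ℝ}

lemma charFun_gaussianReal_zero_sq (σ ξ : ℝ) :
    charFun (ProbabilityTheory.gaussianReal 0 (σ ^ 2).toNNReal) ξ =
      (Real.exp (-(σ * ξ) ^ 2 / 2) : ℂ) := by
  rw [ProbabilityTheory.charFun_gaussianReal, Complex.ofReal_exp]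
  congr 1
  rw [Real.coe_toNNReal _ (sq_nonneg σ)]
  push_cast
  ring

lemma IsLocallyGaussian.tendsto_mul_integral_charFun_sub_gaussian (h : IsLocallyGaussian μ N)
    (Δ : ℝ) :
    Tendsto (fun n => N n * ∫ ξ in Icc (-Δ) Δ, ‖charFun (μ n) ξ -
      charFun (ProbabilityTheory.gaussianReal 0 (N n ^ 2).toNNReal) ξ‖) atTop (𝓝 0) := by
  set γ : ℕ → Measure ℝ := fun n => ProbabilityTheory.gaussianReal 0 (N n ^ 2).toNNReal with hγ
  set g : ℕ → ℝ → ℝ := fun n =>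
    (Icc (-Δ) Δ).indicator (fun ξ => ‖charFun (μ n) ξ - charFun (γ n) ξ‖)
  have := h.isProbabilityMeasure
  have hg0 : ∀ n ξ, 0 ≤ g n ξ := fun n ξ => indicator_nonneg (fun _ _ => norm_nonneg _) ξ
  have hgm : ∀ n, Measurable (g n) := fun n =>
    (measurable_charFun.sub measurable_charFun).norm.indicator measurableSet_Icc
  have hγy : ∀ᶠ n in atTop, ∀ y, charFun (γ n) (y / N n) = (Real.exp (-y ^ 2 / 2) : ℂ) := by
    filter_upwards [h.tendsto_scale.eventually_gt_atTop 0] with n hn y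
    rw [hγ, charFun_gaussianReal_zero_sq, mul_div_cancel₀ y hn.ne']
  obtain ⟨C, c, hc, hC⟩ := h.eventually_norm_charFun_le Δ
  have hlim : Tendsto (fun n => ∫ y, g n (y / N n)) atTop (𝓝 (∫ _ : ℝ, (0:ℝ))) := by
    refine tendsto_integral_filter_of_dominated_convergence
      (fun y => |C| * Real.exp (-c * y ^ 2) + Real.exp (-(1/2) * y ^ 2))
      (Eventually.of_forall fun n =>
        ((hgm n).comp (measurable_id.div_const _)).aestronglyMeasurable) ?_
      (((integrable_exp_neg_mul_sq hc).const_mul _).add (integrable_exp_neg_mul_sq (by norm_num)))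
      (Eventually.of_forall fun y => ?_)
    · filter_upwards [hC, hγy, h.tendsto_scale.eventually_gt_atTop 0] with n hn hγn hNn
      refine Eventually.of_forall fun y => ?_
      rw [Real.norm_of_nonneg (hg0 n _)]
      refine indicator_apply_le' (fun hy => (norm_sub_le _ _).trans (add_le_add ?_ ?_))
        fun _ => by positivity
      · have hy := hn (y / N n) (abs_le.2 hy)
        rw [mul_div_cancel₀ y hNn.ne'] at hy
        exact hy.trans (by gcongr; exact le_abs_self C)
      · rw [hγn, Complex.norm_real, Real.norm_eq_abs, Real.abs_exp]
        exact le_of_eq (by ring_nf)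
    · have hdiff := ((h.tendsto_charFun y).sub_const (Real.exp (-y ^ 2 / 2) : ℂ)).norm
      rw [sub_self, norm_zero] at hdiff
      refine squeeze_zero' (Eventually.of_forall fun n => hg0 n _) ?_ hdiff
      filter_upwards [hγy] with n hn
      exact (indicator_le_self' (fun _ _ => norm_nonneg _) _).trans (by rw [hn])
  rw [integral_zero] at hlim
  refine hlim.congr' ?_
  filter_upwards [h.tendsto_scale.eventually_gt_atTop 0] with n hNn
  rw [Measure.integral_comp_div, smul_eq_mul, abs_of_pos hNn,
    integral_indicator measurableSet_Icc]

lemma IsLocallyGaussian.tendsto_mul_bandCharFun_sub_gaussian (h : IsLocallyGaussian μ N) (ζ : ℝ) :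
    Tendsto (fun n => (N n : ℂ) * (bandCharFun (μ n) ζ -
      bandCharFun (ProbabilityTheory.gaussianReal 0 (N n ^ 2).toNNReal) ζ)) atTop (𝓝 0) := by
  have := h.isProbabilityMeasure
  have hlim := (h.tendsto_mul_integral_charFun_sub_gaussian (1 + |ζ|)).const_mul (Real.exp 2)
  rw [mul_zero] at hlim
  refine squeeze_zero_norm' ?_ hlim
  filter_upwards [h.tendsto_scale.eventually_gt_atTop 0] with n hNn
  rw [norm_mul, Complex.norm_real, Real.norm_of_nonneg hNn.le, mul_left_comm]
  gcongr
  exact norm_bandCharFun_sub_le _ _ ζ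

lemma mul_integral_gaussianReal_zero_sq {σ : ℝ} (hσ : 0 < σ) (g : ℝ → ℂ) :
    (σ : ℂ) * ∫ u, g u ∂ProbabilityTheory.gaussianReal 0 (σ ^ 2).toNNReal =
      (√(2 * π))⁻¹ * ∫ u : ℝ, (Real.exp (-u ^ 2 / (2 * σ ^ 2)) : ℂ) * g u := by
  have hv : (σ ^ 2).toNNReal ≠ 0 := by
    rw [Ne, Real.toNNReal_eq_zero, not_le]; positivity
  rw [ProbabilityTheory.integral_gaussianReal_eq_integral_smul hv, ← integral_const_mul,
    ← integral_const_mul]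
  congr 1
  ext u
  rw [ProbabilityTheory.gaussianPDFReal, Real.coe_toNNReal _ (sq_nonneg _), sub_zero,
    Real.sqrt_mul (by positivity : (0:ℝ) ≤ 2 * π) (σ ^ 2), Real.sqrt_sq hσ.le, Complex.real_smul]
  have hσ' : (σ : ℂ) ≠ 0 := by exact_mod_cast hσ.ne'
  have hπ : (√(2 * π) : ℂ) ≠ 0 := by exact_mod_cast (by positivity : √(2 * π) ≠ 0)
  push_cast
  field_simp

lemma tendsto_integral_exp_neg_sq_mul {g : ℝ → ℂ} (hg : Integrable g)
    (hN : Tendsto N atTop atTop) :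
    Tendsto (fun n => ∫ u : ℝ, (Real.exp (-u ^ 2 / (2 * N n ^ 2)) : ℂ) * g u) atTop
      (𝓝 (∫ u, g u)) := by
  refine tendsto_integral_of_dominated_convergence (fun u => ‖g u‖)
    (fun n => (Continuous.aestronglyMeasurable (by fun_prop)).mul hg.aestronglyMeasurable) hg.norm
    (fun n => Eventually.of_forall fun u => ?_) (Eventually.of_forall fun u => ?_)
  · rw [norm_mul, Complex.norm_real, Real.norm_eq_abs, Real.abs_exp]
    refine mul_le_of_le_one_left (norm_nonneg _) (Real.exp_le_one_iff.2 ?_)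
    exact div_nonpos_of_nonpos_of_nonneg (by nlinarith) (by positivity)
  · have harg : Tendsto (fun n => -u ^ 2 / (2 * N n ^ 2)) atTop (𝓝 0) :=
      tendsto_const_nhds.div_atTop
        (((tendsto_pow_atTop two_ne_zero).comp hN).const_mul_atTop two_pos)
    have hexp := (Complex.continuous_ofReal.tendsto _).comp
      ((Real.continuous_exp.tendsto _).comp harg)
    simpa using hexp.mul_const (g u)

lemma integrable_bandKernel_mul_exp (ζ : ℝ) :
    Integrable fun u : ℝ => (bandKernel u : ℂ) * Complex.exp (ζ * u * Complex.I) := by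
  refine integrable_bandKernel.mono' (Continuous.aestronglyMeasurable
    ((Complex.continuous_ofReal.comp continuous_bandKernel).mul (by fun_prop)))
    (Eventually.of_forall fun u => ?_)
  rw [norm_mul, ← Complex.ofReal_mul, Complex.norm_exp_ofReal_mul_I, Complex.norm_real,
    norm_bandKernel, mul_one]

lemma IsLocallyGaussian.tendsto_mul_bandCharFun (h : IsLocallyGaussian μ N) (ζ : ℝ) :
    Tendsto (fun n => (N n : ℂ) * bandCharFun (μ n) ζ) atTop
      (𝓝 ((√(2 * π))⁻¹ * bandCharFun volume ζ)) := by
  have hgauss : Tendsto (fun n => (N n : ℂ) *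
      bandCharFun (ProbabilityTheory.gaussianReal 0 (N n ^ 2).toNNReal) ζ) atTop
      (𝓝 ((√(2 * π))⁻¹ * bandCharFun volume ζ)) := by
    refine ((tendsto_integral_exp_neg_sq_mul (integrable_bandKernel_mul_exp ζ)
      h.tendsto_scale).const_mul _).congr' ?_
    filter_upwards [h.tendsto_scale.eventually_gt_atTop 0] with n hNn
    exact (mul_integral_gaussianReal_zero_sq hNn _).symm
  have hsum := (h.tendsto_mul_bandCharFun_sub_gaussian ζ).add hgauss
  rw [zero_add] at hsum
  exact hsum.congr fun n => by ring

lemma IsLocallyGaussian.tendsto_mul_integral_bandKernel (h : IsLocallyGaussian μ N) :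
    Tendsto (fun n => N n * ∫ u, bandKernel u ∂μ n) atTop
      (𝓝 ((√(2 * π))⁻¹ * ∫ u, bandKernel u)) := by
  have h0 := h.tendsto_mul_bandCharFun 0
  simp only [bandCharFun_zero, ← Complex.ofReal_mul] at h0
  exact (Complex.continuous_re.tendsto _).comp h0

/-- The probability measure with density proportional to `bandKernel` with respect to `m`. -/
def bandTilted (m : Measure ℝ) : Measure ℝ := m.tilted fun u => Real.log (bandKernel u)

lemma isProbabilityMeasure_bandTilted {m : Measure ℝ} [NeZero m] (hm : Integrable bandKernel m) :
    IsProbabilityMeasure (bandTilted m) :=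
  isProbabilityMeasure_tilted (by simpa only [Real.exp_log (bandKernel_pos _)] using hm)

lemma charFun_bandTilted (m : Measure ℝ) (ζ : ℝ) :
    charFun (bandTilted m) ζ = bandCharFun m ζ / ((∫ u, bandKernel u ∂m : ℝ) : ℂ) := by
  rw [bandTilted, charFun_apply_real, integral_tilted, bandCharFun, ← integral_div]
  simp_rw [Real.exp_log (bandKernel_pos _)]
  congr 1
  ext u
  rw [Complex.real_smul]
  push_cast
  ring

lemma integral_div_bandKernel_bandTilted (m : Measure ℝ) (g : ℝ → ℝ) :
    ∫ u, g u / bandKernel u ∂bandTilted m = (∫ u, g u ∂m) / ∫ u, bandKernel u ∂m := by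
  rw [bandTilted, integral_tilted, ← integral_div]
  simp_rw [Real.exp_log (bandKernel_pos _)]
  congr 1
  ext u
  have := (bandKernel_pos u).ne'
  rw [smul_eq_mul]
  field_simp

lemma IsLocallyGaussian.tendsto_integral_bandTilted (h : IsLocallyGaussian μ N)
    (b : BoundedContinuousFunction ℝ ℝ) :
    Tendsto (fun n => ∫ u, b u ∂bandTilted (μ n)) atTop (𝓝 (∫ u, b u ∂bandTilted volume)) := by
  have := h.isProbabilityMeasure
  let ρ : ℕ → ProbabilityMeasure ℝ := fun n =>
    ⟨_, isProbabilityMeasure_bandTilted (integrable_bandKernel_of_isFiniteMeasure (μ n))⟩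
  let ρ₀ : ProbabilityMeasure ℝ := ⟨_, isProbabilityMeasure_bandTilted integrable_bandKernel⟩
  suffices Tendsto ρ atTop (𝓝 ρ₀) from
    ProbabilityMeasure.tendsto_iff_forall_integral_tendsto.1 this b
  refine ProbabilityMeasure.tendsto_of_tendsto_charFun fun ζ => ?_
  change Tendsto (fun n => charFun (bandTilted (μ n)) ζ) atTop
    (𝓝 (charFun (bandTilted volume) ζ))
  simp_rw [charFun_bandTilted]
  have hc : (((√(2 * π))⁻¹ : ℝ) : ℂ) ≠ 0 :=
    Complex.ofReal_ne_zero.2 (by positivity : (√(2 * π))⁻¹ ≠ 0)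
  have hmass := (Complex.continuous_ofReal.tendsto _).comp h.tendsto_mul_integral_bandKernel
  have hquot := (h.tendsto_mul_bandCharFun ζ).div hmass (Complex.ofReal_ne_zero.2
    (mul_pos (by positivity) (integral_bandKernel_pos integrable_bandKernel)).ne')
  rw [Complex.ofReal_mul, mul_div_mul_left _ _ hc] at hquot
  refine hquot.congr' ?_
  filter_upwards [h.tendsto_scale.eventually_gt_atTop 0] with n hNn
  simp only [Pi.div_apply, Function.comp_apply, Complex.ofReal_mul]
  exact mul_div_mul_left _ _ (Complex.ofReal_ne_zero.2 hNn.ne')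

lemma IsLocallyGaussian.tendsto_mul_integral (h : IsLocallyGaussian μ N) {g : ℝ → ℝ}
    (hg : Continuous g) {K : ℝ} (hgK : ∀ u, |g u| ≤ K * bandKernel u) :
    Tendsto (fun n => N n * ∫ u, g u ∂μ n) atTop (𝓝 ((√(2 * π))⁻¹ * ∫ u, g u)) := by
  have := h.isProbabilityMeasure
  let b : BoundedContinuousFunction ℝ ℝ := BoundedContinuousFunction.ofNormedAddCommGroup
    (fun u => g u / bandKernel u)
    (hg.div continuous_bandKernel fun u => (bandKernel_pos u).ne') K fun u => by
      rw [norm_div, norm_bandKernel, div_le_iff₀ (bandKernel_pos u)]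
      exact hgK u
  have hb := h.tendsto_integral_bandTilted b
  simp only [b, BoundedContinuousFunction.coe_ofNormedAddCommGroup,
    integral_div_bandKernel_bandTilted] at hb
  have hprod := h.tendsto_mul_integral_bandKernel.mul hb
  have hM := (integral_bandKernel_pos integrable_bandKernel).ne'
  rw [mul_assoc, mul_div_cancel₀ _ hM] at hprod
  refine hprod.congr fun n => ?_
  rw [mul_assoc, mul_div_cancel₀ _
    (integral_bandKernel_pos (integrable_bandKernel_of_isFiniteMeasure (μ n))).ne']

/-- A continuous cutoff equal to `1` on `(-∞, a]` and to `0` on `[b, ∞)`. -/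
def rampCutoff (a b u : ℝ) : ℝ := max 0 (min 1 ((b - u) / (b - a)))

lemma rampCutoff_nonneg (a b u : ℝ) : 0 ≤ rampCutoff a b u := le_max_left _ _

lemma rampCutoff_le_one (a b u : ℝ) : rampCutoff a b u ≤ 1 :=
  max_le zero_le_one (min_le_left _ _)

lemma rampCutoff_of_le {a b u : ℝ} (hab : a < b) (hu : u ≤ a) : rampCutoff a b u = 1 := by
  have : 1 ≤ (b - u) / (b - a) := by rw [one_le_div (by linarith)]; linarith
  rw [rampCutoff, min_eq_left this, max_eq_right zero_le_one]

lemma rampCutoff_of_ge {a b u : ℝ} (hab : a < b) (hu : b ≤ u) : rampCutoff a b u = 0 := by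
  have : (b - u) / (b - a) ≤ 0 := div_nonpos_of_nonpos_of_nonneg (by linarith) (by linarith)
  rw [rampCutoff, max_eq_left ((min_le_right _ _).trans this)]

lemma continuous_rampCutoff (a b : ℝ) : Continuous (rampCutoff a b) := by
  unfold rampCutoff; fun_prop

lemma exp_le_mul_bandKernel {u : ℝ} (hu1 : u ≤ 1) : Real.exp u ≤ 2 * Real.exp 1 * bandKernel u := by
  refine le_trans ?_ (mul_le_mul_of_nonneg_left (one_div_one_add_sq_le_bandKernel u)
    (by positivity))
  rw [mul_one_div, le_div_iff₀ (by positivity)]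
  rcases le_total u 0 with hu | hu
  · have hquad := Real.quadratic_le_exp_of_nonneg (neg_nonneg.2 hu)
    calc Real.exp u * (1 + u ^ 2) ≤ Real.exp u * (2 * Real.exp (-u)) := by gcongr; nlinarith
      _ = 2 := by rw [mul_left_comm, ← Real.exp_add]; simp
      _ ≤ _ := by linarith [Real.one_le_exp (zero_le_one (α := ℝ))]
  · calc Real.exp u * (1 + u ^ 2) ≤ Real.exp 1 * 2 := by gcongr; nlinarith
      _ = _ := mul_comm _ _

lemma exp_mul_rampCutoff_nonneg (a b u : ℝ) : 0 ≤ Real.exp u * rampCutoff a b u :=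
  mul_nonneg (Real.exp_pos u).le (rampCutoff_nonneg _ _ _)

lemma abs_exp_mul_rampCutoff_le {a b : ℝ} (hab : a < b) (hb : b ≤ 1) (u : ℝ) :
    |Real.exp u * rampCutoff a b u| ≤ 2 * Real.exp 1 * bandKernel u := by
  rw [abs_of_nonneg (exp_mul_rampCutoff_nonneg a b u)]
  rcases le_total b u with h | h
  · rw [rampCutoff_of_ge hab h, mul_zero]
    have := bandKernel_pos u
    positivity
  · exact (mul_le_of_le_one_right (Real.exp_pos u).le (rampCutoff_le_one _ _ _)).trans
      (exp_le_mul_bandKernel (h.trans hb))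

lemma integrable_exp_mul_rampCutoff {a b : ℝ} (hab : a < b) (hb : b ≤ 1) {m : Measure ℝ}
    (hm : Integrable bandKernel m) : Integrable (fun u => Real.exp u * rampCutoff a b u) m :=
  (hm.const_mul _).mono'
    (Real.continuous_exp.mul (continuous_rampCutoff a b)).aestronglyMeasurable
    (Eventually.of_forall fun u => abs_exp_mul_rampCutoff_le hab hb u)

lemma setIntegral_exp_le_integral_exp_mul_rampCutoff {a b : ℝ} (hab : a < b) (hb : b ≤ 1)
    {m : Measure ℝ} (hm : Integrable bandKernel m) {S : Set ℝ} (hS : MeasurableSet S)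
    (hSa : S ⊆ Iic a) :
    ∫ u in S, Real.exp u ∂m ≤ ∫ u, Real.exp u * rampCutoff a b u ∂m := by
  have hint := integrable_exp_mul_rampCutoff hab hb hm
  have heq : EqOn Real.exp (fun u => Real.exp u * rampCutoff a b u) S := fun u hu => by
    simp only [rampCutoff_of_le hab (hSa hu), mul_one]
  rw [setIntegral_congr_fun hS heq]
  exact setIntegral_le_integral hint (Eventually.of_forall (exp_mul_rampCutoff_nonneg a b))

lemma integral_exp_mul_rampCutoff_le_setIntegral_exp {a b : ℝ} (hab : a < b) (hb : b ≤ 1)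
    {m : Measure ℝ} (hm : Integrable bandKernel m) {S : Set ℝ} (hS : MeasurableSet S)
    (hbS : Iio b ⊆ S) (hexp : IntegrableOn Real.exp S m) :
    ∫ u, Real.exp u * rampCutoff a b u ∂m ≤ ∫ u in S, Real.exp u ∂m := by
  have hint := integrable_exp_mul_rampCutoff hab hb hm
  rw [← setIntegral_eq_integral_of_forall_compl_eq_zero (s := S) fun u hu => by
    rw [rampCutoff_of_ge hab (not_lt.1 fun h => hu (hbS h)), mul_zero]]
  exact setIntegral_mono_on hint.integrableOn hexp hS fun u _ =>
    mul_le_of_le_one_right (Real.exp_pos _).le (rampCutoff_le_one _ _ _)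

lemma integrableOn_exp_of_subset_Iic {m : Measure ℝ} [IsFiniteMeasure m] {S : Set ℝ} {b : ℝ}
    (hSb : S ⊆ Iic b) : IntegrableOn Real.exp S m := by
  refine IntegrableOn.mono_set ?_ hSb
  refine Measure.integrableOn_of_bounded (measure_ne_top _ _)
    Real.continuous_exp.aestronglyMeasurable (M := Real.exp b) ?_
  filter_upwards [ae_restrict_mem measurableSet_Iic] with u hu
  rw [Real.norm_eq_abs, Real.abs_exp]
  exact Real.exp_le_exp.2 hu

lemma tendsto_mul_exp_mul_nhdsGT_zero (c s : ℝ) :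
    Tendsto (fun ε : ℝ => c * Real.exp (s * ε)) (𝓝[>] 0) (𝓝 c) := by
  have hcont : Continuous fun ε : ℝ => c * Real.exp (s * ε) := by fun_prop
  simpa using (hcont.tendsto 0).mono_left nhdsWithin_le_nhds

theorem IsLocallyGaussian.tendsto_mul_setIntegral_exp (h : IsLocallyGaussian μ N)
    {S : Set ℝ} (hS : MeasurableSet S) (hS1 : Iio 0 ⊆ S) (hS2 : S ⊆ Iic 0) :
    Tendsto (fun n => N n * ∫ u in S, Real.exp u ∂μ n) atTop (𝓝 (√(2 * π))⁻¹) := by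
  have := h.isProbabilityMeasure
  have hint : ∀ n, Integrable bandKernel (μ n) := fun n =>
    integrable_bandKernel_of_isFiniteMeasure _
  have hramp {a b : ℝ} (hab : a < b) (hb : b ≤ 1) :=
    h.tendsto_mul_integral (Real.continuous_exp.mul (continuous_rampCutoff a b))
      (abs_exp_mul_rampCutoff_le hab hb)
  rw [tendsto_order]
  refine ⟨fun r hr => ?_, fun r hr => ?_⟩
  · obtain ⟨ε, hεr, hε : 0 < ε⟩ := (((tendsto_mul_exp_mul_nhdsGT_zero _ (-1)).eventually
      (lt_mem_nhds hr)).and self_mem_nhdsWithin).exists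
    have hε' : -ε < 0 := neg_lt_zero.2 hε
    have hlt : r < (√(2 * π))⁻¹ * ∫ u, Real.exp u * rampCutoff (-ε) 0 u := by
      refine hεr.trans_le (mul_le_mul_of_nonneg_left ?_ (by positivity))
      rw [neg_one_mul, ← integral_exp_Iic]
      exact setIntegral_exp_le_integral_exp_mul_rampCutoff hε' zero_le_one integrable_bandKernel
        measurableSet_Iic subset_rfl
    filter_upwards [(hramp hε' zero_le_one).eventually (lt_mem_nhds hlt),
      h.tendsto_scale.eventually_gt_atTop 0] with n hn hNn
    refine hn.trans_le (mul_le_mul_of_nonneg_left ?_ hNn.le)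
    exact integral_exp_mul_rampCutoff_le_setIntegral_exp hε' zero_le_one (hint n) hS hS1
      (integrableOn_exp_of_subset_Iic hS2)
  · obtain ⟨ε, hεr, hε, hε1⟩ := (((tendsto_mul_exp_mul_nhdsGT_zero _ 1).eventually
      (gt_mem_nhds hr)).and (Ioc_mem_nhdsGT (zero_lt_one (α := ℝ)))).exists
    have hlt : (√(2 * π))⁻¹ * ∫ u, Real.exp u * rampCutoff 0 ε u < r := by
      refine lt_of_le_of_lt (mul_le_mul_of_nonneg_left ?_ (by positivity)) hεr
      rw [one_mul, ← integral_exp_Iic]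
      exact integral_exp_mul_rampCutoff_le_setIntegral_exp hε hε1 integrable_bandKernel
        measurableSet_Iic Iio_subset_Iic_self (integrableOn_exp_Iic ε)
    filter_upwards [(hramp hε hε1).eventually (gt_mem_nhds hlt),
      h.tendsto_scale.eventually_gt_atTop 0] with n hn hNn
    refine lt_of_le_of_lt (mul_le_mul_of_nonneg_left ?_ hNn.le) hn
    exact setIntegral_exp_le_integral_exp_mul_rampCutoff hε hε1 (hint n) hS hS2

end LocalLimit

section Vitali

variable {ι E : Type*} [NormedAddCommGroup E] {l : Filter ι} {K : ι → ℂ → E} {M R : ℝ} {c : ℂ}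

lemma mapsTo_closedBall_two_mul {g : ℂ → E} (hR : 0 < R)
    (hg : ∀ z ∈ Metric.ball c R, ‖g z‖ ≤ M) :
    MapsTo g (Metric.ball c R) (Metric.closedBall (g c) (2 * M)) := fun z hz => by
  rw [Metric.mem_closedBall, dist_eq_norm]
  linarith [norm_sub_le (g z) (g c), hg z hz, hg c (Metric.mem_ball_self hR)]

variable [NormedSpace ℂ E]

lemma tendsto_zero_center_of_frequently (hR : 0 < R)
    (hK : ∀ᶠ n in l, DifferentiableOn ℂ (K n) (Metric.ball c R) ∧
      ∀ z ∈ Metric.ball c R, ‖K n z‖ ≤ M)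
    (hfreq : ∃ᶠ s in 𝓝[≠] c, Tendsto (fun n => K n s) l (𝓝 0)) :
    Tendsto (fun n => K n c) l (𝓝 0) := by
  rw [NormedAddGroup.tendsto_nhds_zero]
  intro ε hε
  have hcont : Tendsto (fun s => 2 * M / R * dist s c) (𝓝[≠] c) (𝓝 0) := by
    have hcont : Continuous fun s => 2 * M / R * dist s c := by fun_prop
    simpa using (hcont.tendsto c).mono_left nhdsWithin_le_nhds
  obtain ⟨s, hs, hsε, hsR⟩ := (hfreq.and_eventually
    ((hcont.eventually (gt_mem_nhds (half_pos hε))).and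
      (mem_nhdsWithin_of_mem_nhds (Metric.ball_mem_nhds c hR)))).exists
  filter_upwards [hK, NormedAddGroup.tendsto_nhds_zero.1 hs _ (half_pos hε)] with n ⟨hd, hb⟩ hn
  have hdist := Complex.dist_le_div_mul_dist_of_mapsTo_ball hd (mapsTo_closedBall_two_mul hR hb) hsR
  rw [dist_eq_norm] at hdist
  linarith [norm_le_norm_add_norm_sub (K n s) (K n c)]

variable [CompleteSpace E]

lemma eventually_norm_le_pow_of_frequently (hR : 0 < R)
    (hK : ∀ᶠ n in l, DifferentiableOn ℂ (K n) (Metric.ball c R) ∧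
      ∀ z ∈ Metric.ball c R, ‖K n z‖ ≤ M)
    (hfreq : ∃ᶠ s in 𝓝[≠] c, Tendsto (fun n => K n s) l (𝓝 0)) {z : ℂ}
    (hz : z ∈ Metric.ball c R) (J : ℕ) {ε : ℝ} (hε : 0 < ε) :
    ∀ᶠ n in l, ‖K n z‖ ≤ M * (2 * ‖z - c‖ / R) ^ J + ε := by
  induction J generalizing K M ε with
  | zero =>
    filter_upwards [hK] with n ⟨_, hb⟩
    linarith [hb z hz]
  | succ J ih =>
    have hc := tendsto_zero_center_of_frequently hR hK hfreq
    have hslope := ih (K := fun n => dslope (K n) c) (M := 2 * M / R)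
      (by
        filter_upwards [hK] with n ⟨hd, hb⟩
        exact ⟨(Complex.differentiableOn_dslope (Metric.ball_mem_nhds _ hR)).2 hd, fun w hw =>
          Complex.norm_dslope_le_div_of_mapsTo_ball hd (mapsTo_closedBall_two_mul hR hb) hw⟩)
      ((hfreq.and_eventually self_mem_nhdsWithin).mono fun s ⟨hs, hsc⟩ => by
        simpa [dslope_of_ne _ hsc, slope_def_module] using (hs.sub hc).const_smul (s - c)⁻¹)
      (ε := ε / (2 * (‖z - c‖ + 1))) (by positivity)
    filter_upwards [hslope, NormedAddGroup.tendsto_nhds_zero.1 hc _ (half_pos hε)] with n hn hn0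
    have hε2 : ‖z - c‖ * (ε / (2 * (‖z - c‖ + 1))) ≤ ε / 2 := by
      rw [mul_div_assoc', div_le_div_iff₀ (by positivity) two_pos]
      nlinarith [norm_nonneg (z - c)]
    calc ‖K n z‖ = ‖K n c + (z - c) • dslope (K n) c z‖ := by
          rw [sub_smul_dslope, add_sub_cancel]
      _ ≤ ‖K n c‖ + ‖z - c‖ * ‖dslope (K n) c z‖ := (norm_add_le _ _).trans_eq (by rw [norm_smul])
      _ ≤ ε / 2 + ‖z - c‖ * (2 * M / R * (2 * ‖z - c‖ / R) ^ J + ε / (2 * (‖z - c‖ + 1))) := by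
          gcongr
      _ = ε / 2 + M * (2 * ‖z - c‖ / R) ^ (J + 1) + ‖z - c‖ * (ε / (2 * (‖z - c‖ + 1))) := by ring
      _ ≤ _ := by linarith

lemma tendsto_zero_of_frequently_of_mem_half_ball (hR : 0 < R)
    (hK : ∀ᶠ n in l, DifferentiableOn ℂ (K n) (Metric.ball c R) ∧
      ∀ z ∈ Metric.ball c R, ‖K n z‖ ≤ M)
    (hfreq : ∃ᶠ s in 𝓝[≠] c, Tendsto (fun n => K n s) l (𝓝 0)) {z : ℂ}
    (hz : z ∈ Metric.ball c (R / 2)) : Tendsto (fun n => K n z) l (𝓝 0) := by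
  rw [NormedAddGroup.tendsto_nhds_zero]
  intro ε hε
  have hlt : 2 * ‖z - c‖ / R < 1 := by
    rw [mem_ball_iff_norm] at hz
    rw [div_lt_one hR]; linarith
  have hpow := (tendsto_pow_atTop_nhds_zero_of_lt_one (by positivity) hlt).const_mul M
  rw [mul_zero] at hpow
  obtain ⟨J, hJ⟩ := (hpow.eventually (gt_mem_nhds (half_pos hε))).exists
  filter_upwards [eventually_norm_le_pow_of_frequently hR hK hfreq
    (Metric.ball_subset_ball (half_le_self hR.le) hz) J (half_pos hε)] with n hn
  linarith

theorem tendsto_zero_of_frequently_of_isPreconnected {U : Set ℂ} (hU : IsOpen U)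
    (hUc : IsPreconnected U)
    (hK : ∀ᶠ n in l, DifferentiableOn ℂ (K n) U ∧ ∀ z ∈ U, ‖K n z‖ ≤ M) (hc : c ∈ U)
    (hfreq : ∃ᶠ s in 𝓝[≠] c, Tendsto (fun n => K n s) l (𝓝 0)) {z : ℂ} (hz : z ∈ U) :
    Tendsto (fun n => K n z) l (𝓝 0) := by
  set S : Set ℂ := {w | ∀ᶠ s in 𝓝 w, Tendsto (fun n => K n s) l (𝓝 0)}
  have hspread : ∀ w ∈ U, (∃ᶠ s in 𝓝[≠] w, Tendsto (fun n => K n s) l (𝓝 0)) → w ∈ S := by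
    intro w hw hfreq
    obtain ⟨r, hr, hrU⟩ := Metric.isOpen_iff.1 hU w hw
    filter_upwards [Metric.ball_mem_nhds w (half_pos hr)] with s hs
    exact tendsto_zero_of_frequently_of_mem_half_ball hr
      (hK.mono fun n ⟨hd, hb⟩ => ⟨hd.mono hrU, fun z hz => hb z (hrU hz)⟩) hfreq hs
  have hopen : IsOpen S := isOpen_setOfPred_eventually_nhds
  suffices hUS : U ⊆ S from (hUS hz : ∀ᶠ s in 𝓝 z, _).self_of_nhds
  refine hUc.subset_of_closure_inter_subset hopen ⟨c, hc, hspread c hc hfreq⟩ ?_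
  rintro w ⟨hwS, hwU⟩
  by_contra hw
  refine hw (hspread w hwU ?_)
  have hacc : ∃ᶠ s in 𝓝[≠] w, s ∈ S := by
    rw [mem_closure_iff_frequently] at hwS
    exact frequently_nhdsWithin_iff.2 (hwS.mono fun s hs => ⟨hs, fun h => hw (h ▸ hs)⟩)
  exact hacc.mono fun s hs => hs.self_of_nhds

end Vitali

section Taylor

lemma im_deriv_eq_zero_of_eventually {g : ℂ → ℂ} {t : ℝ} (hg : DifferentiableAt ℂ g t)
    (him : ∀ᶠ r : ℝ in 𝓝 t, (g r).im = 0) : (deriv g t).im = 0 :=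
  (Complex.imCLM.hasFDerivAt.comp_hasDerivAt t hg.hasDerivAt.comp_ofReal).unique
    ((hasDerivAt_const t (0 : ℝ)).congr_of_eventuallyEq him)

lemma norm_sub_linear_le {g g' : ℂ → ℂ} {R ε : ℝ} {a : ℂ}
    (hg : ∀ z ∈ Metric.ball (0 : ℂ) R, HasDerivAt g (g' z) z)
    (hb : ∀ z ∈ Metric.ball (0 : ℂ) R, ‖g' z - a‖ ≤ ε) {z : ℂ} (hz : z ∈ Metric.ball (0 : ℂ) R) :
    ‖g z - g 0 - a * z‖ ≤ ε * ‖z‖ := by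
  have hmvt := (convex_ball (0 : ℂ) R).norm_image_sub_le_of_norm_hasDerivWithin_le
    (f := fun w => g w - a * w) (f' := fun w => g' w - a * 1)
    (fun x hx => ((hg x hx).sub ((hasDerivAt_id x).const_mul a)).hasDerivWithinAt)
    (fun x hx => by simpa using hb x hx)
    (Metric.mem_ball_self (Metric.pos_of_mem_ball hz)) hz
  simp only [mul_zero, sub_zero] at hmvt
  rwa [sub_right_comm]

lemma norm_sub_quadratic_le {g g' g'' : ℂ → ℂ} {R ε : ℝ} {a : ℂ}
    (hg : ∀ z ∈ Metric.ball (0 : ℂ) R, HasDerivAt g (g' z) z)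
    (hg' : ∀ z ∈ Metric.ball (0 : ℂ) R, HasDerivAt g' (g'' z) z)
    (hb : ∀ z ∈ Metric.ball (0 : ℂ) R, ‖g'' z - a‖ ≤ ε) {z : ℂ}
    (hz : z ∈ Metric.ball (0 : ℂ) R) :
    ‖g z - g 0 - g' 0 * z - a * z ^ 2 / 2‖ ≤ ε * ‖z‖ ^ 2 := by
  have hε : 0 ≤ ε := (norm_nonneg _).trans (hb z hz)
  have hsub : Metric.closedBall (0 : ℂ) ‖z‖ ⊆ Metric.ball (0 : ℂ) R :=
    Metric.closedBall_subset_ball (mem_ball_zero_iff.1 hz)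
  have hmvt := (convex_closedBall (0 : ℂ) ‖z‖).norm_image_sub_le_of_norm_hasDerivWithin_le
    (f := fun w => g w - g' 0 * w - a / 2 * w ^ 2)
    (f' := fun w => g' w - g' 0 * 1 - a / 2 * ((2 : ℕ) * w ^ (2 - 1))) (C := ε * ‖z‖)
    (fun x hx => (((hg x (hsub hx)).sub ((hasDerivAt_id x).const_mul _)).sub
      ((hasDerivAt_pow 2 x).const_mul _)).hasDerivWithinAt)
    (fun x hx => by
      have hlin := norm_sub_linear_le hg' hb (hsub hx)
      rw [mem_closedBall_zero_iff] at hx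
      refine (le_of_eq ?_).trans (hlin.trans (by gcongr))
      congr 1
      push_cast
      ring)
    (Metric.mem_closedBall_self (norm_nonneg z)) (show z ∈ Metric.closedBall 0 ‖z‖ by simp)
  refine (le_of_eq ?_).trans (hmvt.trans (le_of_eq ?_))
  · congr 1
    ring
  · rw [sub_zero]; ring

end Taylor

section Regularity

/-- The regularity of the exponent `φ` and of the factor `χ` near `0` in Ingham's theorem, on an
interval `(0, T]` where all the asymptotic conditions are in force; `k` is the exponent for which
`-t ^ k * φ' t` increases. -/
structure InghamRegular (D : Set ℂ) (T C k : ℝ) (δ : ℝ → ℝ) (φ χ : ℂ → ℂ) : Prop where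
  isOpen : IsOpen D
  differentiableOn_phi : DifferentiableOn ℂ φ D
  differentiableOn_chi : DifferentiableOn ℂ χ D
  T_pos : 0 < T
  delta_pos : ∀ t ∈ Ioc 0 T, 0 < δ t
  delta_le : ∀ t ∈ Ioc 0 T, δ t ≤ t
  ball_subset : ∀ t ∈ Ioc 0 T, Metric.ball (t : ℂ) (δ t) ⊆ D
  chi_im : ∀ t ∈ Ioc 0 T, (χ t).im = 0
  chi_pos : ∀ t ∈ Ioc 0 T, 0 < (χ t).re
  deriv_neg : ∀ t ∈ Ioc 0 T, (deriv φ t).re < 0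
  deriv2_im : ∀ t ∈ Ioc 0 T, (iteratedDeriv 2 φ t).im = 0
  deriv2_pos : ∀ t ∈ Ioc 0 T, 0 < (iteratedDeriv 2 φ t).re
  norm_deriv2_le : ∀ t ∈ Ioc 0 T, ∀ z : ℂ, ‖z‖ < δ t →
    ‖iteratedDeriv 2 φ (t + z)‖ ≤ C * ‖iteratedDeriv 2 φ t‖
  norm_chi_le : ∀ t ∈ Ioc 0 T, ∀ z : ℂ, ‖z‖ < δ t → ‖χ (t + z)‖ ≤ C * ‖χ t‖
  mul_deriv2_le : ∀ t ∈ Ioc 0 T, t * (iteratedDeriv 2 φ t).re ≤ k * -(deriv φ t).re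
  div_rpow_mul_deriv_le : ∀ t r : ℝ, 0 < t → t ≤ r → r ≤ T →
    (t / r) ^ k * -(deriv φ t).re ≤ -(deriv φ r).re
  tendsto_neg_mul_deriv : Tendsto (fun t : ℝ => -t * (deriv φ t).re) (𝓝[>] 0) atTop
  tendsto_div_sqrt : Tendsto (fun t : ℝ =>
    -δ t * (deriv φ t).re / (t * √(iteratedDeriv 2 φ t).re)) (𝓝[>] 0) atTop

lemma le_mul_neg_of_monotoneOn_rpow_mul {g : ℝ → ℝ} {g' k t : ℝ} {s : Set ℝ}
    (hmono : MonotoneOn (fun r => -(r ^ k) * g r) s) (hs : s ∈ 𝓝 t) (ht : 0 < t)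
    (hg : HasDerivAt g g' t) : t * g' ≤ k * -g t := by
  have hderiv : HasDerivAt (fun r => -(r ^ k) * g r)
      (-(k * t ^ (k - 1)) * g t + -(t ^ k) * g') t :=
    (Real.hasDerivAt_rpow_const (Or.inl ht.ne')).neg.mul hg
  have hnonneg := hmono.derivWithin_nonneg (x := t)
  rw [derivWithin_of_mem_nhds hs, hderiv.deriv, Real.rpow_sub_one ht.ne'] at hnonneg
  have hfactor : -(k * (t ^ k / t)) * g t + -(t ^ k) * g' =
      (t ^ k / t) * (k * -g t - t * g') := by
    field_simp
    ring
  rw [hfactor] at hnonneg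
  exact sub_nonneg.1 (nonneg_of_mul_nonneg_right hnonneg (div_pos (Real.rpow_pos_of_pos ht k) ht))

lemma div_rpow_mul_le_of_monotoneOn_rpow_mul {g : ℝ → ℝ} {k t r : ℝ} {s : Set ℝ}
    (hmono : MonotoneOn (fun r => -(r ^ k) * g r) s) (hts : t ∈ s) (hrs : r ∈ s) (ht : 0 < t)
    (htr : t ≤ r) : (t / r) ^ k * -g t ≤ -g r := by
  have hr : 0 < r := ht.trans_le htr
  have hle : -(t ^ k) * g t ≤ -(r ^ k) * g r := hmono hts hrs htr
  rw [Real.div_rpow ht.le hr.le, div_mul_eq_mul_div, div_le_iff₀ (Real.rpow_pos_of_pos hr k)]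
  linarith

lemma notMem_zero_of_tendsto_neg_mul_atTop {D : Set ℂ} {g : ℂ → ℂ} (hD : IsOpen D)
    (hg : ContinuousOn g D)
    (htop : Tendsto (fun t : ℝ => -t * (g t).re) (𝓝[>] 0) atTop) : (0 : ℂ) ∉ D := fun h0 => by
  have hcont : ContinuousAt (fun t : ℝ => -t * (g t).re) 0 := by
    have hg0 : ContinuousAt g ((0 : ℝ) : ℂ) := by simpa using hg.continuousAt (hD.mem_nhds h0)
    exact continuousAt_id.neg.mul (Complex.continuous_re.continuousAt.comp
      (hg0.comp Complex.continuous_ofReal.continuousAt))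
  exact not_tendsto_nhds_of_tendsto_atTop htop _ (hcont.tendsto.mono_left nhdsWithin_le_nhds)

lemma im_deriv_eq_zero_on_Ioo {D : Set ℂ} {g : ℂ → ℂ} {h : ℝ} (hD : IsOpen D)
    (hg : DifferentiableOn ℂ g D) (hmem : ∀ t ∈ Ioo 0 h, (t : ℂ) ∈ D)
    (him : ∀ t ∈ Ioo 0 h, (g t).im = 0) : ∀ t ∈ Ioo 0 h, (deriv g t).im = 0 := fun t ht =>
  im_deriv_eq_zero_of_eventually (hg.differentiableAt (hD.mem_nhds (hmem t ht)))
    (mem_of_superset (isOpen_Ioo.mem_nhds ht) him)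

lemma eventually_deriv_neg_and_deriv2_pos {δ : ℝ → ℝ} {φ : ℂ → ℂ}
    (hb : Tendsto (fun t : ℝ => -t * (deriv φ t).re) (𝓝[>] 0) atTop)
    (hc : Tendsto (fun t : ℝ => -δ t * (deriv φ t).re / (t * √(iteratedDeriv 2 φ t).re))
      (𝓝[>] 0) atTop) :
    ∀ᶠ t : ℝ in 𝓝[>] 0, (deriv φ t).re < 0 ∧ 0 < (iteratedDeriv 2 φ t).re ∧ 0 < δ t := by
  filter_upwards [self_mem_nhdsWithin, hb.eventually_gt_atTop 0, hc.eventually_gt_atTop 0]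
    with t (ht : 0 < t) hbt hct
  have hneg : (deriv φ t).re < 0 := by
    rw [neg_mul, ← mul_neg] at hbt
    exact neg_pos.1 (pos_of_mul_pos_right hbt ht.le)
  have hpos : 0 < (iteratedDeriv 2 φ t).re := by
    by_contra! hle
    simp [Real.sqrt_eq_zero_of_nonpos hle] at hct
  refine ⟨hneg, hpos, ?_⟩
  have hnum := (div_pos_iff_of_pos_right (mul_pos ht (Real.sqrt_pos.2 hpos))).1 hct
  rw [neg_mul, ← mul_neg] at hnum
  exact pos_of_mul_pos_left hnum (neg_pos.2 hneg).le

lemma exists_inghamRegular {D : Set ℂ} (hDopen : IsOpen D) {h : ℝ} (hh : 0 < h)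
    (hD : ∀ t : ℝ, 0 < t → t ≤ h → (t : ℂ) ∈ D)
    {δ : ℝ → ℝ} (hδ : ∀ t : ℝ, 0 < t → t ≤ h → δ t = Metric.infDist (t : ℂ) Dᶜ)
    {φ χ : ℂ → ℂ} (hφ : DifferentiableOn ℂ φ D) (hχ : DifferentiableOn ℂ χ D)
    (hφim : ∀ t : ℝ, 0 < t → t ≤ h → (φ t).im = 0)
    (hχpos : ∀ t : ℝ, 0 < t → t ≤ h → (χ t).im = 0 ∧ 0 < (χ t).re)
    (hb : Tendsto (fun t : ℝ => -t * (deriv φ t).re) (𝓝[>] 0) atTop)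
    (hc : Tendsto (fun t : ℝ => -δ t * (deriv φ t).re / (t * √(iteratedDeriv 2 φ t).re))
      (𝓝[>] 0) atTop)
    {C t₀ : ℝ} (ht₀ : 0 < t₀) (hd : ∀ t : ℝ, 0 < t → t ≤ t₀ → ∀ z : ℂ, ‖z‖ < δ t →
      ‖iteratedDeriv 2 φ (t + z)‖ ≤ C * ‖iteratedDeriv 2 φ t‖ ∧ ‖χ (t + z)‖ ≤ C * ‖χ t‖)
    {k : ℝ} (hk : MonotoneOn (fun t : ℝ => -(t ^ k) * (deriv φ t).re) (Ioc 0 h)) :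
    ∃ T : ℝ, InghamRegular D T C k δ φ χ := by
  have hφ' : DifferentiableOn ℂ (deriv φ) D := hφ.deriv hDopen
  have hφ'' : iteratedDeriv 2 φ = deriv (deriv φ) := by rw [iteratedDeriv_succ, iteratedDeriv_one]
  have hmem : ∀ t ∈ Ioo 0 h, (t : ℂ) ∈ D := fun t ht => hD t ht.1 ht.2.le
  have him : ∀ t ∈ Ioo 0 h, (iteratedDeriv 2 φ t).im = 0 := by
    rw [hφ'']
    exact im_deriv_eq_zero_on_Ioo hDopen hφ' hmem
      (im_deriv_eq_zero_on_Ioo hDopen hφ hmem fun t ht => hφim t ht.1 ht.2.le)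
  have h0 := notMem_zero_of_tendsto_neg_mul_atTop hDopen hφ'.continuousOn hb
  obtain ⟨T, hT0, hT⟩ := mem_nhdsGT_iff_exists_Ioc_subset.1
    ((eventually_deriv_neg_and_deriv2_pos hb hc).and
      (inter_mem (Ioo_mem_nhdsGT hh) (Ioc_mem_nhdsGT ht₀)))
  have hTh : ∀ t ∈ Ioc 0 T, t ∈ Ioo 0 h := fun t ht => (hT ht).2.1
  refine ⟨T,
    { isOpen := hDopen
      differentiableOn_phi := hφ
      differentiableOn_chi := hχ
      T_pos := hT0
      delta_pos := fun t ht => (hT ht).1.2.2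
      delta_le := fun t ht => ?_
      ball_subset := fun t ht => ?_
      chi_im := fun t ht => (hχpos t ht.1 (hTh t ht).2.le).1
      chi_pos := fun t ht => (hχpos t ht.1 (hTh t ht).2.le).2
      deriv_neg := fun t ht => (hT ht).1.1
      deriv2_im := fun t ht => him t (hTh t ht)
      deriv2_pos := fun t ht => (hT ht).1.2.1
      norm_deriv2_le := fun t ht z hz => (hd t ht.1 (hT ht).2.2.2 z hz).1
      norm_chi_le := fun t ht z hz => (hd t ht.1 (hT ht).2.2.2 z hz).2
      mul_deriv2_le := fun t ht => ?_
      div_rpow_mul_deriv_le := fun t r ht htr hr => ?_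
      tendsto_neg_mul_deriv := hb
      tendsto_div_sqrt := hc }⟩
  · rw [hδ t ht.1 (hTh t ht).2.le]
    simpa [abs_of_pos ht.1] using Metric.infDist_le_dist_of_mem (x := (t : ℂ)) (mem_compl h0)
  · rw [hδ t ht.1 (hTh t ht).2.le]
    exact Metric.ball_infDist_compl_subset
  · rw [hφ'']
    exact le_mul_neg_of_monotoneOn_rpow_mul hk (Ioc_mem_nhds ht.1 (hTh t ht).2) ht.1
      (hφ'.differentiableAt (hDopen.mem_nhds (hmem t (hTh t ht)))).hasDerivAt.real_of_complex
  · have hrh := Ioo_subset_Ioc_self (hTh r ⟨ht.trans_le htr, hr⟩)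
    exact div_rpow_mul_le_of_monotoneOn_rpow_mul hk ⟨ht, htr.trans hrh.2⟩ hrh ht htr

end Regularity

section ComplexBounds

variable {g : ℂ → ℂ} {c : ℂ} {C R : ℝ}

lemma mapsTo_closedBall_of_norm_le_mul (hb : ∀ z : ℂ, ‖z‖ < R → ‖g (c + z)‖ ≤ C * ‖g c‖) :
    MapsTo g (Metric.ball c R) (Metric.closedBall (g c) ((C + 1) * ‖g c‖)) := fun z hz => by
  have hz' := hb (z - c) (mem_ball_iff_norm.1 hz)
  rw [add_sub_cancel] at hz'
  rw [mem_closedBall_iff_norm]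
  linarith [norm_sub_le (g z) (g c)]

lemma norm_sub_le_of_norm_le_mul (hg : DifferentiableOn ℂ g (Metric.ball c R))
    (hb : ∀ z : ℂ, ‖z‖ < R → ‖g (c + z)‖ ≤ C * ‖g c‖) {z : ℂ} (hz : ‖z‖ < R) :
    ‖g (c + z) - g c‖ ≤ (C + 1) * ‖g c‖ / R * ‖z‖ := by
  simpa [dist_eq_norm] using Complex.dist_le_div_mul_dist_of_mapsTo_ball (z := c + z) hg
    (mapsTo_closedBall_of_norm_le_mul hb) (by simpa [dist_eq_norm] using hz)

lemma norm_deriv_le_of_norm_le_mul (hg : DifferentiableOn ℂ g (Metric.ball c R))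
    (hb : ∀ z : ℂ, ‖z‖ < R → ‖g (c + z)‖ ≤ C * ‖g c‖) (hR : 0 < R) :
    ‖deriv g c‖ ≤ (C + 1) * ‖g c‖ / R :=
  Complex.norm_deriv_le_div_of_mapsTo_ball hg (mapsTo_closedBall_of_norm_le_mul hb) hR

lemma sq_im_div_le_norm_sub_re {w : ℂ} {c : ℝ} (hc : 0 < c) (hw : ‖w‖ + w.re ≤ c) :
    w.im ^ 2 / c ≤ ‖w‖ - w.re := by
  have hsq : w.im ^ 2 = (‖w‖ - w.re) * (‖w‖ + w.re) := by
    linear_combination -(Complex.sq_norm w).trans (Complex.normSq_apply w)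
  rw [div_le_iff₀ hc, hsq]
  exact mul_le_mul_of_nonneg_left hw (sub_nonneg.2 (Complex.re_le_norm w))

-- The maximum principle for `g z * exp (a * z - b * z ^ 2)`: on the circle the two powers of
-- `exp` combine to the constant `exp (-(b * R ^ 2))`.
lemma norm_zero_le_of_sphere_bound {a b B : ℝ} (hR : 0 < R)
    (hg : DifferentiableOn ℂ g (Metric.closedBall 0 R))
    (hB : ∀ z : ℂ, ‖z‖ = R → ‖g z‖ ≤ B * Real.exp (-(a * z.re + 2 * b * z.im ^ 2))) :
    ‖g 0‖ ≤ B * Real.exp (-(b * R ^ 2)) := by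
  let G : ℂ → ℂ := fun z => g z * Complex.exp (a * z - b * z ^ 2)
  have hdiff : DiffContOnCl ℂ G (Metric.ball 0 R) := by
    refine DifferentiableOn.diffContOnCl ?_
    rw [closure_ball _ hR.ne']
    exact hg.mul (by fun_prop)
  have hbound : ∀ z ∈ frontier (Metric.ball (0 : ℂ) R), ‖G z‖ ≤ B * Real.exp (-(b * R ^ 2)) := by
    intro z hz
    rw [frontier_ball _ hR.ne', mem_sphere_zero_iff_norm] at hz
    have hsq : R ^ 2 = z.re ^ 2 + z.im ^ 2 := by
      rw [← hz, Complex.sq_norm, Complex.normSq_apply]; ring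
    have hre : (a * z - b * z ^ 2 : ℂ).re = a * z.re - b * (z.re ^ 2 - z.im ^ 2) := by
      simp [pow_two]
    calc ‖G z‖ = ‖g z‖ * Real.exp (a * z.re - b * (z.re ^ 2 - z.im ^ 2)) := by
          rw [norm_mul, Complex.norm_exp, hre]
      _ ≤ B * Real.exp (-(a * z.re + 2 * b * z.im ^ 2)) *
          Real.exp (a * z.re - b * (z.re ^ 2 - z.im ^ 2)) := by gcongr; exact hB z hz
      _ = B * Real.exp (-(b * R ^ 2)) := by
          rw [mul_assoc, ← Real.exp_add, hsq]
          ring_nf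
  simpa [G] using Complex.norm_le_of_forall_mem_frontier_norm_le Metric.isBounded_ball hdiff
    hbound (subset_closure (Metric.mem_ball_self hR))

end ComplexBounds

section RealLine

variable {q : ℝ → ℝ} {a b : ℝ}

lemma not_tendsto_atTop_nhdsGT_of_monotoneOn (hab : a < b) (hq : MonotoneOn q (Ioc a b)) :
    ¬ Tendsto q (𝓝[>] a) atTop := fun htop => by
  obtain ⟨t, hqt, ht⟩ := ((htop.eventually_gt_atTop (q b)).and (Ioc_mem_nhdsGT hab)).exists
  exact hqt.not_ge (hq ht ⟨hab, le_rfl⟩ ht.2)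

lemma eventually_pos_of_frequently_pos (hab : a < b) (hq : ContinuousOn q (Ioc a b))
    (hne : ∀ᶠ t in 𝓝[>] a, q t ≠ 0) (hpos : ∃ᶠ t in 𝓝[>] a, 0 < q t) :
    ∀ᶠ t in 𝓝[>] a, 0 < q t := by
  obtain ⟨c, hac, hc⟩ := mem_nhdsGT_iff_exists_Ioc_subset.1 (hne.and (Ioc_mem_nhdsGT hab))
  obtain ⟨s, hqs, hs⟩ := (hpos.and_eventually (Ioc_mem_nhdsGT hac)).exists
  filter_upwards [Ioc_mem_nhdsGT hac] with t ht
  by_contra! hqt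
  obtain ⟨r, hr, hqr⟩ := isPreconnected_Ioc.intermediate_value ht hs
    (hq.mono fun r hr => (hc hr).2) ⟨hqt, hqs.le⟩
  exact (hc hr).1 hqr

end RealLine

/-- The standard deviation `σ(t) = √φ''(t)` of the tilted measure at the saddle point `t`. -/
def saddleScale (φ : ℂ → ℂ) (t : ℝ) : ℝ := √(iteratedDeriv 2 φ t).re

/-- The modulus on the positive real axis of the comparison function `χ * exp φ`. -/
def laplaceModel (φ χ : ℂ → ℂ) (t : ℝ) : ℝ := ‖χ t‖ * Real.exp (φ t).re

/-- The information on the transform `f` used in Ingham's theorem: it is holomorphic in the right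
half-plane, comparable to `χ * exp φ` near `0` in every sector, and asymptotic to it in modulus
along the positive reals. -/
structure HasInghamGrowth (φ χ f : ℂ → ℂ) : Prop where
  differentiableOn : DifferentiableOn ℂ f {z | 0 < z.re}
  tendsto_norm_div : Tendsto (fun t : ℝ => ‖f t‖ / laplaceModel φ χ t) (𝓝[>] 0) (𝓝 1)
  sector_bound : ∀ Δ : ℝ, 0 < Δ → ∃ C ρ : ℝ, 0 < C ∧ 0 < ρ ∧ ∀ z : ℂ, 0 < z.re →
    |z.im| ≤ Δ * z.re → ‖z‖ < ρ → ‖f z‖ ≤ C * laplaceModel φ χ ‖z‖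

namespace InghamRegular

variable {D : Set ℂ} {T C k : ℝ} {δ : ℝ → ℝ} {φ χ f : ℂ → ℂ} {t : ℝ}

section Basic

variable (H : InghamRegular D T C k δ φ χ)
include H

lemma add_mem (ht : t ∈ Ioc 0 T) {z : ℂ} (hz : ‖z‖ < δ t) : (t : ℂ) + z ∈ D :=
  H.ball_subset t ht (by simpa [dist_eq_norm] using hz)

lemma mem (ht : t ∈ Ioc 0 T) : (t : ℂ) ∈ D := by
  simpa using H.add_mem ht (z := 0) (by simpa using H.delta_pos t ht)

lemma norm_chi (ht : t ∈ Ioc 0 T) : ‖χ t‖ = (χ t).re := by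
  rw [← Complex.abs_re_eq_norm.2 (H.chi_im t ht), abs_of_pos (H.chi_pos t ht)]

lemma norm_deriv2 (ht : t ∈ Ioc 0 T) : ‖iteratedDeriv 2 φ t‖ = (iteratedDeriv 2 φ t).re := by
  rw [← Complex.abs_re_eq_norm.2 (H.deriv2_im t ht), abs_of_pos (H.deriv2_pos t ht)]

lemma laplaceModel_pos (ht : t ∈ Ioc 0 T) : 0 < laplaceModel φ χ t := by
  rw [laplaceModel, H.norm_chi ht]
  exact mul_pos (H.chi_pos t ht) (Real.exp_pos _)

lemma saddleScale_pos (ht : t ∈ Ioc 0 T) : 0 < saddleScale φ t :=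
  Real.sqrt_pos.2 (H.deriv2_pos t ht)

lemma sq_saddleScale (ht : t ∈ Ioc 0 T) : saddleScale φ t ^ 2 = (iteratedDeriv 2 φ t).re :=
  Real.sq_sqrt (H.deriv2_pos t ht).le

lemma eventually_mem_Ioc : ∀ᶠ t in 𝓝[>] 0, t ∈ Ioc 0 T := Ioc_mem_nhdsGT H.T_pos

lemma one_le_C : 1 ≤ C := by
  have hT : T ∈ Ioc 0 T := right_mem_Ioc.2 H.T_pos
  have hle := H.norm_deriv2_le T hT 0 (by simpa using H.delta_pos T hT)
  rw [add_zero, H.norm_deriv2 hT] at hle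
  exact (le_mul_iff_one_le_left (H.deriv2_pos T hT)).1 hle

lemma k_pos : 0 < k := by
  have hT : T ∈ Ioc 0 T := right_mem_Ioc.2 H.T_pos
  exact pos_of_mul_pos_left ((mul_pos H.T_pos (H.deriv2_pos T hT)).trans_le (H.mul_deriv2_le T hT))
    (neg_pos.2 (H.deriv_neg T hT)).le

lemma hasDerivAt_phi {z : ℂ} (hz : z ∈ D) : HasDerivAt φ (deriv φ z) z :=
  (H.differentiableOn_phi.differentiableAt (H.isOpen.mem_nhds hz)).hasDerivAt

lemma differentiableOn_deriv : DifferentiableOn ℂ (deriv φ) D :=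
  H.differentiableOn_phi.deriv H.isOpen

lemma hasDerivAt_deriv {z : ℂ} (hz : z ∈ D) : HasDerivAt (deriv φ) (iteratedDeriv 2 φ z) z := by
  rw [iteratedDeriv_succ, iteratedDeriv_one]
  exact (H.differentiableOn_deriv.differentiableAt (H.isOpen.mem_nhds hz)).hasDerivAt

lemma differentiableOn_deriv2 : DifferentiableOn ℂ (iteratedDeriv 2 φ) D := by
  rw [iteratedDeriv_succ, iteratedDeriv_one]
  exact H.differentiableOn_deriv.deriv H.isOpen

lemma hasDerivAt_re_phi (ht : t ∈ Ioc 0 T) :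
    HasDerivAt (fun r : ℝ => (φ r).re) (deriv φ t).re t :=
  (H.hasDerivAt_phi (H.mem ht)).real_of_complex

lemma hasDerivAt_re_deriv (ht : t ∈ Ioc 0 T) :
    HasDerivAt (fun r : ℝ => (deriv φ r).re) (iteratedDeriv 2 φ t).re t :=
  (H.hasDerivAt_deriv (H.mem ht)).real_of_complex

lemma hasDerivAt_re_chi (ht : t ∈ Ioc 0 T) :
    HasDerivAt (fun r : ℝ => (χ r).re) (deriv χ t).re t :=
  (H.differentiableOn_chi.differentiableAt
    (H.isOpen.mem_nhds (H.mem ht))).hasDerivAt.real_of_complex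

lemma norm_phi_sub_taylor_le (ht : t ∈ Ioc 0 T) {a : ℂ} {R ε : ℝ} (hR : R ≤ δ t)
    (ha : ∀ z : ℂ, ‖z‖ < R → ‖iteratedDeriv 2 φ (t + z) - a‖ ≤ ε) {z : ℂ} (hz : ‖z‖ < R) :
    ‖φ (t + z) - φ t - deriv φ t * z - a * z ^ 2 / 2‖ ≤ ε * ‖z‖ ^ 2 := by
  have hmem : ∀ w ∈ Metric.ball (0 : ℂ) R, (t : ℂ) + w ∈ D := fun w hw =>
    H.add_mem ht ((mem_ball_zero_iff.1 hw).trans_le hR)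
  simpa using norm_sub_quadratic_le (g := fun w => φ (t + w)) (g' := fun w => deriv φ (t + w))
    (g'' := fun w => iteratedDeriv 2 φ (t + w))
    (fun w hw => (H.hasDerivAt_phi (hmem w hw)).comp_const_add _ _)
    (fun w hw => (H.hasDerivAt_deriv (hmem w hw)).comp_const_add _ _)
    (fun w hw => ha w (mem_ball_zero_iff.1 hw)) (mem_ball_zero_iff.2 hz)

lemma re_phi_add_le (ht : t ∈ Ioc 0 T) {s : ℝ} (hs : |s| < δ t) :
    (φ ((t + s : ℝ) : ℂ)).re ≤
      (φ t).re + (deriv φ t).re * s + C * (iteratedDeriv 2 φ t).re * s ^ 2 := by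
  have htaylor := H.norm_phi_sub_taylor_le ht (a := 0) (ε := C * (iteratedDeriv 2 φ t).re) le_rfl
    (fun z hz => by rw [sub_zero, ← H.norm_deriv2 ht]; exact H.norm_deriv2_le t ht z hz) (z := s)
    (by rwa [Complex.norm_real])
  have hre := (Complex.re_le_norm _).trans htaylor
  rw [Complex.norm_real, Real.norm_eq_abs, sq_abs] at hre
  simp only [zero_mul, zero_div, sub_zero, Complex.sub_re, Complex.re_mul_ofReal] at hre
  push_cast
  linarith

lemma laplaceModel_le (ht : t ∈ Ioc 0 T) {w u r : ℝ} (hwt : |w - t| ≤ r) (hr : r < δ t)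
    (hu : u ≤ w - t) :
    laplaceModel φ χ w ≤ C * laplaceModel φ χ t *
      Real.exp ((deriv φ t).re * u + C * (iteratedDeriv 2 φ t).re * r ^ 2) := by
  have hwδ : |w - t| < δ t := hwt.trans_lt hr
  have hC : 0 ≤ C := zero_le_one.trans H.one_le_C
  have hχ : ‖χ w‖ ≤ C * ‖χ t‖ := by
    simpa using H.norm_chi_le t ht ((w - t : ℝ) : ℂ) (by rwa [Complex.norm_real])
  have hφ : (φ w).re ≤
      (φ t).re + ((deriv φ t).re * u + C * (iteratedDeriv 2 φ t).re * r ^ 2) := by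
    have htaylor := H.re_phi_add_le ht hwδ
    rw [add_sub_cancel] at htaylor
    have hlin := mul_le_mul_of_nonpos_left hu (H.deriv_neg t ht).le
    have hquad : C * (iteratedDeriv 2 φ t).re * (w - t) ^ 2 ≤
        C * (iteratedDeriv 2 φ t).re * r ^ 2 :=
      mul_le_mul_of_nonneg_left (sq_le_sq' (abs_le.1 hwt).1 (abs_le.1 hwt).2)
        (mul_nonneg hC (H.deriv2_pos t ht).le)
    linarith
  calc laplaceModel φ χ w ≤ C * ‖χ t‖ * Real.exp ((φ t).re +
        ((deriv φ t).re * u + C * (iteratedDeriv 2 φ t).re * r ^ 2)) := by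
        rw [laplaceModel]; gcongr
    _ = _ := by rw [Real.exp_add, laplaceModel]; ring

lemma norm_le_of_sector_bound {C₁ ρ : ℝ} (hC₁ : 0 ≤ C₁)
    (hf : ∀ z : ℂ, 0 < z.re → |z.im| ≤ 1 * z.re → ‖z‖ < ρ → ‖f z‖ ≤ C₁ * laplaceModel φ χ ‖z‖)
    {r : ℝ} (ht : 0 < t) (htT : t ≤ T) (htρ : 2 * t < ρ) (hrt : r ≤ t / 2) (hrδ : r < δ t)
    {z : ℂ} (hz : ‖z‖ ≤ r) :
    ‖f (t + z)‖ ≤ C₁ * (C * laplaceModel φ χ t * Real.exp ((deriv φ t).re *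
      (z.re + z.im ^ 2 / (3 * t)) + C * (iteratedDeriv 2 φ t).re * r ^ 2)) := by
  have hre := abs_le.1 ((Complex.abs_re_le_norm z).trans hz)
  have him := (Complex.abs_im_le_norm z).trans hz
  have hre_add : ((t : ℂ) + z).re = t + z.re := by simp
  have him_add : ((t : ℂ) + z).im = z.im := by simp
  have hdist : |‖(t : ℂ) + z‖ - t| ≤ r := by
    have hsub := abs_norm_sub_norm_le ((t : ℂ) + z) t
    rw [add_sub_cancel_left, Complex.norm_real, Real.norm_of_nonneg ht.le] at hsub
    exact hsub.trans hz
  have hle := (abs_le.1 hdist).2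
  have hgain : z.re + z.im ^ 2 / (3 * t) ≤ ‖(t : ℂ) + z‖ - t := by
    have := sq_im_div_le_norm_sub_re (w := (t : ℂ) + z) (c := 3 * t) (by positivity) (by linarith)
    rw [hre_add, him_add] at this
    linarith
  have hsector := hf (t + z) (by linarith) (by rw [hre_add, him_add]; linarith) (by linarith)
  exact hsector.trans (mul_le_mul_of_nonneg_left
    (H.laplaceModel_le ⟨ht, htT⟩ hdist hrδ hgain) hC₁)

end Basic

section Curvature

variable (H : InghamRegular D T C k δ φ χ)
include H

lemma norm_le_of_mul_deriv2_eq (hfd : DifferentiableOn ℂ f {z | 0 < z.re}) {C₁ ρ : ℝ}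
    (hC₁ : 0 ≤ C₁)
    (hf : ∀ z : ℂ, 0 < z.re → |z.im| ≤ 1 * z.re → ‖z‖ < ρ → ‖f z‖ ≤ C₁ * laplaceModel φ χ ‖z‖)
    {r : ℝ} (ht : 0 < t) (htT : t ≤ T) (htρ : 2 * t < ρ) (hr : 0 < r) (hrt : r ≤ t / 2)
    (hrδ : r < δ t) (heq : 12 * C * (t * (iteratedDeriv 2 φ t).re) = -(deriv φ t).re) :
    ‖f t‖ ≤ C₁ * C * Real.exp (-(C * (iteratedDeriv 2 φ t).re * r ^ 2)) * laplaceModel φ χ t := by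
  set p := -(deriv φ t).re with hp
  set κ := C * (iteratedDeriv 2 φ t).re with hκ
  have hpκ : p / (6 * t) = 2 * κ := by
    rw [← heq, hκ]
    field_simp
    ring
  have hdiff : DifferentiableOn ℂ (fun z => f (t + z)) (Metric.closedBall 0 r) := by
    refine hfd.comp (by fun_prop) fun z hz => ?_
    have := (abs_le.1 ((Complex.abs_re_le_norm z).trans (mem_closedBall_zero_iff.1 hz))).1
    simp only [mem_ofPred_eq, Complex.add_re, Complex.ofReal_re]
    linarith
  have hmax := norm_zero_le_of_sphere_bound (a := p) (b := p / (6 * t))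
    (B := C₁ * C * laplaceModel φ χ t * Real.exp (κ * r ^ 2)) hr hdiff fun z hz => by
      refine (H.norm_le_of_sector_bound hC₁ hf ht htT htρ hrt hrδ hz.le).trans_eq ?_
      rw [mul_assoc _ (Real.exp (κ * r ^ 2)), ← Real.exp_add, hp, hκ]
      ring_nf
  calc ‖f t‖ ≤ C₁ * C * laplaceModel φ χ t * Real.exp (κ * r ^ 2) *
        Real.exp (-(p / (6 * t) * r ^ 2)) := by simpa using hmax
    _ = C₁ * C * Real.exp (-(κ * r ^ 2)) * laplaceModel φ χ t := by
        rw [mul_assoc _ (Real.exp _), ← Real.exp_add, hpκ]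
        ring_nf

lemma div_saddleScale_le_of_mul_deriv2_eq (ht : t ∈ Ioc 0 T) {R : ℝ} (hR : 0 ≤ R)
    (htR : 12 * C * (2 * R) ^ 2 ≤ -t * (deriv φ t).re)
    (heq : 12 * C * (t * (iteratedDeriv 2 φ t).re) = -(deriv φ t).re) :
    R / saddleScale φ t ≤ t / 2 := by
  have hC := H.one_le_C
  have hσ := H.saddleScale_pos ht
  have hsq : (2 * R) ^ 2 ≤ (t * saddleScale φ t) ^ 2 := by
    have hprod : -t * (deriv φ t).re = 12 * C * (t * saddleScale φ t) ^ 2 := by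
      rw [mul_pow, H.sq_saddleScale ht]
      linear_combination -t * heq
    rw [hprod] at htR
    exact le_of_mul_le_mul_left htR (by positivity)
  have hle := (sq_le_sq₀ (by positivity) (mul_nonneg ht.1.le hσ.le)).1 hsq
  rw [div_le_div_iff₀ hσ two_pos]
  linarith

lemma div_saddleScale_lt_of_mul_deriv2_eq (ht : t ∈ Ioc 0 T) {R : ℝ}
    (hδR : 12 * C * R < -δ t * (deriv φ t).re / (t * saddleScale φ t))
    (heq : 12 * C * (t * (iteratedDeriv 2 φ t).re) = -(deriv φ t).re) :
    R / saddleScale φ t < δ t := by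
  have hC := H.one_le_C
  have hσ := H.saddleScale_pos ht
  have ht0 := ht.1
  have hquot : -δ t * (deriv φ t).re / (t * saddleScale φ t) =
      12 * C * (δ t * saddleScale φ t) := by
    rw [div_eq_iff (by positivity)]
    rw [← H.sq_saddleScale ht] at heq
    linear_combination -δ t * heq
  rw [hquot] at hδR
  exact (div_lt_iff₀ hσ).2 (lt_of_mul_lt_mul_left hδR (by positivity))

lemma eventually_mul_deriv2_ne (hf : HasInghamGrowth φ χ f) :
    ∀ᶠ t : ℝ in 𝓝[>] 0, 12 * C * (t * (iteratedDeriv 2 φ t).re) ≠ -(deriv φ t).re := by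
  obtain ⟨C₁, ρ, hC₁, hρ, hsector⟩ := hf.sector_bound 1 one_pos
  have hC : 0 < C := zero_lt_one.trans_le H.one_le_C
  have hlim : Tendsto (fun R : ℝ => C₁ * C * Real.exp (-(C * R ^ 2))) atTop (𝓝 0) := by
    have hsq : Tendsto (fun R : ℝ => C * R ^ 2) atTop atTop :=
      (tendsto_pow_atTop two_ne_zero).const_mul_atTop hC
    simpa using (Real.tendsto_exp_neg_atTop_nhds_zero.comp hsq).const_mul (C₁ * C)
  obtain ⟨R, hR1, hR⟩ := ((hlim.eventually (gt_mem_nhds (by norm_num : (0:ℝ) < 1 / 2))).and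
    (eventually_gt_atTop 0)).exists
  filter_upwards [H.eventually_mem_Ioc, Ioo_mem_nhdsGT (half_pos hρ),
    H.tendsto_neg_mul_deriv.eventually_ge_atTop (12 * C * (2 * R) ^ 2),
    H.tendsto_div_sqrt.eventually_gt_atTop (12 * C * R),
    hf.tendsto_norm_div.eventually (lt_mem_nhds (by norm_num : (1 / 2 : ℝ) < 1))]
    with t ht htρ htR hδR hft heq
  have hσ := H.saddleScale_pos ht
  have hmodel := H.laplaceModel_pos ht
  have hsmall := H.norm_le_of_mul_deriv2_eq hf.differentiableOn hC₁.le hsector ht.1 ht.2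
    (by linarith [htρ.2]) (div_pos hR hσ) (H.div_saddleScale_le_of_mul_deriv2_eq ht hR.le htR heq)
    (H.div_saddleScale_lt_of_mul_deriv2_eq ht hδR heq) heq
  rw [div_pow, H.sq_saddleScale ht, mul_assoc C, mul_div_cancel₀ _ (H.deriv2_pos t ht).ne']
    at hsmall
  rw [lt_div_iff₀ hmodel] at hft
  exact (hft.trans_le hsmall).not_gt (mul_lt_mul_of_pos_right hR1 hmodel)

-- Otherwise `-t * φ' t` would be monotone near `0`, hence bounded there.
lemma frequently_lt_mul_deriv2 {a : ℝ} (ha : 1 ≤ a) :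
    ∃ᶠ t : ℝ in 𝓝[>] 0, 0 < a * (t * (iteratedDeriv 2 φ t).re) - -(deriv φ t).re := by
  intro hcon
  obtain ⟨b, hb, hsub⟩ := mem_nhdsGT_iff_exists_Ioc_subset.1 (hcon.and H.eventually_mem_Ioc)
  have hder : ∀ t ∈ Ioc 0 b, HasDerivAt (fun t : ℝ => -t * (deriv φ t).re)
      (-1 * (deriv φ t).re + -t * (iteratedDeriv 2 φ t).re) t := fun t ht =>
    (hasDerivAt_neg t).mul (H.hasDerivAt_re_deriv (hsub ht).2)
  refine not_tendsto_atTop_nhdsGT_of_monotoneOn hb ?_ H.tendsto_neg_mul_deriv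
  refine monotoneOn_of_deriv_nonneg (convex_Ioc _ _)
    (fun t ht => (hder t ht).continuousAt.continuousWithinAt)
    (fun t ht => (hder t (interior_subset ht)).differentiableAt.differentiableWithinAt)
    fun t ht => ?_
  have ht := interior_subset ht
  rw [(hder t ht).deriv]
  have hle := not_lt.1 (hsub ht).1
  have hpos := mul_pos ht.1 (H.deriv2_pos t (hsub ht).2)
  nlinarith

lemma eventually_lt_mul_deriv2 (hf : HasInghamGrowth φ χ f) :
    ∀ᶠ t : ℝ in 𝓝[>] 0, -(deriv φ t).re < 12 * C * (t * (iteratedDeriv 2 φ t).re) := by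
  have hcont : ContinuousOn
      (fun t : ℝ => 12 * C * (t * (iteratedDeriv 2 φ t).re) - -(deriv φ t).re) (Ioc 0 T) := by
    have hre : ∀ g : ℂ → ℂ, DifferentiableOn ℂ g D →
        ContinuousOn (fun t : ℝ => (g t).re) (Ioc 0 T) := fun g hg =>
      Complex.continuous_re.comp_continuousOn
        (hg.continuousOn.comp Complex.continuous_ofReal.continuousOn fun t ht => H.mem ht)
    exact ((continuousOn_id.mul (hre _ H.differentiableOn_deriv2)).const_mul _).sub
      (hre _ H.differentiableOn_deriv).neg
  refine (eventually_pos_of_frequently_pos H.T_pos hcont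
    ((H.eventually_mul_deriv2_ne hf).mono fun t => sub_ne_zero.2)
    (H.frequently_lt_mul_deriv2 ?_)).mono fun t => sub_pos.1
  linarith [H.one_le_C]

lemma tendsto_delta_mul_saddleScale (hf : HasInghamGrowth φ χ f) :
    Tendsto (fun t : ℝ => δ t * saddleScale φ t) (𝓝[>] 0) atTop := by
  have hC : 0 < 12 * C := by linarith [H.one_le_C]
  refine tendsto_atTop_mono' _ ?_ (H.tendsto_div_sqrt.const_mul_atTop (inv_pos.2 hC))
  filter_upwards [H.eventually_lt_mul_deriv2 hf, H.eventually_mem_Ioc] with t hlt ht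
  have hσ := H.saddleScale_pos ht
  have ht0 := ht.1
  have hδ := H.delta_pos t ht
  change _ * (_ / (t * saddleScale φ t)) ≤ _
  rw [inv_mul_le_iff₀ hC, div_le_iff₀ (by positivity)]
  calc -δ t * (deriv φ t).re = δ t * -(deriv φ t).re := by ring
    _ ≤ δ t * (12 * C * (t * (iteratedDeriv 2 φ t).re)) := by gcongr
    _ = _ := by rw [← H.sq_saddleScale ht]; ring

lemma tendsto_mul_saddleScale (hf : HasInghamGrowth φ χ f) :
    Tendsto (fun t : ℝ => t * saddleScale φ t) (𝓝[>] 0) atTop := by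
  refine tendsto_atTop_mono' _ ?_ (H.tendsto_delta_mul_saddleScale hf)
  filter_upwards [H.eventually_mem_Ioc] with t ht
  exact mul_le_mul_of_nonneg_right (H.delta_le t ht) (Real.sqrt_nonneg _)

lemma tendsto_delta_mul_deriv (hf : HasInghamGrowth φ χ f) :
    Tendsto (fun t : ℝ => δ t * -(deriv φ t).re) (𝓝[>] 0) atTop := by
  refine (H.tendsto_div_sqrt.atTop_mul_atTop₀ (H.tendsto_mul_saddleScale hf)).congr' ?_
  filter_upwards [H.eventually_mem_Ioc] with t ht
  change _ / (t * saddleScale φ t) * (t * saddleScale φ t) = _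
  rw [div_mul_cancel₀ _ (mul_pos ht.1 (H.saddleScale_pos ht)).ne']
  ring

end Curvature

end InghamRegular

lemma antitoneOn_mul_exp {u u' v v' : ℝ → ℝ} {s : Set ℝ} (hs : Convex ℝ s)
    (hu : ∀ r ∈ s, HasDerivAt u (u' r) r) (hv : ∀ r ∈ s, HasDerivAt v (v' r) r)
    (hle : ∀ r ∈ s, u' r + u r * v' r ≤ 0) :
    AntitoneOn (fun r => u r * Real.exp (v r)) s := by
  have hder : ∀ r ∈ s, HasDerivAt (fun r => u r * Real.exp (v r))
      (Real.exp (v r) * (u' r + u r * v' r)) r := fun r hr => by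
    refine ((hu r hr).mul (hv r hr).exp).congr_deriv ?_
    ring
  refine antitoneOn_of_deriv_nonpos hs
    (fun r hr => (hder r hr).continuousAt.continuousWithinAt)
    (fun r hr => (hder r (interior_subset hr)).differentiableAt.differentiableWithinAt)
    fun r hr => ?_
  rw [(hder r (interior_subset hr)).deriv]
  exact mul_nonpos_of_nonneg_of_nonpos (Real.exp_pos _).le (hle r (interior_subset hr))

lemma norm_div_saddleScale (φ : ℂ → ℂ) (s t : ℝ) :
    ‖((s / saddleScale φ t : ℝ) : ℂ)‖ = |s| / saddleScale φ t := by
  have hσ : 0 ≤ saddleScale φ t := Real.sqrt_nonneg _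
  rw [Complex.norm_real, norm_div, Real.norm_eq_abs, Real.norm_of_nonneg hσ]

/-- The Gaussian decay rate of `f` on the segment `|Im z| ≤ Δ Re z`, `Re z = t`. -/
def sectorRate (k Δ : ℝ) : ℝ := (1 / (1 + Δ)) ^ k / 2 / (k * (2 + Δ))

namespace InghamRegular

variable {D : Set ℂ} {T C k : ℝ} {δ : ℝ → ℝ} {φ χ f : ℂ → ℂ} {t : ℝ}

section Saddle

variable (H : InghamRegular D T C k δ φ χ)
include H

lemma eventually_abs_div_saddleScale_lt (hf : HasInghamGrowth φ χ f) (s : ℝ) :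
    ∀ᶠ t : ℝ in 𝓝[>] 0, |s| / saddleScale φ t < δ t := by
  filter_upwards [(H.tendsto_delta_mul_saddleScale hf).eventually_gt_atTop |s|,
    H.eventually_mem_Ioc] with t hs ht
  rwa [div_lt_iff₀ (H.saddleScale_pos ht)]

lemma tendsto_add_div_saddleScale (hf : HasInghamGrowth φ χ f) (s : ℝ) :
    Tendsto (fun t : ℝ => t + s / saddleScale φ t) (𝓝[>] 0) (𝓝[>] 0) := by
  have hmem : ∀ᶠ t : ℝ in 𝓝[>] 0, t + s / saddleScale φ t ∈ Ioo 0 (2 * t) := by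
    filter_upwards [H.eventually_abs_div_saddleScale_lt hf s, H.eventually_mem_Ioc] with t hs ht
    have habs : |s / saddleScale φ t| < t := by
      rw [abs_div, abs_of_pos (H.saddleScale_pos ht)]
      exact hs.trans_le (H.delta_le t ht)
    obtain ⟨hlow, hupp⟩ := abs_lt.1 habs
    constructor <;> linarith
  have htwo : Tendsto (fun t : ℝ => 2 * t) (𝓝[>] 0) (𝓝 0) := by
    simpa using (tendsto_id.const_mul (2 : ℝ)).mono_left
      (nhdsWithin_le_nhds (a := (0 : ℝ)) (s := Ioi 0))
  exact tendsto_nhdsWithin_iff.2 ⟨squeeze_zero' (hmem.mono fun t ht => ht.1.le)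
    (hmem.mono fun t ht => ht.2.le) htwo, hmem.mono fun t ht => ht.1⟩

lemma tendsto_chi_div (hf : HasInghamGrowth φ χ f) (s : ℝ) :
    Tendsto (fun t : ℝ => χ ((t + s / saddleScale φ t : ℝ) : ℂ) / χ t) (𝓝[>] 0) (𝓝 1) := by
  rw [tendsto_iff_norm_sub_tendsto_zero]
  refine squeeze_zero' (Eventually.of_forall fun _ => norm_nonneg _) ?_
    ((tendsto_const_nhds (x := (C + 1) * |s|)).div_atTop (H.tendsto_delta_mul_saddleScale hf))
  filter_upwards [H.eventually_abs_div_saddleScale_lt hf s, H.eventually_mem_Ioc] with t hs ht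
  have hσ := H.saddleScale_pos ht
  have hδ := H.delta_pos t ht
  have hχ : 0 < ‖χ t‖ := (H.chi_pos t ht).trans_eq (H.norm_chi ht).symm
  have hsub := norm_sub_le_of_norm_le_mul (H.differentiableOn_chi.mono (H.ball_subset t ht))
    (H.norm_chi_le t ht) (z := ((s / saddleScale φ t : ℝ) : ℂ))
    (by rwa [norm_div_saddleScale])
  rw [norm_div_saddleScale, ← Complex.ofReal_add] at hsub
  rw [div_sub_one (norm_pos_iff.1 hχ), norm_div, div_le_iff₀ hχ]
  exact hsub.trans_eq (by field_simp)

lemma tendsto_phi_sub (hf : HasInghamGrowth φ χ f) (s : ℝ) :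
    Tendsto (fun t : ℝ => (φ ((t + s / saddleScale φ t : ℝ) : ℂ)).re - (φ t).re -
      (deriv φ t).re * (s / saddleScale φ t)) (𝓝[>] 0) (𝓝 (s ^ 2 / 2)) := by
  rw [tendsto_iff_norm_sub_tendsto_zero]
  refine squeeze_zero' (Eventually.of_forall fun _ => norm_nonneg _) ?_
    ((tendsto_const_nhds (x := (C + 1) * (|s| + 1) * s ^ 2)).div_atTop
      (H.tendsto_delta_mul_saddleScale hf))
  filter_upwards [H.eventually_abs_div_saddleScale_lt hf (|s| + 1), H.eventually_mem_Ioc]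
    with t hs ht
  rw [abs_of_nonneg (by positivity)] at hs
  have hσ := H.saddleScale_pos ht
  have hδ := H.delta_pos t ht
  have hC := H.one_le_C
  have hosc : ∀ z : ℂ, ‖z‖ < (|s| + 1) / saddleScale φ t →
      ‖iteratedDeriv 2 φ (t + z) - iteratedDeriv 2 φ t‖ ≤
        (C + 1) * saddleScale φ t ^ 2 / δ t * ((|s| + 1) / saddleScale φ t) := fun z hz => by
    have hsub := norm_sub_le_of_norm_le_mul
      (H.differentiableOn_deriv2.mono (H.ball_subset t ht)) (H.norm_deriv2_le t ht) (hz.trans hs)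
    rw [H.norm_deriv2 ht, ← H.sq_saddleScale ht] at hsub
    exact hsub.trans (by gcongr)
  have htaylor := (Complex.abs_re_le_norm _).trans (H.norm_phi_sub_taylor_le ht hs.le hosc
    (z := ((s / saddleScale φ t : ℝ) : ℂ)) (by rw [norm_div_saddleScale]; gcongr; linarith))
  have hquad : (iteratedDeriv 2 φ t * ((s / saddleScale φ t : ℝ) : ℂ) ^ 2 / 2).re =
      s ^ 2 / 2 := by
    rw [← Complex.ofReal_pow, ← Complex.ofReal_ofNat, Complex.div_ofReal_re,
      Complex.re_mul_ofReal, ← H.sq_saddleScale ht]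
    field_simp
  rw [norm_div_saddleScale, ← Complex.ofReal_add, Complex.sub_re, Complex.sub_re, Complex.sub_re,
    Complex.re_mul_ofReal, hquad] at htaylor
  refine htaylor.trans_eq ?_
  rw [div_pow, sq_abs]
  field_simp

lemma tendsto_norm_div_mul_exp (hf : HasInghamGrowth φ χ f) (s : ℝ) :
    Tendsto (fun t : ℝ => ‖f ((t + s / saddleScale φ t : ℝ) : ℂ)‖ / ‖f t‖ *
      Real.exp (-(deriv φ t).re * (s / saddleScale φ t))) (𝓝[>] 0) (𝓝 (Real.exp (s ^ 2 / 2))) := by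
  have hadd := H.tendsto_add_div_saddleScale hf s
  have hprod := (((hf.tendsto_norm_div.comp hadd).div hf.tendsto_norm_div one_ne_zero).mul
    (H.tendsto_chi_div hf s).norm).mul
    ((Real.continuous_exp.tendsto _).comp (H.tendsto_phi_sub hf s))
  rw [div_one, norm_one, one_mul, one_mul] at hprod
  refine hprod.congr' ?_
  filter_upwards [H.eventually_mem_Ioc, hadd.eventually H.eventually_mem_Ioc] with t ht ht'
  have hχ := ((H.chi_pos t ht).trans_eq (H.norm_chi ht).symm).ne'
  have hχ' := ((H.chi_pos _ ht').trans_eq (H.norm_chi ht').symm).ne'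
  simp only [Pi.div_apply, Function.comp_apply, laplaceModel, norm_div]
  rw [sub_sub, Real.exp_sub, Real.exp_add, neg_mul, Real.exp_neg]
  field_simp

lemma laplaceModel_eq (ht : t ∈ Ioc 0 T) :
    laplaceModel φ χ t = (χ t).re * Real.exp (φ t).re := by rw [laplaceModel, H.norm_chi ht]

-- The logarithmic derivative of `χ` is at most `(C + 1) / δ`, so it takes away at most half of
-- the decay of `exp φ`.
lemma laplaceModel_le_mul_exp_of_le {w a : ℝ} (ht : 0 < t) (htw : t ≤ w) (hw : w ≤ T)
    (hlarge : ∀ r ∈ Icc t w, 2 * (C + 1) ≤ δ r * -(deriv φ r).re)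
    (ha : ∀ r ∈ Icc t w, 2 * a ≤ -(deriv φ r).re) :
    laplaceModel φ χ w ≤ laplaceModel φ χ t * Real.exp (-(a * (w - t))) := by
  have hmem : ∀ r ∈ Icc t w, r ∈ Ioc 0 T := fun r hr => ⟨ht.trans_le hr.1, hr.2.trans hw⟩
  have hanti : AntitoneOn (fun r : ℝ => (χ r).re * Real.exp ((φ r).re + a * r)) (Icc t w) := by
    refine antitoneOn_mul_exp (convex_Icc t w) (fun r hr => H.hasDerivAt_re_chi (hmem r hr))
      (fun r hr => (H.hasDerivAt_re_phi (hmem r hr)).add ((hasDerivAt_id r).const_mul a))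
      fun r hr => ?_
    have hχ := H.chi_pos r (hmem r hr)
    have hδ := H.delta_pos r (hmem r hr)
    have hχ' : (deriv χ r).re ≤ (χ r).re * (-(deriv φ r).re / 2) := by
      have hcauchy := norm_deriv_le_of_norm_le_mul
        (H.differentiableOn_chi.mono (H.ball_subset r (hmem r hr)))
        (H.norm_chi_le r (hmem r hr)) hδ
      rw [H.norm_chi (hmem r hr)] at hcauchy
      refine ((Complex.re_le_norm _).trans hcauchy).trans ?_
      rw [div_le_iff₀ hδ]
      linarith [mul_le_mul_of_nonneg_left (hlarge r hr) hχ.le]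
    linarith [mul_le_mul_of_nonneg_left (ha r hr) hχ.le]
  have hle : (χ w).re * Real.exp ((φ w).re + a * w) ≤ (χ t).re * Real.exp ((φ t).re + a * t) :=
    hanti ⟨le_rfl, htw⟩ ⟨htw, le_rfl⟩ htw
  rw [H.laplaceModel_eq (hmem t ⟨le_rfl, htw⟩), H.laplaceModel_eq (hmem w ⟨htw, le_rfl⟩)]
  calc (χ w).re * Real.exp (φ w).re
      = (χ w).re * Real.exp ((φ w).re + a * w) * Real.exp (-(a * w)) := by
        rw [mul_assoc, ← Real.exp_add]; ring_nf
    _ ≤ (χ t).re * Real.exp ((φ t).re + a * t) * Real.exp (-(a * w)) := by gcongr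
    _ = (χ t).re * Real.exp (φ t).re * Real.exp (-(a * (w - t))) := by
        rw [mul_assoc, mul_assoc, ← Real.exp_add, ← Real.exp_add]; ring_nf

lemma laplaceModel_le_mul_exp_of_le_mul {L w : ℝ} (hL : 0 < L) (ht : 0 < t) (htw : t ≤ w)
    (hwL : w ≤ L * t) (hw : w ≤ T)
    (hlarge : ∀ r ∈ Icc t w, 2 * (C + 1) ≤ δ r * -(deriv φ r).re) :
    laplaceModel φ χ w ≤ laplaceModel φ χ t *
      Real.exp (-((1 / L) ^ k / 2 * -(deriv φ t).re * (w - t))) := by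
  refine H.laplaceModel_le_mul_exp_of_le ht htw hw hlarge fun r hr => ?_
  have hr0 : 0 < r := ht.trans_le hr.1
  have hpow : (1 / L) ^ k ≤ (t / r) ^ k := by
    refine Real.rpow_le_rpow (by positivity) ?_ H.k_pos.le
    rw [div_le_div_iff₀ hL hr0]
    linarith [hr.2]
  have hgrowth := H.div_rpow_mul_deriv_le t r ht hr.1 (hr.2.trans hw)
  have hneg := (neg_pos.2 (H.deriv_neg t ⟨ht, htw.trans hw⟩)).le
  linarith [mul_le_mul_of_nonneg_right hpow hneg]

lemma sectorRate_mul_le (ht : t ∈ Ioc 0 T) {Δ ξ w : ℝ} (hΔ : 0 < Δ)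
    (hw : ξ ^ 2 * t / (2 + Δ) ≤ w - t) :
    sectorRate k Δ * (t * saddleScale φ t * ξ) ^ 2 ≤
      (1 / (1 + Δ)) ^ k / 2 * -(deriv φ t).re * (w - t) := by
  have hk := H.k_pos
  have ht0 := ht.1
  have hneg : 0 ≤ -(deriv φ t).re := (neg_pos.2 (H.deriv_neg t ht)).le
  have hcurv : t * (iteratedDeriv 2 φ t).re / k ≤ -(deriv φ t).re := by
    rw [div_le_iff₀' hk]
    exact H.mul_deriv2_le t ht
  have : 0 ≤ (1 / (1 + Δ)) ^ k := Real.rpow_nonneg (by positivity) k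
  calc sectorRate k Δ * (t * saddleScale φ t * ξ) ^ 2
      = (1 / (1 + Δ)) ^ k / 2 * (t * (iteratedDeriv 2 φ t).re / k) * (ξ ^ 2 * t / (2 + Δ)) := by
        rw [sectorRate, mul_pow, mul_pow, H.sq_saddleScale ht]
        field_simp
    _ ≤ (1 / (1 + Δ)) ^ k / 2 * -(deriv φ t).re * (w - t) := by gcongr

lemma laplaceModel_norm_le {Δ : ℝ} (hΔ : 0 < Δ) (ht : 0 < t) (htT : (1 + Δ) * t ≤ T)
    (hlarge : ∀ r ∈ Ioc 0 ((1 + Δ) * t), 2 * (C + 1) ≤ δ r * -(deriv φ r).re)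
    {z : ℂ} (hzre : z.re = t) {ξ : ℝ} (hzim : z.im = -(ξ * t)) (hξ : |ξ| ≤ Δ) :
    laplaceModel φ χ ‖z‖ ≤ laplaceModel φ χ t *
      Real.exp (-(sectorRate k Δ * (t * saddleScale φ t * ξ) ^ 2)) := by
  have htz : t ≤ ‖z‖ := hzre ▸ Complex.re_le_norm z
  have hzt : ‖z‖ ≤ (1 + Δ) * t := by
    have hle := Complex.norm_le_abs_re_add_abs_im z
    rw [hzre, hzim, abs_neg, abs_mul, abs_of_pos ht] at hle
    linarith [mul_le_mul_of_nonneg_right hξ ht.le]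
  have hgain : ξ ^ 2 * t / (2 + Δ) ≤ ‖z‖ - t := by
    have hle := sq_im_div_le_norm_sub_re (w := z) (c := (2 + Δ) * t) (by positivity)
      (by rw [hzre]; linarith)
    rw [hzre, hzim] at hle
    refine hle.trans_eq' ?_
    field_simp
  have htmem : t ∈ Ioc 0 T := ⟨ht, (htz.trans hzt).trans htT⟩
  refine (H.laplaceModel_le_mul_exp_of_le_mul (by positivity) ht htz hzt (hzt.trans htT)
    fun r hr => hlarge r ⟨ht.trans_le hr.1, hr.2.trans hzt⟩).trans ?_
  exact mul_le_mul_of_nonneg_left (Real.exp_le_exp.2 (neg_le_neg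
    (H.sectorRate_mul_le htmem hΔ hgain))) (H.laplaceModel_pos htmem).le

lemma eventually_norm_div_le (hf : HasInghamGrowth φ χ f) {Δ : ℝ} (hΔ : 0 < Δ) :
    ∃ C' c : ℝ, 0 < c ∧ ∀ᶠ t : ℝ in 𝓝[>] 0, ∀ ξ : ℝ, |ξ| ≤ Δ →
      ‖f (t - (ξ * t : ℝ) * Complex.I)‖ / ‖f t‖ ≤
        C' * Real.exp (-c * (t * saddleScale φ t * ξ) ^ 2) := by
  obtain ⟨C₁, ρ, hC₁, hρ, hsector⟩ := hf.sector_bound Δ hΔ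
  have hk := H.k_pos
  have hrate : 0 < sectorRate k Δ := by rw [sectorRate]; positivity
  refine ⟨2 * C₁, sectorRate k Δ, hrate, ?_⟩
  obtain ⟨T', hT', hlarge⟩ := mem_nhdsGT_iff_exists_Ioc_subset.1
    (((H.tendsto_delta_mul_deriv hf).eventually_ge_atTop (2 * (C + 1))).and
      (inter_mem (Ioo_mem_nhdsGT hρ) H.eventually_mem_Ioc))
  have hsmall : Ioc 0 (T' / (1 + Δ)) ∈ 𝓝[>] (0 : ℝ) :=
    Ioc_mem_nhdsGT (div_pos hT' (by positivity))
  filter_upwards [hsmall, hf.tendsto_norm_div.eventually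
    (lt_mem_nhds (by norm_num : (1 / 2 : ℝ) < 1))] with t ⟨ht, htT'⟩ hft ξ hξ
  rw [le_div_iff₀ (by positivity), mul_comm] at htT'
  have hT'mem := hlarge (right_mem_Ioc.2 hT')
  have htmem : t ∈ Ioc 0 T := ⟨ht, by nlinarith [hT'mem.2.2.2]⟩
  set z : ℂ := t - (ξ * t : ℝ) * Complex.I with hz
  have hzre : z.re = t := by simp [hz]
  have hzim : z.im = -(ξ * t) := by simp [hz]
  have him : |z.im| ≤ Δ * t := by
    rw [hzim, abs_neg, abs_mul, abs_of_pos ht]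
    gcongr
  have hnorm : ‖z‖ < ρ := by
    have hle := Complex.norm_le_abs_re_add_abs_im z
    rw [hzre, abs_of_pos ht] at hle
    linarith [hT'mem.2.1.2]
  have hmodel := H.laplaceModel_norm_le hΔ ht (htT'.trans hT'mem.2.2.2)
    (fun r hr => (hlarge ⟨hr.1, hr.2.trans htT'⟩).1) hzre hzim hξ
  have hft' := (lt_div_iff₀ (H.laplaceModel_pos htmem)).1 hft
  rw [div_le_iff₀ ((mul_pos one_half_pos (H.laplaceModel_pos htmem)).trans hft')]
  calc ‖f z‖ ≤ C₁ * laplaceModel φ χ ‖z‖ :=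
        hsector z (by rwa [hzre]) (by rwa [hzre]) hnorm
    _ ≤ C₁ * (2 * ‖f t‖ * Real.exp (-(sectorRate k Δ * (t * saddleScale φ t * ξ) ^ 2))) := by
        refine mul_le_mul_of_nonneg_left (hmodel.trans ?_) hC₁.le
        gcongr
        linarith
    _ = _ := by rw [neg_mul]; ring

end Saddle

end InghamRegular

section Laplace

/-- `f` is the (absolutely convergent) bilateral Laplace transform of `ν` in the right
half-plane. -/
structure HasLaplaceTransform (ν : Measure ℝ) (f : ℂ → ℂ) : Prop where
  integrable : ∀ t : ℝ, 0 < t → Integrable (fun u => Real.exp (-t * u)) ν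
  eq_integral : ∀ z : ℂ, 0 < z.re → f z = ∫ u : ℝ, Complex.exp (-z * u) ∂ν

/-- The law of `t * (U - x)`, where `U` follows the normalised exponentially tilted measure
`exp (-t * u) dν(u)`. -/
def laplaceTilt (ν : Measure ℝ) (t x : ℝ) : Measure ℝ :=
  (ν.tilted fun u => -t * u).map fun u => t * (u - x)

/-- The moment generating function `s ↦ E exp (s * (x - U) / σ)`, where `U` follows the normalised
exponentially tilted measure `exp (-t * u) dν(u)` and `f` is the Laplace transform of `ν`. -/
def tiltTransform (f : ℂ → ℂ) (t σ x : ℝ) (s : ℂ) : ℂ :=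
  f (t + s / σ) / f t * Complex.exp (x * (s / σ))

namespace HasLaplaceTransform

variable {ν : Measure ℝ} {f : ℂ → ℂ} {t σ x R : ℝ}

section Transform

variable (hL : HasLaplaceTransform ν f)
include hL

lemma differentiableOn : DifferentiableOn ℂ f {z | 0 < z.re} := by
  have hsub : Iio 0 ⊆ interior (ProbabilityTheory.integrableExpSet id ν) :=
    interior_maximal (fun t ht => by
      simpa [ProbabilityTheory.integrableExpSet] using hL.integrable (-t) (neg_pos.2 ht))
      isOpen_Iio
  have hmgf : DifferentiableOn ℂ (fun z => ProbabilityTheory.complexMGF id ν (-z))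
      {z | 0 < z.re} :=
    ProbabilityTheory.differentiableOn_complexMGF.comp (by fun_prop) fun z hz =>
      hsub (by simpa using hz)
  exact hmgf.congr fun z hz => hL.eq_integral z hz

lemma apply_ofReal (ht : 0 < t) : f t = ((∫ u, Real.exp (-t * u) ∂ν : ℝ) : ℂ) := by
  rw [hL.eq_integral t (by simpa using ht), ← integral_complex_ofReal]
  push_cast
  rfl

lemma norm_apply_ofReal (ht : 0 < t) : ‖f t‖ = ∫ u, Real.exp (-t * u) ∂ν := by
  rw [hL.apply_ofReal ht, Complex.norm_real, Real.norm_of_nonneg]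
  exact integral_nonneg fun u => (Real.exp_pos _).le

lemma apply_ofReal_eq_norm (ht : 0 < t) : f t = (‖f t‖ : ℂ) := by
  rw [hL.norm_apply_ofReal ht, hL.apply_ofReal ht]

lemma norm_le_norm_re {z : ℂ} (hz : 0 < z.re) : ‖f z‖ ≤ ‖f (z.re : ℂ)‖ := by
  rw [hL.norm_apply_ofReal hz, hL.eq_integral z hz]
  refine (norm_integral_le_integral_norm _).trans_eq ?_
  simp [Complex.norm_exp]

lemma neZero {z : ℂ} (hz : 0 < z.re) (hfz : f z ≠ 0) : NeZero ν :=
  ⟨fun hν => hfz (by rw [hL.eq_integral z hz, hν, integral_zero_measure])⟩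

lemma norm_mul_exp_le_add {a b : ℝ} (hb : b < t) (ha : |a| ≤ b) :
    ‖f ((t + a : ℝ) : ℂ)‖ * Real.exp (x * a) ≤
      ‖f ((t + b : ℝ) : ℂ)‖ * Real.exp (x * b) + ‖f ((t + -b : ℝ) : ℂ)‖ * Real.exp (x * -b) := by
  have hb0 : 0 ≤ b := (abs_nonneg _).trans ha
  obtain ⟨hba, hab⟩ := abs_le.1 ha
  have hint : ∀ c : ℝ, -b ≤ c →
      Integrable (fun u => Real.exp (-(t + c) * u) * Real.exp (x * c)) ν := fun c hc =>
    (hL.integrable _ (by linarith)).mul_const _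
  rw [hL.norm_apply_ofReal (by linarith), hL.norm_apply_ofReal (by linarith),
    hL.norm_apply_ofReal (by linarith), ← integral_mul_const, ← integral_mul_const,
    ← integral_mul_const, ← integral_add (hint b (by linarith)) (hint (-b) le_rfl)]
  refine integral_mono (hint a hba) ((hint b (by linarith)).add (hint (-b) le_rfl)) fun u => ?_
  simp only [← Real.exp_add]
  rcases le_total u x with h | h
  · refine le_add_of_le_of_nonneg (Real.exp_le_exp.2 ?_) (Real.exp_pos _).le
    nlinarith
  · refine le_add_of_nonneg_of_le (Real.exp_pos _).le (Real.exp_le_exp.2 ?_)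
    nlinarith

end Transform

section Tilt

lemma norm_tiltTransform (f : ℂ → ℂ) (t σ x : ℝ) (s : ℂ) :
    ‖tiltTransform f t σ x s‖ =
      ‖f (t + s / σ)‖ * Real.exp (x * (s.re / σ)) / ‖f t‖ := by
  rw [tiltTransform, norm_mul, norm_div, Complex.norm_exp, Complex.re_ofReal_mul,
    Complex.div_ofReal_re]
  ring

variable (hL : HasLaplaceTransform ν f)
include hL

lemma tiltTransform_ofReal (ht : 0 < t) {s : ℝ} (hs : 0 < t + s / σ) :
    tiltTransform f t σ x s =
      ((‖f ((t + s / σ : ℝ) : ℂ)‖ / ‖f t‖ * Real.exp (x * (s / σ)) : ℝ) : ℂ) := by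
  have hcast : (t : ℂ) + s / σ = ((t + s / σ : ℝ) : ℂ) := by push_cast; rfl
  rw [tiltTransform, hcast, hL.apply_ofReal_eq_norm ht, hL.apply_ofReal_eq_norm hs]
  push_cast
  simp

lemma differentiableOn_tiltTransform (hσ : 0 < σ) (hR : R / σ < t) :
    DifferentiableOn ℂ (tiltTransform f t σ x) (Metric.ball 0 R) := by
  have hmaps : MapsTo (fun s : ℂ => (t : ℂ) + s / σ) (Metric.ball 0 R) {z | 0 < z.re} := by
    intro s hs
    have hle := (abs_le.1 ((Complex.abs_re_le_norm s).trans (mem_ball_zero_iff.1 hs).le)).1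
    have hdiv := div_le_div_of_nonneg_right hle hσ.le
    rw [neg_div] at hdiv
    simp only [mem_ofPred_eq, Complex.add_re, Complex.ofReal_re, Complex.div_ofReal_re]
    linarith
  exact ((hL.differentiableOn.comp (by fun_prop) hmaps).div_const _).mul (by fun_prop)

lemma norm_tiltTransform_le (hσ : 0 < σ) (hR : R / σ < t) {s : ℂ} (hs : |s.re| ≤ R) :
    ‖tiltTransform f t σ x s‖ ≤
      ‖tiltTransform f t σ x (R : ℝ)‖ + ‖tiltTransform f t σ x (-R : ℝ)‖ := by
  have hsR : |s.re / σ| ≤ R / σ := by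
    rw [abs_div, abs_of_pos hσ]
    gcongr
  have hre : ((t : ℂ) + s / σ).re = t + s.re / σ := by simp
  have hpos : 0 < ((t : ℂ) + s / σ).re := by
    rw [hre]
    linarith [(abs_le.1 hsR).1]
  have hle := (mul_le_mul_of_nonneg_right (hL.norm_le_norm_re hpos) (Real.exp_pos _).le).trans
    (hre ▸ hL.norm_mul_exp_le_add (x := x) hR hsR)
  simp only [norm_tiltTransform, ← add_div, Complex.ofReal_re]
  refine div_le_div_of_nonneg_right (hle.trans_eq ?_) (norm_nonneg _)
  push_cast
  rw [neg_div, neg_div]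

lemma isProbabilityMeasure_laplaceTilt [NeZero ν] (ht : 0 < t) :
    IsProbabilityMeasure (laplaceTilt ν t x) := by
  have := isProbabilityMeasure_tilted (hL.integrable t ht)
  exact Measure.isProbabilityMeasure_map (by fun_prop)

lemma charFun_laplaceTilt (ht : 0 < t) (ξ : ℝ) : charFun (laplaceTilt ν t x) ξ =
    f (t - (ξ * t : ℝ) * Complex.I) / f t * Complex.exp (-((ξ * t * x : ℝ) * Complex.I)) := by
  rw [laplaceTilt, charFun_apply_real, integral_map (by fun_prop) (by fun_prop), integral_tilted,
    hL.eq_integral (t - (ξ * t : ℝ) * Complex.I) (by simpa using ht), hL.apply_ofReal ht,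
    ← integral_div, ← integral_mul_const]
  congr 1 with u
  rw [Complex.real_smul, Complex.ofReal_div, div_mul_eq_mul_div, div_mul_eq_mul_div,
    Complex.ofReal_exp, ← Complex.exp_add, ← Complex.exp_add]
  congr 2
  push_cast
  ring

lemma charFun_laplaceTilt_div (ht : 0 < t) (hσ : 0 < σ) (y : ℝ) :
    charFun (laplaceTilt ν t x) (y / (t * σ)) = tiltTransform f t σ x (-(y * Complex.I)) := by
  have ht' : (t : ℂ) ≠ 0 := Complex.ofReal_ne_zero.2 ht.ne'
  have hσ' : (σ : ℂ) ≠ 0 := Complex.ofReal_ne_zero.2 hσ.ne'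
  rw [hL.charFun_laplaceTilt ht, tiltTransform]
  congr 3 <;> push_cast <;> field_simp
  ring

lemma norm_charFun_laplaceTilt (ht : 0 < t) (ξ : ℝ) :
    ‖charFun (laplaceTilt ν t x) ξ‖ = ‖f (t - (ξ * t : ℝ) * Complex.I)‖ / ‖f t‖ := by
  rw [hL.charFun_laplaceTilt ht, norm_mul, norm_div, ← neg_mul, ← Complex.ofReal_neg,
    Complex.norm_exp_ofReal_mul_I, mul_one]

lemma setIntegral_exp_laplaceTilt (ht : 0 < t) {S : Set ℝ} (hS : MeasurableSet S) :
    ∫ u in S, Real.exp u ∂laplaceTilt ν t x =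
      Real.exp (-(t * x)) * ν.real ((fun u => t * (u - x)) ⁻¹' S) / ‖f t‖ := by
  have hm : MeasurableSet ((fun u => t * (u - x)) ⁻¹' S) := (by fun_prop : Measurable _) hS
  have hconst : ∀ u : ℝ, (Real.exp (-t * u) / ∫ u, Real.exp (-t * u) ∂ν) •
      Real.exp (t * (u - x)) = Real.exp (-(t * x)) / ∫ u, Real.exp (-t * u) ∂ν := fun u => by
    rw [smul_eq_mul, div_mul_eq_mul_div, ← Real.exp_add]
    ring_nf
  rw [laplaceTilt, setIntegral_map hS (by fun_prop) (by fun_prop), setIntegral_tilted' _ _ hm,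
    hL.norm_apply_ofReal ht]
  simp_rw [hconst]
  rw [setIntegral_const, smul_eq_mul]
  ring

end Tilt

section Limit

variable {ι : Type*} {l : Filter ι} {t σ x : ι → ℝ}

lemma norm_cexp_sq_div_two_le {R : ℝ} {w : ℂ} (hw : ‖w‖ ≤ R) :
    ‖Complex.exp (w ^ 2 / 2)‖ ≤ Real.exp (R ^ 2 / 2) := by
  rw [Complex.norm_exp]
  refine Real.exp_le_exp.2 ((Complex.re_le_norm _).trans ?_)
  rw [norm_div, norm_pow, Complex.norm_ofNat]
  gcongr

lemma exists_eventually_norm_tiltTransform_sub_le (hL : HasLaplaceTransform ν f)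
    (hσ : ∀ᶠ n in l, 0 < σ n) (hN : Tendsto (fun n => t n * σ n) l atTop)
    (hreal : ∀ s : ℝ, Tendsto (fun n => tiltTransform f (t n) (σ n) (x n) s) l
      (𝓝 (Complex.exp (s ^ 2 / 2)))) (R : ℝ) :
    ∃ M : ℝ, ∀ᶠ n in l,
      DifferentiableOn ℂ (fun w => tiltTransform f (t n) (σ n) (x n) w - Complex.exp (w ^ 2 / 2))
        (Metric.ball 0 R) ∧ ∀ w ∈ Metric.ball (0 : ℂ) R,
          ‖tiltTransform f (t n) (σ n) (x n) w - Complex.exp (w ^ 2 / 2)‖ ≤ M := by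
  refine ⟨‖Complex.exp ((R : ℝ) ^ 2 / 2)‖ + 1 + (‖Complex.exp ((-R : ℝ) ^ 2 / 2)‖ + 1) +
    Real.exp (R ^ 2 / 2), ?_⟩
  filter_upwards [hσ, hN.eventually_gt_atTop R,
    (hreal R).norm.eventually_le_const (lt_add_one _),
    (hreal (-R)).norm.eventually_le_const (lt_add_one _)] with n hσn hn hright hleft
  have hRt : R / σ n < t n := (div_lt_iff₀ hσn).2 hn
  refine ⟨(hL.differentiableOn_tiltTransform hσn hRt).sub (by fun_prop), fun w hw => ?_⟩
  have hnorm : ‖w‖ ≤ R := (mem_ball_zero_iff.1 hw).le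
  linarith [norm_sub_le (tiltTransform f (t n) (σ n) (x n) w) (Complex.exp (w ^ 2 / 2)),
    hL.norm_tiltTransform_le (x := x n) hσn hRt ((Complex.abs_re_le_norm w).trans hnorm),
    norm_cexp_sq_div_two_le hnorm]

lemma tendsto_tiltTransform [l.NeBot] (hL : HasLaplaceTransform ν f) (hσ : ∀ᶠ n in l, 0 < σ n)
    (hN : Tendsto (fun n => t n * σ n) l atTop)
    (hreal : ∀ s : ℝ, Tendsto (fun n => tiltTransform f (t n) (σ n) (x n) s) l
      (𝓝 (Complex.exp (s ^ 2 / 2)))) (s : ℂ) :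
    Tendsto (fun n => tiltTransform f (t n) (σ n) (x n) s) l (𝓝 (Complex.exp (s ^ 2 / 2))) := by
  obtain ⟨M, hM⟩ := hL.exists_eventually_norm_tiltTransform_sub_le hσ hN hreal (‖s‖ + 1)
  have hofReal : Tendsto Complex.ofReal (𝓝[≠] 0) (𝓝[≠] ((0 : ℝ) : ℂ)) :=
    Complex.continuous_ofReal.continuousWithinAt.tendsto_nhdsWithin
      fun r hr => Complex.ofReal_injective.ne hr
  have hzero := tendsto_zero_of_frequently_of_isPreconnected Metric.isOpen_ball
    (convex_ball (0 : ℂ) (‖s‖ + 1)).isPreconnected hM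
    (Metric.mem_ball_self (by positivity : 0 < ‖s‖ + 1))
    (hofReal.frequently (Frequently.of_forall fun r => tendsto_sub_nhds_zero_iff.2 (hreal r)))
    (mem_ball_zero_iff.2 (lt_add_one ‖s‖))
  exact tendsto_sub_nhds_zero_iff.1 hzero

end Limit

end HasLaplaceTransform

end Laplace

namespace InghamRegular

variable {D : Set ℂ} {T C k : ℝ} {δ : ℝ → ℝ} {φ χ f : ℂ → ℂ} {ν : Measure ℝ}

section LocalLimit

variable (H : InghamRegular D T C k δ φ χ) (hL : HasLaplaceTransform ν f)
  (hf : HasInghamGrowth φ χ f)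
include H hL hf

lemma tendsto_tiltTransform_ofReal (s : ℝ) :
    Tendsto (fun t => tiltTransform f t (saddleScale φ t) (-(deriv φ t).re) s) (𝓝[>] 0)
      (𝓝 (Complex.exp (s ^ 2 / 2))) := by
  have hgauss : Complex.exp (s ^ 2 / 2) = (Real.exp (s ^ 2 / 2) : ℝ) := by push_cast; rfl
  rw [hgauss]
  refine ((Complex.continuous_ofReal.tendsto _).comp (H.tendsto_norm_div_mul_exp hf s)).congr' ?_
  filter_upwards [self_mem_nhdsWithin,
    (H.tendsto_add_div_saddleScale hf s).eventually self_mem_nhdsWithin] with t ht hts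
  rw [hL.tiltTransform_ofReal ht hts]
  rfl

lemma tendsto_charFun_laplaceTilt {ι : Type*} {l : Filter ι} [l.NeBot] {t : ι → ℝ}
    (ht : Tendsto t l (𝓝[>] 0)) (y : ℝ) :
    Tendsto (fun n => charFun (laplaceTilt ν (t n) (-(deriv φ (t n)).re))
      (y / (t n * saddleScale φ (t n)))) l (𝓝 (Real.exp (-y ^ 2 / 2) : ℂ)) := by
  have hpos : ∀ᶠ n in l, 0 < t n ∧ 0 < saddleScale φ (t n) :=
    (ht.eventually H.eventually_mem_Ioc).mono fun n hn => ⟨hn.1, H.saddleScale_pos hn⟩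
  have hlim := hL.tendsto_tiltTransform (hpos.mono fun _ => And.right)
    ((H.tendsto_mul_saddleScale hf).comp ht)
    (fun s => (H.tendsto_tiltTransform_ofReal hL hf s).comp ht) (-(y * Complex.I))
  have hgauss : (-(y * Complex.I)) ^ 2 / 2 = ((-y ^ 2 / 2 : ℝ) : ℂ) := by
    push_cast
    rw [neg_sq, mul_pow, Complex.I_sq]
    ring
  rw [hgauss, ← Complex.ofReal_exp] at hlim
  exact hlim.congr' (hpos.mono fun n hn => (hL.charFun_laplaceTilt_div hn.1 hn.2 y).symm)

lemma isLocallyGaussian_laplaceTilt [NeZero ν] {t : ℕ → ℝ} (ht : Tendsto t atTop (𝓝[>] 0))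
    (hpos : ∀ n, 0 < t n) :
    IsLocallyGaussian (fun n => laplaceTilt ν (t n) (-(deriv φ (t n)).re))
      (fun n => t n * saddleScale φ (t n)) where
  isProbabilityMeasure n := hL.isProbabilityMeasure_laplaceTilt (hpos n)
  tendsto_scale := (H.tendsto_mul_saddleScale hf).comp ht
  tendsto_charFun := H.tendsto_charFun_laplaceTilt hL hf ht
  eventually_norm_charFun_le Δ := by
    obtain ⟨C', c, hc, hle⟩ := H.eventually_norm_div_le hf
      (lt_max_of_lt_right one_pos : 0 < max Δ 1)
    refine ⟨C', c, hc, (ht.eventually hle).mono fun n hn ξ hξ => ?_⟩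
    rw [hL.norm_charFun_laplaceTilt (hpos n)]
    exact hn ξ (hξ.trans (le_max_left _ _))

lemma tendsto_mul_measureReal_div [NeZero ν] {S : Set ℝ} (hS : MeasurableSet S)
    (hS1 : Iio 0 ⊆ S) (hS2 : S ⊆ Iic 0) :
    Tendsto (fun t : ℝ => t * saddleScale φ t * (Real.exp (-(t * -(deriv φ t).re)) *
      ν.real ((fun u => t * (u - -(deriv φ t).re)) ⁻¹' S) / ‖f t‖)) (𝓝[>] 0)
      (𝓝 (√(2 * Real.pi))⁻¹) := by
  refine tendsto_of_seq_tendsto fun t ht => ?_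
  obtain ⟨m, hm⟩ := (ht.eventually self_mem_nhdsWithin).exists_forall_of_atTop
  have hpos : ∀ n, 0 < t (n + m) := fun n => hm _ (Nat.le_add_left _ _)
  rw [← tendsto_add_atTop_iff_nat m]
  refine ((H.isLocallyGaussian_laplaceTilt hL hf ((tendsto_add_atTop_iff_nat m).2 ht)
    hpos).tendsto_mul_setIntegral_exp hS hS1 hS2).congr fun n => ?_
  rw [hL.setIntegral_exp_laplaceTilt (hpos n) hS, Function.comp_apply]

end LocalLimit

end InghamRegular

section Stieltjes

variable {A : ℝ → ℝ} {a : ℝ}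

lemma leftLim_stieltjesFunction (hA : Monotone A) (x : ℝ) :
    Function.leftLim hA.stieltjesFunction x = Function.leftLim A x := by
  rw [funext hA.stieltjesFunction_eq, leftLim_rightLim (hA.tendsto_leftLim x)]

lemma leftLim_stieltjesFunction_eq_zero (hA : Monotone A) (hA0 : ∀ x < a, A x = 0) :
    Function.leftLim hA.stieltjesFunction a = 0 := by
  rw [leftLim_stieltjesFunction]
  exact leftLim_eq_of_tendsto (tendsto_const_nhds.congr'
    (eventually_mem_nhdsWithin.mono fun y hy => (hA0 y hy).symm))

lemma nonneg_of_monotone_of_eq_zero (hA : Monotone A) (hA0 : ∀ x < a, A x = 0) (x : ℝ) :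
    0 ≤ A x := by
  rw [← hA0 (min x (a - 1)) (by simp)]
  exact hA (min_le_left _ _)

lemma measureReal_stieltjesFunction_Iio_le (hA : Monotone A) (hA0 : ∀ x < a, A x = 0) (x : ℝ) :
    (hA.stieltjesFunction.measure.restrict (Ici a)).real (Iio x) ≤ A x := by
  rw [measureReal_restrict_apply measurableSet_Iio, inter_comm, Ici_inter_Iio, measureReal_def,
    StieltjesFunction.measure_Ico, leftLim_stieltjesFunction_eq_zero hA hA0, sub_zero,
    leftLim_stieltjesFunction, ENNReal.toReal_ofReal']
  exact max_le (hA.leftLim_le le_rfl) (nonneg_of_monotone_of_eq_zero hA hA0 x)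

lemma le_measureReal_stieltjesFunction_Iic (hA : Monotone A) (hA0 : ∀ x < a, A x = 0) (x : ℝ) :
    A x ≤ (hA.stieltjesFunction.measure.restrict (Ici a)).real (Iic x) := by
  rw [measureReal_restrict_apply measurableSet_Iic, inter_comm, Ici_inter_Iic, measureReal_def,
    StieltjesFunction.measure_Icc, leftLim_stieltjesFunction_eq_zero hA hA0, sub_zero,
    hA.stieltjesFunction_eq, ENNReal.toReal_ofReal']
  exact (hA.le_rightLim le_rfl).trans (le_max_left _ _)

end Stieltjes

section Preimage

variable {t : ℝ}

lemma preimage_mul_sub_Iio_zero (ht : 0 < t) (x : ℝ) :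
    (fun u => t * (u - x)) ⁻¹' Iio 0 = Iio x := by
  ext u
  rw [mem_preimage, mem_Iio, mem_Iio, ← sub_neg (a := u), ← smul_eq_mul,
    smul_neg_iff_of_pos_left ht]

lemma preimage_mul_sub_Iic_zero (ht : 0 < t) (x : ℝ) :
    (fun u => t * (u - x)) ⁻¹' Iic 0 = Iic x := by
  ext u
  rw [mem_preimage, mem_Iic, mem_Iic, ← sub_nonpos (a := u), ← smul_eq_mul,
    smul_nonpos_iff_nonpos_of_pos_left ht]

end Preimage

namespace InghamRegular

variable {D : Set ℂ} {T C k : ℝ} {δ : ℝ → ℝ} {φ χ f : ℂ → ℂ} {ν : Measure ℝ} {A : ℝ → ℝ}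

section Distribution

variable (H : InghamRegular D T C k δ φ χ) (hL : HasLaplaceTransform ν f)
  (hf : HasInghamGrowth φ χ f) (hA_ge : ∀ x : ℝ, ν.real (Iio x) ≤ A x)
  (hA_le : ∀ x : ℝ, A x ≤ ν.real (Iic x))
include H hL hf hA_ge hA_le

lemma tendsto_mul_distribution_div [NeZero ν] :
    Tendsto (fun t : ℝ => t * saddleScale φ t * (Real.exp (-(t * -(deriv φ t).re)) *
      A (-(deriv φ t).re) / ‖f t‖)) (𝓝[>] 0) (𝓝 (√(2 * Real.pi))⁻¹) := by
  refine tendsto_of_tendsto_of_tendsto_of_le_of_le'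
    (H.tendsto_mul_measureReal_div hL hf measurableSet_Iio subset_rfl Iio_subset_Iic_self)
    (H.tendsto_mul_measureReal_div hL hf measurableSet_Iic Iio_subset_Iic_self subset_rfl) ?_ ?_
  all_goals
    filter_upwards [H.eventually_mem_Ioc] with t ht
    have hscale := mul_pos ht.1 (H.saddleScale_pos ht)
    gcongr
  · rw [preimage_mul_sub_Iio_zero ht.1]
    exact hA_ge _
  · rw [preimage_mul_sub_Iic_zero ht.1]
    exact hA_le _

lemma tendsto_distribution_div :
    Tendsto (fun t : ℝ => A (-(deriv φ t).re) /
      ((χ t).re * Real.exp ((φ t).re + -(deriv φ t).re * t) /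
        (t * √(2 * Real.pi * (iteratedDeriv 2 φ t).re)))) (𝓝[>] 0) (𝓝 1) := by
  have hne : ∀ᶠ t : ℝ in 𝓝[>] 0, ‖f t‖ ≠ 0 := (hf.tendsto_norm_div.eventually_ne one_ne_zero).mono
    fun t ht hft => ht (by rw [hft, zero_div])
  obtain ⟨r, hr, hr0⟩ := (hne.and self_mem_nhdsWithin).exists
  have : NeZero ν := hL.neZero (by simpa using hr0) (norm_ne_zero_iff.1 hr)
  have hlim := ((H.tendsto_mul_distribution_div hL hf hA_ge hA_le).mul_const
    √(2 * Real.pi)).mul hf.tendsto_norm_div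
  rw [inv_mul_cancel₀ (by positivity), one_mul] at hlim
  refine hlim.congr' ?_
  filter_upwards [H.eventually_mem_Ioc, hne] with t ht hft
  have ht0 := ht.1
  have hχ := H.chi_pos t ht
  have hscale : 0 < √(iteratedDeriv 2 φ t).re := H.saddleScale_pos ht
  rw [Real.sqrt_mul (by positivity : 0 ≤ 2 * Real.pi), Real.exp_add, Real.exp_neg,
    mul_comm t (-(deriv φ t).re), H.laplaceModel_eq ht, saddleScale]
  field_simp

end Distribution

end InghamRegular

lemma tendsto_inverse_nhdsGT_zero {g ψ : ℝ → ℝ} {h : ℝ} (hg : ContinuousOn g (Ioc 0 h))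
    (hψ : ∀ᶠ x in atTop, 0 < ψ x ∧ ψ x ≤ h ∧ g (ψ x) = x) : Tendsto ψ atTop (𝓝[>] 0) := by
  refine tendsto_nhdsWithin_iff.2 ⟨?_, hψ.mono fun x hx => hx.1⟩
  refine tendsto_order.2 ⟨fun a ha => hψ.mono fun x hx => ha.trans hx.1, fun ε hε => ?_⟩
  obtain ⟨M, hM⟩ := isCompact_Icc.bddAbove_image
    (hg.mono fun y (hy : y ∈ Icc ε h) => ⟨hε.trans_le hy.1, hy.2⟩)
  filter_upwards [hψ, eventually_gt_atTop M] with x ⟨_, hxh, hgx⟩ hxM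
  by_contra! hεx
  have := hM (mem_image_of_mem g ⟨hεx, hxh⟩)
  linarith

lemma hasLaplaceTransform_of_integrable {ν : Measure ℝ} {f : ℂ → ℂ}
    (hint : ∀ z : ℂ, 0 < z.re → Integrable (fun u : ℝ => Complex.exp (-z * u)) ν)
    (heq : ∀ z : ℂ, 0 < z.re → f z = ∫ u : ℝ, Complex.exp (-z * u) ∂ν) :
    HasLaplaceTransform ν f where
  integrable t ht := (hint t (by simpa using ht)).norm.congr
    (Eventually.of_forall fun u => by simp [Complex.norm_exp])
  eq_integral := heq

lemma HasLaplaceTransform.hasInghamGrowth {ν : Measure ℝ} {f φ χ : ℂ → ℂ}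
    (hL : HasLaplaceTransform ν f)
    (hreal : Tendsto (fun t : ℝ => f t / (χ t * Complex.exp (φ t))) (𝓝[>] 0) (𝓝 1))
    (hsector : ∀ Δ : ℝ, 0 < Δ → ∃ C ρ : ℝ, 0 < C ∧ 0 < ρ ∧ ∀ z : ℂ, 0 < z.re →
      |z.im| ≤ Δ * z.re → ‖z‖ < ρ →
      ‖f z‖ ≤ C * ‖χ ((‖z‖ : ℝ) : ℂ)‖ * Real.exp ((φ ((‖z‖ : ℝ) : ℂ)).re)) :
    HasInghamGrowth φ χ f where
  differentiableOn := hL.differentiableOn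
  tendsto_norm_div := by simpa [laplaceModel, norm_div, norm_mul, Complex.norm_exp] using hreal.norm
  sector_bound := by simpa only [laplaceModel, mul_assoc] using hsector

/-- Ingham's Tauberian theorem, real-axis variant (Theorem 1' of Ingham). `A : ℝ → ℝ` is weakly increasing with `A = 0` on `(-∞,0]`
(representing a weakly increasing function on `[0,∞)` with `A(0) = 0`), and
`f(z) = ∫_0^∞ e^{-zu} dA(u)` is the Lebesgue–Stieltjes integral with respect to `A`. -/
theorem ingham_tauberian_real_axis
    (D : Set ℂ) (hDopen : IsOpen D) (hDconn : IsConnected D)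
    (h : ℝ) (hh : 0 < h) (hD : ∀ t : ℝ, 0 < t → t ≤ h → (t : ℂ) ∈ D)
    -- δ(t) is the distance from t to the complement of D
    (δ : ℝ → ℝ) (hδ : ∀ t : ℝ, 0 < t → t ≤ h → δ t = Metric.infDist (t : ℂ) Dᶜ)
    (φ χ : ℂ → ℂ)
    -- (a) φ and χ are holomorphic on D, and positive on (0,h]
    (hφdiff : DifferentiableOn ℂ φ D) (hχdiff : DifferentiableOn ℂ χ D)
    (hφpos : ∀ t : ℝ, 0 < t → t ≤ h → (φ (t : ℂ)).im = 0 ∧ 0 < (φ (t : ℂ)).re)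
    (hχpos : ∀ t : ℝ, 0 < t → t ≤ h → (χ (t : ℂ)).im = 0 ∧ 0 < (χ (t : ℂ)).re)
    -- (b) -t φ'(t) → ∞ as t → 0⁺
    (hb : Tendsto (fun t : ℝ => -t * (deriv φ (t : ℂ)).re) (𝓝[>] (0:ℝ)) atTop)
    -- (c) -δ(t) φ'(t) / (t √(φ''(t))) → ∞ as t → 0⁺
    (hc : Tendsto (fun t : ℝ =>
        -δ t * (deriv φ (t : ℂ)).re / (t * Real.sqrt ((iteratedDeriv 2 φ (t : ℂ)).re)))
      (𝓝[>] (0:ℝ)) atTop)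
    -- (d) φ''(t+z) = O(φ''(t)) and χ(t+z) = O(χ(t)) uniformly over |z| < δ(t) as t → 0⁺
    (hd : ∃ C t₀ : ℝ, 0 < t₀ ∧ ∀ t : ℝ, 0 < t → t ≤ t₀ → ∀ z : ℂ, ‖z‖ < δ t →
        ‖iteratedDeriv 2 φ ((t : ℂ) + z)‖ ≤ C * ‖iteratedDeriv 2 φ (t : ℂ)‖ ∧
        ‖χ ((t : ℂ) + z)‖ ≤ C * ‖χ (t : ℂ)‖)
    (A : ℝ → ℝ) (hAmono : Monotone A) (hA0 : ∀ x : ℝ, x ≤ 0 → A x = 0)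
    (f : ℂ → ℂ)
    (hfdef : ∀ z : ℂ, 0 < z.re →
        f z = ∫ u in Ici (0:ℝ), Complex.exp (-z * u) ∂hAmono.stieltjesFunction.measure)
    -- f(z) exists for Re(z) > 0
    (hfint : ∀ z : ℂ, 0 < z.re →
        IntegrableOn (fun u : ℝ => Complex.exp (-z * u)) (Ici (0:ℝ))
          hAmono.stieltjesFunction.measure)
    -- additionally, -t^k φ'(t) decreases to 0 as t → 0⁺, for some fixed k ∈ ℝ
    (hk : ∃ k : ℝ, MonotoneOn (fun t : ℝ => -(t ^ k) * (deriv φ (t : ℂ)).re) (Ioc (0:ℝ) h) ∧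
        Tendsto (fun t : ℝ => -(t ^ k) * (deriv φ (t : ℂ)).re) (𝓝[>] (0:ℝ)) (𝓝 0))
    -- (i') f(t) ~ χ(t) e^{φ(t)} as t → 0⁺ along the positive reals
    (hi' : Tendsto (fun t : ℝ => f (t : ℂ) / (χ (t : ℂ) * Complex.exp (φ (t : ℂ))))
      (𝓝[>] (0:ℝ)) (𝓝 1))
    -- (ii) for each Δ > 0, f(z) = O(χ(|z|) e^{φ(|z|)}) as z → 0 with |Im z| ≤ Δ Re z
    (hii : ∀ Δ : ℝ, 0 < Δ → ∃ C ρ : ℝ, 0 < C ∧ 0 < ρ ∧ ∀ z : ℂ, 0 < z.re →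
        |z.im| ≤ Δ * z.re → ‖z‖ < ρ →
        ‖f z‖ ≤ C * ‖χ ((‖z‖ : ℝ) : ℂ)‖ * Real.exp ((φ ((‖z‖ : ℝ) : ℂ)).re))
    -- ψ is the inverse function of -φ'
    (ψ : ℝ → ℝ)
    (hψ : ∀ᶠ x in atTop, 0 < ψ x ∧ ψ x ≤ h ∧ -(deriv φ ((ψ x : ℝ) : ℂ)).re = x) :
    Tendsto (fun x : ℝ => A x /
        ((χ ((ψ x : ℝ) : ℂ)).re * Real.exp ((φ ((ψ x : ℝ) : ℂ)).re + x * ψ x) /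
          (ψ x * Real.sqrt (2 * Real.pi * (iteratedDeriv 2 φ ((ψ x : ℝ) : ℂ)).re))))
      atTop (𝓝 1) := by
  obtain ⟨k, hk, -⟩ := hk
  obtain ⟨C, t₀, ht₀, hd⟩ := hd
  obtain ⟨T, H⟩ := exists_inghamRegular hDopen hh hD hδ hφdiff hχdiff
    (fun t ht hth => (hφpos t ht hth).1) hχpos hb hc ht₀ hd hk
  have hL := hasLaplaceTransform_of_integrable hfint hfdef
  have hψ0 : Tendsto ψ atTop (𝓝[>] 0) := by
    refine tendsto_inverse_nhdsGT_zero (g := fun t => -(deriv φ t).re) ?_ hψ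
    exact (Complex.continuous_re.comp_continuousOn ((hφdiff.deriv hDopen).continuousOn.comp
      (by fun_prop) fun t ht => hD t ht.1 ht.2)).neg
  have hA0' : ∀ x < 0, A x = 0 := fun x hx => hA0 x hx.le
  refine ((H.tendsto_distribution_div hL (hL.hasInghamGrowth hi' hii)
    (measureReal_stieltjesFunction_Iio_le hAmono hA0')
    (le_measureReal_stieltjesFunction_Iic hAmono hA0')).comp hψ0).congr' ?_
  filter_upwards [hψ] with x ⟨_, _, hx⟩
  simp only [Function.comp_apply, hx]

end
end

section
/- Define A(n) = 0 for n = 0 and A(n) = e^{2 m^{3/2}} m^{-1/4} whenever m^3 \le n < (m+1)^3 with m \ge 1, and let F(q) = \sum_{n \ge 0} A(n) q^n. Then F(e^{-t}) \sim \frac{2\sqrt{\pi}}{3} \cdot \frac{e^{1/t}}{t} as t \to 0^+. -/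
open Filter Topology Set

open MeasureTheory

/-!
Let `q = exp (-t)`. The coefficients are constant on each block `m ^ 3 ≤ n < (m + 1) ^ 3`, so
`(1 - q) F(q) = ∑ exp (2 m ^ (3/2)) m ^ (-1/4) (q ^ (m ^ 3) - q ^ ((m + 1) ^ 3))`. Completing the
square, `2 m ^ (3/2) - t m ^ 3 = 1 / t - (√t m ^ (3/2) - 1 / √t) ^ 2`, so the terms peak at
`m ≈ t ^ (-2/3)` over a range of width `t ^ (-1/6)`; the substitution `t = s ^ 6` clears the
fractional powers. There `t ((m + 1) ^ 3 - m ^ 3) ≈ 3 s⁻²` is large, so `q ^ ((m + 1) ^ 3)` is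
negligible against `q ^ (m ^ 3)`. In the variable `y = s m - s⁻³` the sum, divided by `exp (1 / t)`,
is thus a Riemann sum of mesh `s` whose terms converge to `exp (-(3 y / 2) ^ 2)`. A Gaussian
majorant lets one pass to the integral `∫ exp (-(3 y / 2) ^ 2) = 2 √π / 3`, and `1 - q ~ t`.
-/

section RiemannSum

variable {E : Type*} [NormedAddCommGroup E]

/-- The step function on `ℝ` with value `h m` on `[m, m + 1)` and `0` on the negative axis; its
integral is the sum of `h`. -/
noncomputable def stepExtension (h : ℕ → E) : ℝ → E :=
  (Ici 0).indicator fun x ↦ h ⌊x⌋₊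

lemma stronglyMeasurable_stepExtension (h : ℕ → E) : StronglyMeasurable (stepExtension h) :=
  (StronglyMeasurable.of_discrete.comp_measurable Nat.measurable_floor).indicator measurableSet_Ici

lemma hasSum_integral_stepExtension [NormedSpace ℝ E] [CompleteSpace E] {h : ℕ → E}
    (hh : Integrable (stepExtension h)) : HasSum h (∫ x, stepExtension h x) := by
  have hcover : ⋃ m : ℕ, Ico (m : ℝ) (m + 1) = Ici 0 := by
    simpa using iUnion_Ico_map_succ_eq_Ici (f := ((↑) : ℕ → ℝ)) (by simp)
      (not_bddAbove_of_tendsto_atTop tendsto_natCast_atTop_atTop)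
  have hdisj : Pairwise (Function.onFun Disjoint fun m : ℕ ↦ Ico (m : ℝ) (m + 1)) := by
    simpa using Nat.mono_cast.pairwise_disjoint_on_Ico_succ (β := ℝ)
  have hterm (m : ℕ) : ∫ x in Ico (m : ℝ) (m + 1), h ⌊x⌋₊ = h m := by
    have hfloor : EqOn (fun x : ℝ ↦ h ⌊x⌋₊) (fun _ ↦ h m) (Ico m (m + 1)) := fun x hx ↦ by
      simp only [(Nat.floor_eq_iff (m.cast_nonneg.trans hx.1)).2 hx]
    simp [setIntegral_congr_fun measurableSet_Ico hfloor]
  unfold stepExtension at hh ⊢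
  rw [integrable_indicator_iff measurableSet_Ici, ← hcover] at hh
  rw [integral_indicator measurableSet_Ici, ← hcover]
  simpa only [hterm] using hasSum_integral_iUnion (fun _ ↦ measurableSet_Ico) hdisj hh

lemma smul_tsum_eq_integral_stepExtension [NormedSpace ℝ E] [CompleteSpace E] {h : ℕ → E}
    {δ c : ℝ} (hδ : 0 < δ)
    (hh : Integrable fun y ↦ stepExtension h ((y + c) / δ)) :
    δ • ∑' m, h m = ∫ y, stepExtension h ((y + c) / δ) := by
  have hstep : Integrable (stepExtension h) := by
    refine (integrable_comp_div_iff _ hδ.ne').1 ?_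
    simpa using hh.comp_add_right (-c)
  rw [(hasSum_integral_stepExtension hstep).tsum_eq,
    integral_add_right_eq_self fun x ↦ stepExtension h (x / δ), Measure.integral_comp_div,
    abs_of_pos hδ]

lemma abs_sub_mul_floor_div_le {K : Type*} [Field K] [LinearOrder K] [IsStrictOrderedRing K]
    [FloorSemiring K] {δ x : K} (hδ : 0 < δ) (hx : 0 ≤ x) :
    |x - δ * ⌊x / δ⌋₊| ≤ δ := by
  calc |x - δ * ⌊x / δ⌋₊| = |δ * (x / δ - ⌊x / δ⌋₊)| := by field_simp
    _ = δ * |x / δ - ⌊x / δ⌋₊| := by rw [abs_mul, abs_of_pos hδ]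
    _ ≤ δ := mul_le_of_le_one_right hδ.le (Nat.abs_sub_floor_le (by positivity))

lemma tendsto_mul_floor_div_sub {ι : Type*} {l : Filter ι} {δ c : ι → ℝ}
    (hδ : Tendsto δ l (𝓝[>] 0)) (hc : Tendsto c l atTop) (y : ℝ) :
    Tendsto (fun i ↦ δ i * ⌊(y + c i) / δ i⌋₊ - c i) l (𝓝 y) := by
  obtain ⟨hδ_zero, hδ_pos⟩ := tendsto_nhdsWithin_iff.1 hδ
  refine tendsto_iff_norm_sub_tendsto_zero.2
    (squeeze_zero' (.of_forall fun _ ↦ norm_nonneg _) ?_ hδ_zero)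
  filter_upwards [hδ_pos, (tendsto_atTop_add_const_left l y hc).eventually_ge_atTop 0] with i hi hy
  rw [Real.norm_eq_abs, abs_sub_comm, sub_sub_eq_add_sub]
  exact abs_sub_mul_floor_div_le hi hy

lemma norm_stepExtension_div_le {h : ℕ → E} {δ c : ℝ} {bound : ℝ → ℝ} (hδ : 0 < δ)
    (hb : ∀ (m : ℕ) (y : ℝ), |y - (δ * m - c)| ≤ δ → ‖h m‖ ≤ bound y) (y : ℝ) :
    ‖stepExtension h ((y + c) / δ)‖ ≤ |bound y| := by
  unfold stepExtension
  by_cases hy : (y + c) / δ ∈ Ici 0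
  · rw [indicator_of_mem hy]
    refine (hb _ y ?_).trans (le_abs_self _)
    have hyc : 0 ≤ y + c := by simpa using (le_div_iff₀ hδ).1 hy
    simpa only [sub_sub_eq_add_sub] using abs_sub_mul_floor_div_le hδ hyc
  · simp [indicator_of_notMem hy]

/-- The `m`-th term is attached to the point `δ i * m - c i`; these points fill the whole line in
the limit because `c i → ∞`. -/
theorem tendsto_smul_tsum_integral_of_dominated [NormedSpace ℝ E] [CompleteSpace E] {ι : Type*}
    {l : Filter ι} [l.IsCountablyGenerated] {f : ι → ℕ → E} {g : ℝ → E} {δ c : ι → ℝ}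
    (bound : ℝ → ℝ) (hδ : Tendsto δ l (𝓝[>] 0)) (hc : Tendsto c l atTop)
    (bound_integrable : Integrable bound)
    (h_bound : ∀ᶠ i in l, ∀ (m : ℕ) (y : ℝ), |y - (δ i * m - c i)| ≤ δ i → ‖f i m‖ ≤ bound y)
    (h_lim : ∀ᵐ y, ∀ m : ι → ℕ, Tendsto (fun i ↦ δ i * m i - c i) l (𝓝 y) →
      Tendsto (fun i ↦ f i (m i)) l (𝓝 (g y))) :
    Tendsto (fun i ↦ δ i • ∑' m, f i m) l (𝓝 (∫ y, g y)) := by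
  have hδ_pos := (tendsto_nhdsWithin_iff.1 hδ).2
  have hmeas (i : ι) :
      AEStronglyMeasurable (fun y ↦ stepExtension (f i) ((y + c i) / δ i)) volume :=
    ((stronglyMeasurable_stepExtension _).comp_measurable (by fun_prop)).aestronglyMeasurable
  have hdom : ∀ᶠ i in l, ∀ y, ‖stepExtension (f i) ((y + c i) / δ i)‖ ≤ |bound y| := by
    filter_upwards [hδ_pos, h_bound] with i hi hb using norm_stepExtension_div_le hi hb
  have hlim : ∀ᵐ y, Tendsto (fun i ↦ stepExtension (f i) ((y + c i) / δ i)) l (𝓝 (g y)) := by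
    filter_upwards [h_lim] with y hy
    have hnonneg : ∀ᶠ i in l, 0 ≤ y + c i :=
      (tendsto_atTop_add_const_left l y hc).eventually_ge_atTop 0
    refine (hy _ (tendsto_mul_floor_div_sub hδ hc y)).congr' ?_
    filter_upwards [hδ_pos, hnonneg] with i hi hyi
    have hmem : (y + c i) / δ i ∈ Ici 0 := div_nonneg hyi (le_of_lt hi)
    rw [stepExtension, indicator_of_mem hmem]
  refine (tendsto_integral_filter_of_dominated_convergence _ (.of_forall hmeas)
    (hdom.mono fun i hi ↦ ae_of_all _ hi) bound_integrable.abs hlim).congr' ?_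
  filter_upwards [hδ_pos, hdom] with i hi hb
  exact (smul_tsum_eq_integral_stepExtension hi
    (bound_integrable.abs.mono' (hmeas i) (ae_of_all _ hb))).symm

end RiemannSum

section BlockSummation

variable {k : ℕ → ℕ}

lemma hasSum_sum_Ico_iff {f : ℕ → ℝ} (hf : ∀ n, 0 ≤ f n) (hk : StrictMono k) (hk0 : k 0 = 0)
    {S : ℝ} : HasSum (fun m ↦ ∑ n ∈ Finset.Ico (k m) (k (m + 1)), f n) S ↔ HasSum f S := by
  have htelescope (M : ℕ) : ∑ m ∈ Finset.range M, ∑ n ∈ Finset.Ico (k m) (k (m + 1)), f n =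
      ∑ n ∈ Finset.range (k M), f n := by
    induction M with
    | zero => simp [hk0]
    | succ M ih =>
      rw [Finset.sum_range_succ, ih, Finset.sum_range_add_sum_Ico f (hk.monotone M.le_succ)]
  have hmono : Monotone fun N ↦ ∑ n ∈ Finset.range N, f n := fun _ _ hab ↦
    Finset.sum_le_sum_of_subset_of_nonneg (Finset.range_mono hab) fun n _ _ ↦ hf n
  rw [hasSum_iff_tendsto_nat_of_nonneg hf,
    hasSum_iff_tendsto_nat_of_nonneg fun m ↦ Finset.sum_nonneg fun n _ ↦ hf n,
    tendsto_iff_tendsto_subseq_of_monotone hmono hk.tendsto_atTop]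
  simp only [htelescope, Function.comp_def]

lemma exists_mem_Ico_of_strictMono (hk : StrictMono k) (hk0 : k 0 = 0) (n : ℕ) :
    ∃ m, n ∈ Ico (k m) (k (m + 1)) := by
  have hcover := iUnion_Ico_map_succ_eq_Ici (f := k) (fun m ↦ hk.monotone m.zero_le)
    (not_bddAbove_of_tendsto_atTop hk.tendsto_atTop)
  have hn : n ∈ ⋃ m, Ico (k m) (k (Order.succ m)) := by
    rw [hcover, Nat.bot_eq_zero, hk0]
    exact n.zero_le
  simpa only [mem_iUnion, Order.succ_eq_add_one] using hn

lemma tsum_mul_pow_of_eqOn_Ico {A a : ℕ → ℝ} {q : ℝ} (hk : StrictMono k) (hk0 : k 0 = 0)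
    (hA : ∀ m, ∀ n ∈ Ico (k m) (k (m + 1)), A n = a m) (ha : ∀ m, 0 ≤ a m)
    (hq0 : 0 ≤ q) (hq1 : q < 1) :
    ∑' n, A n * q ^ n = (∑' m, a m * (q ^ k m - q ^ k (m + 1))) / (1 - q) := by
  have hnonneg (n : ℕ) : 0 ≤ A n * q ^ n := by
    obtain ⟨m, hm⟩ := exists_mem_Ico_of_strictMono hk hk0 n
    exact mul_nonneg (hA m n hm ▸ ha m) (pow_nonneg hq0 n)
  have hblock (m : ℕ) : ∑ n ∈ Finset.Ico (k m) (k (m + 1)), A n * q ^ n =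
      a m * (q ^ k m - q ^ k (m + 1)) / (1 - q) := by
    rw [mul_div_assoc, ← geom_sum_Ico' hq1.ne (hk.monotone m.le_succ), Finset.mul_sum]
    exact Finset.sum_congr rfl fun n hn ↦ by rw [hA m n (Finset.mem_Ico.1 hn)]
  rw [← tsum_div_const, ← tsum_eq_tsum_of_hasSum_iff_hasSum (hasSum_sum_Ico_iff hnonneg hk hk0)]
  exact tsum_congr hblock

end BlockSummation

lemma tendsto_div_one_sub_exp_neg :
    Tendsto (fun t : ℝ ↦ t / (1 - Real.exp (-t))) (𝓝[>] 0) (𝓝 1) := by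
  have hderiv : HasDerivAt (fun t : ℝ ↦ 1 - Real.exp (-t)) 1 0 := by
    simpa using ((hasDerivAt_neg (0 : ℝ)).exp).const_sub 1
  have hslope := (hasDerivAt_iff_tendsto_slope.1 hderiv).mono_left (nhdsGT_le_nhdsNE 0)
  simpa [slope_def_field] using hslope.inv₀ one_ne_zero

lemma map_pow_nhdsGT_zero {n : ℕ} (hn : n ≠ 0) :
    map (fun s : ℝ ↦ s ^ n) (𝓝[>] 0) = 𝓝[>] 0 := by
  have hn' : (0 : ℝ) < (n : ℝ)⁻¹ := by positivity
  have hpow : Tendsto (fun s : ℝ ↦ s ^ n) (𝓝[>] 0) (𝓝[>] 0) := by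
    have hcont : ContinuousWithinAt (fun s : ℝ ↦ s ^ n) (Ioi 0) 0 := by fun_prop
    simpa [hn] using hcont.tendsto_nhdsWithin (t := Ioi 0) fun s hs ↦ pow_pos hs n
  have hroot : Tendsto (fun t : ℝ ↦ t ^ (n : ℝ)⁻¹) (𝓝[>] 0) (𝓝[>] 0) := by
    have hcont : ContinuousWithinAt (fun t : ℝ ↦ t ^ (n : ℝ)⁻¹) (Ioi 0) 0 :=
      (Real.continuousAt_rpow_const 0 _ (.inr hn'.le)).continuousWithinAt
    simpa [Real.zero_rpow hn'.ne'] using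
      hcont.tendsto_nhdsWithin (t := Ioi 0) fun t ht ↦ Real.rpow_pos_of_pos ht _
  have hinv : (fun s : ℝ ↦ s ^ n) ∘ (fun t : ℝ ↦ t ^ (n : ℝ)⁻¹) =ᶠ[𝓝[>] 0] id := by
    filter_upwards [self_mem_nhdsWithin] with t ht using
      Real.rpow_inv_natCast_pow (le_of_lt ht) hn
  refine le_antisymm hpow ?_
  calc 𝓝[>] (0 : ℝ) = map (fun s ↦ s ^ n) (map (fun t ↦ t ^ (n : ℝ)⁻¹) (𝓝[>] 0)) := by
        rw [map_map, map_congr hinv, map_id]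
    _ ≤ map (fun s ↦ s ^ n) (𝓝[>] 0) := map_mono hroot

lemma one_add_abs_mul_exp_neg_sq_le {d y : ℝ} (h : |y - d| ≤ 1) :
    (1 + |d|) * Real.exp (-d ^ 2) ≤ Real.exp 1 * Real.exp (-(1 / 4) * y ^ 2) := by
  have hexponent : |d| - d ^ 2 ≤ 1 + -(1 / 4) * y ^ 2 := by
    have hsq : (y - d) ^ 2 ≤ 1 := (sq_le_one_iff_abs_le_one _).2 h
    nlinarith [sq_abs d, sq_nonneg (|d| - 1), sq_nonneg (y - 2 * d)]
  calc (1 + |d|) * Real.exp (-d ^ 2) ≤ Real.exp |d| * Real.exp (-d ^ 2) := by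
        gcongr
        linarith [Real.add_one_le_exp |d|]
    _ = Real.exp (|d| - d ^ 2) := by rw [← Real.exp_add, sub_eq_add_neg]
    _ ≤ Real.exp (1 + -(1 / 4) * y ^ 2) := Real.exp_le_exp.2 hexponent
    _ = Real.exp 1 * Real.exp (-(1 / 4) * y ^ 2) := Real.exp_add _ _

section AvakumovicKaramata

/-- The common value of the Avakumović–Karamata coefficients on the block
`m ^ 3 ≤ n < (m + 1) ^ 3`. The convention `0 ^ (-1/4) = 0` gives the correct value `0` on the block
`m = 0`, which consists of `n = 0` alone. -/
noncomputable def akCoeff (m : ℕ) : ℝ :=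
  Real.exp (2 * (m : ℝ) ^ ((3 : ℝ) / 2)) * (m : ℝ) ^ (-(1 / 4) : ℝ)

/-- The contribution of the `m`-th block to `(1 - q) F(q)` at `q = exp (-s ^ 6)`, normalized by the
factor `s * exp (1 / s ^ 6)` so that it stays bounded near the saddle point. -/
noncomputable def akBlock (s : ℝ) (m : ℕ) : ℝ :=
  s⁻¹ * Real.exp (-(1 / s ^ 6)) *
    (akCoeff m * (Real.exp (-s ^ 6) ^ m ^ 3 - Real.exp (-s ^ 6) ^ (m + 1) ^ 3))

/-- The square root of the ratio of `m` to the saddle point `s⁻¹ ^ 4`. -/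
noncomputable def saddleRatio (s : ℝ) (m : ℕ) : ℝ := s ^ 2 * √m

variable {s : ℝ}

lemma akCoeff_zero : akCoeff 0 = 0 := by
  simp [akCoeff, Real.zero_rpow]

lemma akCoeff_nonneg (m : ℕ) : 0 ≤ akCoeff m := by
  unfold akCoeff
  positivity

lemma akCoeff_eq (m : ℕ) : akCoeff m = Real.exp (2 * √m ^ 3) * (√√m)⁻¹ := by
  have hm : (0 : ℝ) ≤ m := m.cast_nonneg
  have hthreehalves : (m : ℝ) ^ ((3 : ℝ) / 2) = √m ^ 3 := by
    rw [Real.sqrt_eq_rpow, ← Real.rpow_natCast, ← Real.rpow_mul hm]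
    norm_num
  have hquarter : (m : ℝ) ^ (-(1 / 4) : ℝ) = (√√m)⁻¹ := by
    rw [Real.sqrt_eq_rpow, Real.sqrt_eq_rpow, ← Real.rpow_mul hm, Real.rpow_neg hm]
    norm_num
  rw [akCoeff, hthreehalves, hquarter]

lemma saddleRatio_nonneg (s : ℝ) (m : ℕ) : 0 ≤ saddleRatio s m := by
  unfold saddleRatio
  positivity

lemma saddleRatio_sq (s : ℝ) (m : ℕ) : saddleRatio s m ^ 2 = s ^ 4 * m := by
  rw [saddleRatio, mul_pow, Real.sq_sqrt m.cast_nonneg]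
  ring

lemma saddleRatio_sq_sub_one_div (hs : s ≠ 0) (m : ℕ) :
    (saddleRatio s m ^ 2 - 1) / s ^ 3 = s * m - (s ^ 3)⁻¹ := by
  rw [saddleRatio_sq]
  field_simp

/-- Completing the square in the exponent `2 m ^ (3/2) - s ^ 6 m ^ 3`. -/
lemma akBlock_eq (hs : 0 < s) (m : ℕ) :
    akBlock s m = (√(saddleRatio s m))⁻¹ *
      Real.exp (-((saddleRatio s m ^ 3 - 1) / s ^ 3) ^ 2) *
      (1 - Real.exp (-(s ^ 6 * ((m + 1) ^ 3 - m ^ 3)))) := by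
  have hsquare : -((saddleRatio s m ^ 3 - 1) / s ^ 3) ^ 2 =
      -(1 / s ^ 6) + 2 * √m ^ 3 + m ^ 3 * -s ^ 6 := by
    have hcube : (m : ℝ) ^ 3 = (√m ^ 3) ^ 2 := by
      rw [pow_right_comm, Real.sq_sqrt m.cast_nonneg]
    rw [hcube, saddleRatio]
    field_simp
    ring
  have hsqrt : √(saddleRatio s m) = s * √√m := by
    rw [saddleRatio, Real.sqrt_mul (sq_nonneg s), Real.sqrt_sq hs.le]
  have hdiff : Real.exp (-s ^ 6) ^ m ^ 3 - Real.exp (-s ^ 6) ^ (m + 1) ^ 3 =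
      Real.exp (m ^ 3 * -s ^ 6) * (1 - Real.exp (-(s ^ 6 * ((m + 1) ^ 3 - m ^ 3)))) := by
    rw [← Real.exp_nat_mul, ← Real.exp_nat_mul, mul_sub, mul_one, ← Real.exp_add]
    push_cast
    ring_nf
  rw [akBlock, akCoeff_eq, hdiff, hsqrt, hsquare, Real.exp_add, Real.exp_add, mul_inv]
  ring

lemma sq_le_cube_succ_sub_cube (m : ℕ) : (m : ℝ) ^ 2 ≤ (m + 1) ^ 3 - m ^ 3 := by
  nlinarith [m.cast_nonneg (α := ℝ)]

lemma inv_sqrt_saddleRatio_le (hs : 0 < s) (hs1 : s ≤ 1) (m : ℕ) :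
    (√(saddleRatio s m))⁻¹ ≤ 2 * (1 + |s * m - (s ^ 3)⁻¹|) := by
  rcases Nat.eq_zero_or_pos m with rfl | hm
  · simp only [saddleRatio, Nat.cast_zero, Real.sqrt_zero, mul_zero, inv_zero]
    positivity
  rcases le_total (1 / 4) (saddleRatio s m) with hlarge | hsmall
  · have hsqrt : (1 / 2 : ℝ) ≤ √(saddleRatio s m) := Real.le_sqrt_of_sq_le (by linarith)
    calc (√(saddleRatio s m))⁻¹ ≤ (1 / 2 : ℝ)⁻¹ := inv_anti₀ (by norm_num) hsqrt
      _ ≤ 2 * (1 + |s * m - (s ^ 3)⁻¹|) := by linarith [abs_nonneg (s * m - (s ^ 3)⁻¹)]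
  · have hsqrt : s ≤ √(saddleRatio s m) := by
      refine Real.le_sqrt_of_sq_le (le_mul_of_one_le_right (sq_nonneg s) ?_)
      exact Real.one_le_sqrt.2 (by exact_mod_cast hm)
    have hfar : s * m - (s ^ 3)⁻¹ ≤ -(1 / 2) * (s ^ 3)⁻¹ := by
      rw [← saddleRatio_sq_sub_one_div hs.ne', div_eq_mul_inv]
      gcongr
      nlinarith [saddleRatio_nonneg s m]
    calc (√(saddleRatio s m))⁻¹ ≤ s⁻¹ := inv_anti₀ hs hsqrt
      _ ≤ (s ^ 3)⁻¹ := inv_anti₀ (by positivity) (pow_le_of_le_one hs.le hs1 (by norm_num))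
      _ ≤ 2 * (1 + |s * m - (s ^ 3)⁻¹|) := by linarith [neg_abs_le (s * m - (s ^ 3)⁻¹)]

lemma sq_sub_one_sq_le_cube_sub_one_sq {w : ℝ} (hw : 0 ≤ w) :
    (w ^ 2 - 1) ^ 2 ≤ (w ^ 3 - 1) ^ 2 := by
  calc (w ^ 2 - 1) ^ 2 = ((w - 1) * (w + 1)) ^ 2 := by ring
    _ ≤ ((w - 1) * (w ^ 2 + w + 1)) ^ 2 := by
        rw [mul_pow, mul_pow]
        gcongr
        nlinarith
    _ = (w ^ 3 - 1) ^ 2 := by ring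

lemma norm_akBlock_le (hs : 0 < s) (hs1 : s ≤ 1) {m : ℕ} {y : ℝ}
    (hy : |y - (s * m - (s ^ 3)⁻¹)| ≤ s) :
    ‖akBlock s m‖ ≤ 2 * Real.exp 1 * Real.exp (-(1 / 4) * y ^ 2) := by
  have hgap : 0 ≤ s ^ 6 * ((m + 1) ^ 3 - (m : ℝ) ^ 3) :=
    mul_nonneg (by positivity) ((sq_nonneg _).trans (sq_le_cube_succ_sub_cube m))
  have hfactor : ‖1 - Real.exp (-(s ^ 6 * ((m + 1) ^ 3 - (m : ℝ) ^ 3)))‖ ≤ 1 := by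
    rw [Real.norm_of_nonneg (sub_nonneg.2 (Real.exp_le_one_iff.2 (neg_nonpos.2 hgap)))]
    exact sub_le_self _ (Real.exp_pos _).le
  have hexp : Real.exp (-((saddleRatio s m ^ 3 - 1) / s ^ 3) ^ 2) ≤
      Real.exp (-(s * m - (s ^ 3)⁻¹) ^ 2) := by
    rw [← saddleRatio_sq_sub_one_div hs.ne', div_pow, div_pow]
    gcongr Real.exp (-(?_ / _))
    exact sq_sub_one_sq_le_cube_sub_one_sq (saddleRatio_nonneg s m)
  rw [akBlock_eq hs, norm_mul, norm_mul, Real.norm_of_nonneg (by positivity), Real.norm_eq_abs,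
    Real.abs_exp]
  calc _ ≤ (√(saddleRatio s m))⁻¹ * Real.exp (-((saddleRatio s m ^ 3 - 1) / s ^ 3) ^ 2) :=
        mul_le_of_le_one_right (by positivity) hfactor
    _ ≤ 2 * (1 + |s * m - (s ^ 3)⁻¹|) * Real.exp (-(s * m - (s ^ 3)⁻¹) ^ 2) :=
        mul_le_mul (inv_sqrt_saddleRatio_le hs hs1 m) hexp (by positivity) (by positivity)
    _ ≤ 2 * Real.exp 1 * Real.exp (-(1 / 4) * y ^ 2) := by
        linarith [one_add_abs_mul_exp_neg_sq_le (hy.trans hs1)]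

section Limit

variable {y : ℝ} {m : ℝ → ℕ}

lemma tendsto_saddleRatio (hm : Tendsto (fun s ↦ s * m s - (s ^ 3)⁻¹) (𝓝[>] 0) (𝓝 y)) :
    Tendsto (fun s ↦ saddleRatio s (m s)) (𝓝[>] 0) (𝓝 1) := by
  have hs : Tendsto (fun s : ℝ ↦ s) (𝓝[>] 0) (𝓝 0) := nhdsWithin_le_nhds
  have hsq : Tendsto (fun s ↦ saddleRatio s (m s) ^ 2) (𝓝[>] 0) (𝓝 1) := by
    have hlin : Tendsto (fun s ↦ 1 + s ^ 3 * (s * m s - (s ^ 3)⁻¹)) (𝓝[>] 0) (𝓝 1) := by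
      simpa using ((hs.pow 3).mul hm).const_add 1
    refine hlin.congr' ?_
    filter_upwards [self_mem_nhdsWithin] with s hs
    rw [← saddleRatio_sq_sub_one_div (ne_of_gt hs), mul_div_cancel₀ _ (pow_ne_zero 3 (ne_of_gt hs))]
    ring
  simpa [Real.sqrt_sq (saddleRatio_nonneg _ _)] using hsq.sqrt

lemma tendsto_saddleRatio_cube_sub_one_div
    (hm : Tendsto (fun s ↦ s * m s - (s ^ 3)⁻¹) (𝓝[>] 0) (𝓝 y)) :
    Tendsto (fun s ↦ (saddleRatio s (m s) ^ 3 - 1) / s ^ 3) (𝓝[>] 0) (𝓝 (3 / 2 * y)) := by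
  have hw := tendsto_saddleRatio hm
  have hquot : Tendsto (fun s ↦ (saddleRatio s (m s) ^ 2 + saddleRatio s (m s) + 1) /
      (saddleRatio s (m s) + 1)) (𝓝[>] 0) (𝓝 (3 / 2)) := by
    have hdiv := (((hw.pow 2).add hw).add_const 1).div (hw.add_const 1) (by norm_num)
    rwa [show ((1 : ℝ) ^ 2 + 1 + 1) / (1 + 1) = 3 / 2 by norm_num] at hdiv
  refine (hquot.mul hm).congr' ?_
  filter_upwards [self_mem_nhdsWithin] with s hs
  have hpos := add_pos_of_nonneg_of_pos (saddleRatio_nonneg s (m s)) one_pos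
  rw [← saddleRatio_sq_sub_one_div (ne_of_gt hs)]
  field_simp
  ring

lemma tendsto_pow_mul_cube_succ_sub_cube
    (hm : Tendsto (fun s ↦ s * m s - (s ^ 3)⁻¹) (𝓝[>] 0) (𝓝 y)) :
    Tendsto (fun s ↦ s ^ 6 * ((m s + 1) ^ 3 - (m s : ℝ) ^ 3)) (𝓝[>] 0) atTop := by
  have hinv : Tendsto (fun s : ℝ ↦ s⁻¹ ^ 2) (𝓝[>] 0) atTop :=
    (tendsto_pow_atTop two_ne_zero).comp tendsto_inv_nhdsGT_zero
  refine tendsto_atTop_mono' _ ?_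
    (((tendsto_saddleRatio hm).pow 4).pos_mul_atTop (by norm_num) hinv)
  filter_upwards [self_mem_nhdsWithin] with s hs
  calc saddleRatio s (m s) ^ 4 * s⁻¹ ^ 2 = (saddleRatio s (m s) ^ 2) ^ 2 * s⁻¹ ^ 2 := by ring
    _ = s ^ 6 * (m s : ℝ) ^ 2 := by
        have hs0 : s ≠ 0 := ne_of_gt hs
        rw [saddleRatio_sq]
        field_simp
    _ ≤ s ^ 6 * ((m s + 1) ^ 3 - (m s : ℝ) ^ 3) :=
        mul_le_mul_of_nonneg_left (sq_le_cube_succ_sub_cube _) (by positivity)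

lemma tendsto_akBlock (hm : Tendsto (fun s ↦ s * m s - (s ^ 3)⁻¹) (𝓝[>] 0) (𝓝 y)) :
    Tendsto (fun s ↦ akBlock s (m s)) (𝓝[>] 0) (𝓝 (Real.exp (-(3 / 2 * y) ^ 2))) := by
  have hweight : Tendsto (fun s ↦ (√(saddleRatio s (m s)))⁻¹) (𝓝[>] 0) (𝓝 1) := by
    simpa using (tendsto_saddleRatio hm).sqrt.inv₀ (by simp)
  have hgauss := ((tendsto_saddleRatio_cube_sub_one_div hm).pow 2).neg.rexp
  have hfactor : Tendsto
      (fun s ↦ 1 - Real.exp (-(s ^ 6 * ((m s + 1) ^ 3 - (m s : ℝ) ^ 3)))) (𝓝[>] 0) (𝓝 1) := by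
    simpa [Function.comp_def] using (Real.tendsto_exp_neg_atTop_nhds_zero.comp
      (tendsto_pow_mul_cube_succ_sub_cube hm)).const_sub 1
  have hlim := (hweight.mul hgauss).mul hfactor
  rw [one_mul, mul_one] at hlim
  refine hlim.congr' ?_
  filter_upwards [self_mem_nhdsWithin] with s hs using (akBlock_eq hs (m s)).symm

end Limit

theorem tendsto_mul_tsum_akBlock :
    Tendsto (fun s ↦ s * ∑' m, akBlock s m) (𝓝[>] 0) (𝓝 (2 * √Real.pi / 3)) := by
  have hcentre : Tendsto (fun s : ℝ ↦ (s ^ 3)⁻¹) (𝓝[>] 0) atTop := by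
    simpa [Function.comp_def] using
      (tendsto_pow_atTop (α := ℝ) three_ne_zero).comp tendsto_inv_nhdsGT_zero
  have hgauss : ∫ y : ℝ, Real.exp (-(3 / 2 * y) ^ 2) = 2 * √Real.pi / 3 := by
    rw [Measure.integral_comp_mul_left fun x ↦ Real.exp (-x ^ 2)]
    have hunit : ∫ x : ℝ, Real.exp (-x ^ 2) = √Real.pi := by simpa using integral_gaussian 1
    rw [hunit, smul_eq_mul, abs_of_pos (by norm_num)]
    ring
  rw [← hgauss]
  refine tendsto_smul_tsum_integral_of_dominated
    (fun y ↦ 2 * Real.exp 1 * Real.exp (-(1 / 4) * y ^ 2)) tendsto_id hcentre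
    ((integrable_exp_neg_mul_sq (by norm_num)).const_mul _) ?_
    (ae_of_all _ fun y m hm ↦ tendsto_akBlock hm)
  filter_upwards [Ioc_mem_nhdsGT (zero_lt_one (α := ℝ))] with s hs m y hy
  exact norm_akBlock_le hs.1 hs.2 hy

theorem tsum_mul_exp_eq_tsum_akBlock {A : ℕ → ℝ}
    (hA : ∀ m, ∀ n ∈ Ico (m ^ 3) ((m + 1) ^ 3), A n = akCoeff m) (hs : 0 < s) :
    ∑' n, A n * Real.exp (-s ^ 6 * n) =
      Real.exp (1 / s ^ 6) * (s * ∑' m, akBlock s m) / (1 - Real.exp (-s ^ 6)) := by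
  have hq : Real.exp (-s ^ 6) < 1 := Real.exp_lt_one_iff.2 (neg_neg_of_pos (by positivity))
  have hpow (n : ℕ) : Real.exp (-s ^ 6 * n) = Real.exp (-s ^ 6) ^ n := by
    rw [mul_comm, Real.exp_nat_mul]
  have hnorm : Real.exp (1 / s ^ 6) * (s * (s⁻¹ * Real.exp (-(1 / s ^ 6)))) = 1 := by
    rw [mul_inv_cancel_left₀ hs.ne', ← Real.exp_add, add_neg_cancel, Real.exp_zero]
  simp only [hpow]
  rw [tsum_mul_pow_of_eqOn_Ico (Nat.pow_left_strictMono three_ne_zero) (by norm_num) hA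
    akCoeff_nonneg (Real.exp_pos _).le hq]
  simp only [akBlock, tsum_mul_left]
  rw [← mul_assoc s, ← mul_assoc (Real.exp (1 / s ^ 6)), hnorm, one_mul]

end AvakumovicKaramata

/-- For the Avakumović–Karamata coefficients `A(0) = 0`,
`A(n) = e^{2m^{3/2}} m^{-1/4}` for `m³ ≤ n < (m+1)³` (`m ≥ 1`), the generating function
satisfies `F(e^{-t}) ~ (2√π/3) e^{1/t}/t` as `t → 0⁺`. -/
theorem AK_generating_function_asymptotic (A : ℕ → ℝ) (hA0 : A 0 = 0)
    (hA : ∀ m n : ℕ, 1 ≤ m → m ^ 3 ≤ n → n < (m + 1) ^ 3 →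
      A n = Real.exp (2 * (m:ℝ) ^ ((3:ℝ)/2)) * (m:ℝ) ^ (-(1/4) : ℝ)) :
    Tendsto (fun t : ℝ => (∑' n : ℕ, A n * Real.exp (-t * n)) /
        (2 * Real.sqrt Real.pi / 3 * Real.exp (1/t) / t)) (𝓝[>] (0:ℝ)) (𝓝 1) := by
  have hblocks : ∀ m, ∀ n ∈ Ico (m ^ 3) ((m + 1) ^ 3), A n = akCoeff m := by
    rintro (_ | m) n ⟨hmn, hnm⟩
    · obtain rfl : n = 0 := by simpa using hnm
      rw [hA0, akCoeff_zero]
    · exact hA (m + 1) n m.succ_pos hmn hnm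
  have hmap : map (fun s : ℝ ↦ s ^ 6) (𝓝[>] 0) = 𝓝[>] 0 := map_pow_nhdsGT_zero (by norm_num)
  rw [← hmap, tendsto_map'_iff]
  have hconst : 2 * √Real.pi / 3 ≠ 0 := by positivity
  have hlim := (tendsto_div_one_sub_exp_neg.comp hmap.le).mul
    (tendsto_mul_tsum_akBlock.div_const (2 * √Real.pi / 3))
  rw [div_self hconst, one_mul] at hlim
  refine hlim.congr' ?_
  filter_upwards [self_mem_nhdsWithin] with s hs
  simp only [Function.comp_apply]
  rw [tsum_mul_exp_eq_tsum_akBlock hblocks hs]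
  field_simp
end

section
/- As t \to 0^+, \sum_{m \ge 1} m^{-1/4} e^{2 m^{3/2} - m^3 t} \sim \frac{2\sqrt{\pi}}{3} e^{1/t}. -/
open Filter Topology Set

open MeasureTheory

/-!
At `x = t ^ (-1/p) * (1 + √t * z)` the exponent `2 * x ^ p - x ^ (2 * p) * t` is
`1 / t - (((1 + √t * z) ^ p - 1) / √t) ^ 2`. So, up to explicit powers of `t`, the sum is
`exp (1 / t)` times a Riemann sum in `z`, whose mesh `t ^ (1/p - 1/2)` vanishes as `t → 0⁺` because
`p < 2`. The summands tend to the Gaussian `exp (-(p * z) ^ 2)` and, since `|q ^ p - 1| ≥ |q - 1|`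
for `1 ≤ p`, they are dominated by a fixed Gaussian: the Riemann sums tend to
`∫ exp (-(p * z) ^ 2) = √π / p`.
-/

section RiemannSum

variable {E : Type*} [NormedAddCommGroup E]

/-- The left endpoint of the cell `[a + n * h, a + (n + 1) * h)`, `n : ℕ`, that contains `y`;
meaningful for `0 < h` and `a ≤ y`. -/
noncomputable def leftNode (a h y : ℝ) : ℝ :=
  a + h * ⌊(y - a) / h⌋₊

/-- The step function on the grid `a + h * ℕ` that samples `K` at left endpoints, extended by `0`
to the left of `a`. Its integral is a Riemann sum with infinitely many terms. -/
noncomputable def leftStep (K : ℝ → E) (a h : ℝ) : ℝ → E :=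
  (Ici a).indicator fun y => K (leftNode a h y)

lemma le_leftNode {a h : ℝ} (hh : 0 ≤ h) (y : ℝ) : a ≤ leftNode a h y :=
  le_add_of_nonneg_right (mul_nonneg hh (Nat.cast_nonneg _))

lemma abs_leftNode_sub_le {a h y : ℝ} (hh : 0 < h) (hy : a ≤ y) : |leftNode a h y - y| ≤ h := by
  have hle := (le_div_iff₀ hh).1 (Nat.floor_le (div_nonneg (sub_nonneg.2 hy) hh.le))
  have hlt := (div_lt_iff₀ hh).1 (Nat.lt_floor_add_one ((y - a) / h))
  rw [leftNode, abs_le]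
  constructor <;> linarith

lemma stronglyMeasurable_leftStep (K : ℝ → E) (a h : ℝ) : StronglyMeasurable (leftStep K a h) :=
  ((StronglyMeasurable.of_discrete (f := fun n : ℕ => K (a + h * n))).comp_measurable
    (Nat.measurable_floor.comp (by fun_prop))).indicator measurableSet_Ici

lemma norm_leftStep_le {K : ℝ → E} {bound : ℝ → ℝ} {a h : ℝ} (hh : 0 < h)
    (h_bound : ∀ y z, a ≤ z → |z - y| ≤ h → ‖K z‖ ≤ bound y) (y : ℝ) :
    ‖leftStep K a h y‖ ≤ ‖bound y‖ := by
  by_cases hy : a ≤ y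
  · rw [leftStep, indicator_of_mem (mem_Ici.2 hy)]
    exact (h_bound y _ (le_leftNode hh.le y) (abs_leftNode_sub_le hh hy)).trans (le_abs_self _)
  · rw [leftStep, indicator_of_notMem (notMem_Ici.2 (not_le.1 hy)), norm_zero]
    exact norm_nonneg _

lemma tendsto_leftStep {ι : Type*} {l : Filter ι} {K : ι → ℝ → E} {c : E} {a h : ι → ℝ} {y : ℝ}
    (ha : Tendsto a l atBot) (hh : Tendsto h l (𝓝[>] 0))
    (h_lim : ∀ z : ι → ℝ, Tendsto z l (𝓝 y) → Tendsto (fun i => K i (z i)) l (𝓝 c)) :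
    Tendsto (fun i => leftStep (K i) (a i) (h i) y) l (𝓝 c) := by
  have hy : ∀ᶠ i in l, a i ≤ y := ha.eventually_le_atBot y
  have hnode : Tendsto (fun i => leftNode (a i) (h i) y) l (𝓝 y) := by
    rw [tendsto_iff_dist_tendsto_zero]
    refine squeeze_zero' (.of_forall fun _ => dist_nonneg) ?_ (hh.mono_right nhdsWithin_le_nhds)
    filter_upwards [hh.eventually self_mem_nhdsWithin, hy] with i hi hyi
      using abs_leftNode_sub_le hi hyi
  refine (h_lim _ hnode).congr' ?_
  filter_upwards [hy] with i hyi
  rw [leftStep, indicator_of_mem (mem_Ici.2 hyi)]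

variable [NormedSpace ℝ E] [CompleteSpace E]

lemma hasSum_smul_integral_floor {a h : ℝ} (hh : 0 < h) {g : ℕ → E}
    (hg : IntegrableOn (fun y => g ⌊(y - a) / h⌋₊) (Ici a)) :
    HasSum (fun n => h • g n) (∫ y in Ici a, g ⌊(y - a) / h⌋₊) := by
  set node : ℕ → ℝ := fun n => a + h * n with hnode
  have hmono : Monotone node := fun m n hmn => by simp only [hnode]; gcongr
  have htop : Tendsto node atTop atTop :=
    tendsto_atTop_add_const_left _ a (tendsto_natCast_atTop_atTop.const_mul_atTop hh)
  have hcells : ⋃ n, Ico (node n) (node (n + 1)) = Ici a := by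
    have := iUnion_Ico_map_succ_eq_Ici (f := node) (fun n => hmono n.zero_le)
      (not_bddAbove_of_tendsto_atTop htop)
    simpa [hnode] using this
  have hfloor (n : ℕ) : ∀ y ∈ Ico (node n) (node (n + 1)), ⌊(y - a) / h⌋₊ = n := by
    rintro y ⟨hle, hlt⟩
    refine Nat.floor_eq_on_Ico n _ ⟨(le_div_iff₀ hh).2 ?_, (div_lt_iff₀ hh).2 ?_⟩
    · linarith
    · push_cast [hnode] at hlt
      linarith
  have hcell (n : ℕ) : ∫ y in Ico (node n) (node (n + 1)), g ⌊(y - a) / h⌋₊ = h • g n := by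
    rw [setIntegral_congr_fun (g := fun _ => g n) measurableSet_Ico fun y hy =>
      congrArg g (hfloor n y hy), setIntegral_const, Real.volume_real_Ico_of_le (hmono n.le_succ)]
    congr 1
    push_cast [hnode]
    ring
  have hsum := hasSum_integral_iUnion (μ := volume) (fun _ => measurableSet_Ico)
    hmono.pairwise_disjoint_on_Ico_succ (hcells ▸ hg)
  simpa only [Nat.succ_eq_succ, Nat.succ_eq_add_one, hcells, hcell] using hsum

lemma integral_leftStep {K : ℝ → E} {a h : ℝ} (hh : 0 < h)
    (hK : Integrable (leftStep K a h)) :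
    ∫ y, leftStep K a h y = h • ∑' n : ℕ, K (a + h * n) := by
  rw [leftStep, integral_indicator measurableSet_Ici, ← tsum_const_smul'' h]
  exact (hasSum_smul_integral_floor hh (g := fun n => K (a + h * n))
    ((integrable_indicator_iff measurableSet_Ici).1 hK)).tsum_eq.symm

theorem tendsto_smul_tsum_integral_of_dominated_s13 {ι : Type*} {l : Filter ι} [l.IsCountablyGenerated]
    {K : ι → ℝ → E} {φ : ℝ → E} {bound : ℝ → ℝ} {a h : ι → ℝ}
    (ha : Tendsto a l atBot) (hh : Tendsto h l (𝓝[>] 0)) (h_int : Integrable bound)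
    (h_bound : ∀ᶠ i in l, ∀ y z, a i ≤ z → |z - y| ≤ h i → ‖K i z‖ ≤ bound y)
    (h_lim : ∀ (y : ℝ) (z : ι → ℝ), Tendsto z l (𝓝 y) →
      Tendsto (fun i => K i (z i)) l (𝓝 (φ y))) :
    Tendsto (fun i => h i • ∑' n : ℕ, K i (a i + h i * n)) l (𝓝 (∫ y, φ y)) := by
  have hpos : ∀ᶠ i in l, 0 < h i := hh.eventually self_mem_nhdsWithin
  have hmeas (i : ι) : AEStronglyMeasurable (leftStep (K i) (a i) (h i)) :=
    (stronglyMeasurable_leftStep _ _ _).aestronglyMeasurable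
  have hdom : ∀ᶠ i in l, ∀ y, ‖leftStep (K i) (a i) (h i) y‖ ≤ ‖bound y‖ := by
    filter_upwards [hpos, h_bound] with i hi hb using norm_leftStep_le hi hb
  refine (tendsto_integral_filter_of_dominated_convergence _ (.of_forall hmeas)
    (hdom.mono fun i hd => .of_forall hd) h_int.norm
    (.of_forall fun y => tendsto_leftStep ha hh (h_lim y))).congr' ?_
  filter_upwards [hpos, hdom] with i hi hd
  exact integral_leftStep hi (h_int.norm.mono' (hmeas i) (.of_forall hd))

end RiemannSum

section RescaledSummand

variable {p α ε z : ℝ}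

/-- The summand `x ^ α * exp (2 * x ^ p - x ^ (2 * p) * ε ^ 2)` at `x = ε ^ (-2/p) * (1 + ε * z)`,
divided by its value at `z = 0`. The parameter `ε` stands for `√t`, and the exponent is largest at
`z = 0`. -/
noncomputable def rescaledSummand (p α ε z : ℝ) : ℝ :=
  (1 + ε * z) ^ α * Real.exp (-(((1 + ε * z) ^ p - 1) / ε) ^ 2)

lemma rpow_mul_exp_eq_mul_rescaledSummand (hp : p ≠ 0) (hε : 0 < ε) (hz : 0 < 1 + ε * z)
    {x : ℝ} (hx : x = ε ^ (-2 / p) * (1 + ε * z)) :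
    x ^ α * Real.exp (2 * x ^ p - x ^ (2 * p) * ε ^ 2) =
      ε ^ (-2 * α / p) * Real.exp (1 / ε ^ 2) * rescaledSummand p α ε z := by
  have hscale (b : ℝ) : x ^ b = ε ^ (-2 * b / p) * (1 + ε * z) ^ b := by
    rw [hx, Real.mul_rpow (by positivity) hz.le, ← Real.rpow_mul hε.le]
    ring_nf
  have hpow : x ^ p = (1 + ε * z) ^ p / ε ^ 2 := by
    rw [hscale, mul_div_cancel_right₀ _ hp, Real.rpow_neg hε.le, Real.rpow_ofNat]
    ring
  have hsq : x ^ (2 * p) = (x ^ p) ^ 2 := by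
    rw [mul_comm, Real.rpow_mul (by rw [hx]; positivity), Real.rpow_ofNat]
  have hexponent : 2 * x ^ p - x ^ (2 * p) * ε ^ 2 =
      1 / ε ^ 2 + -(((1 + ε * z) ^ p - 1) / ε) ^ 2 := by
    rw [hsq, hpow]
    field_simp
    ring
  rw [hexponent, Real.exp_add, hscale, rescaledSummand]
  ring

lemma tendsto_rescaledSummand {ι : Type*} {l : Filter ι} {ε z : ι → ℝ} {y : ℝ}
    (hε : Tendsto ε l (𝓝[≠] 0)) (hz : Tendsto z l (𝓝 y)) :
    Tendsto (fun i => rescaledSummand p α (ε i) (z i)) l (𝓝 (Real.exp (-(p ^ 2) * y ^ 2))) := by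
  have hεz : Tendsto (fun i => ε i * z i) l (𝓝 0) := by
    simpa using (hε.mono_right nhdsWithin_le_nhds).mul hz
  have hweight : Tendsto (fun i => (1 + ε i * z i) ^ α) l (𝓝 1) := by
    have := (hεz.const_add 1).rpow_const (p := α) (by simp)
    simpa using this
  have hquot : Tendsto (fun i => ((1 + ε i * z i) ^ p - 1) / ε i) l (𝓝 (p * y)) := by
    have hderiv := (Real.hasDerivAt_rpow_const (x := 1) (p := p) (by simp)).hasFDerivAt
    have hcd : Tendsto (fun i => (ε i)⁻¹ • (ε i * z i)) l (𝓝 y) := by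
      refine hz.congr' ?_
      filter_upwards [hε.eventually self_mem_nhdsWithin] with i hi
      exact (inv_mul_cancel_left₀ hi _).symm
    have := (hasFDerivWithinAt_univ.2 hderiv).lim hεz (by simp) hcd
    simpa [div_eq_inv_mul, mul_comm] using this
  have := hweight.mul ((Real.continuous_exp.tendsto _).comp (hquot.pow 2).neg)
  simpa [rescaledSummand, mul_pow] using this

lemma abs_sub_one_le_abs_rpow_sub_one {q : ℝ} (hp : 1 ≤ p) (hq : 0 ≤ q) :
    |q - 1| ≤ |q ^ p - 1| := by
  rcases le_total q 1 with h | h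
  · have := Real.rpow_le_self_of_le_one hq h hp
    rw [abs_of_nonpos (by linarith), abs_of_nonpos (by linarith)]
    linarith
  · have := Real.self_le_rpow_of_one_le h hp
    rw [abs_of_nonneg (by linarith), abs_of_nonneg (by linarith)]
    linarith

lemma abs_log_one_add_mul_le (hε : 0 < ε) (hε1 : ε ≤ 1) (hz : ε ^ 2 ≤ 1 + ε * z) :
    |Real.log (1 + ε * z)| ≤ 4 * |z| + 1 := by
  have hq : 0 < 1 + ε * z := lt_of_lt_of_le (by positivity) hz
  have hεz : |ε * z| ≤ |z| := by
    rw [abs_mul, abs_of_pos hε]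
    exact mul_le_of_le_one_left (abs_nonneg z) hε1
  have hupper : Real.log (1 + ε * z) ≤ |z| := by
    linarith [Real.log_le_sub_one_of_pos hq, le_abs_self (ε * z)]
  have hlower : -(4 * |z| + 1) ≤ Real.log (1 + ε * z) := by
    rcases le_total (1 / 2) (1 + ε * z) with h | h
    · have hinv : (1 + ε * z)⁻¹ ≤ 2 := by simpa using inv_anti₀ (by norm_num) h
      linarith [Real.one_sub_inv_le_log_of_pos hq, abs_nonneg z]
    · have hinv : ε⁻¹ ≤ 2 * |z| := by
        rw [inv_le_iff_one_le_mul₀ hε]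
        nlinarith [neg_abs_le z]
      have hlog : 2 * Real.log ε ≤ Real.log (1 + ε * z) := by
        simpa using Real.log_le_log (by positivity) hz
      linarith [Real.one_sub_inv_le_log_of_pos hε]
  exact abs_le.2 ⟨hlower, hupper.trans (by linarith [abs_nonneg z])⟩

lemma rescaledSummand_nonneg (hz : 0 ≤ 1 + ε * z) : 0 ≤ rescaledSummand p α ε z :=
  mul_nonneg (Real.rpow_nonneg hz _) (Real.exp_pos _).le

lemma rescaledSummand_le (hp : 1 ≤ p) (hε : 0 < ε) (hε1 : ε ≤ 1) (hz : ε ^ 2 ≤ 1 + ε * z) :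
    rescaledSummand p α ε z ≤ Real.exp (|α| * (4 * |z| + 1) - z ^ 2) := by
  have hq : 0 < 1 + ε * z := lt_of_lt_of_le (by positivity) hz
  have hweight : (1 + ε * z) ^ α ≤ Real.exp (|α| * (4 * |z| + 1)) := by
    rw [Real.rpow_def_of_pos hq, mul_comm]
    refine Real.exp_le_exp.2 ?_
    calc α * Real.log (1 + ε * z) ≤ |α| * |Real.log (1 + ε * z)| := by
          rw [← abs_mul]
          exact le_abs_self _
      _ ≤ |α| * (4 * |z| + 1) :=
          mul_le_mul_of_nonneg_left (abs_log_one_add_mul_le hε hε1 hz) (abs_nonneg α)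
  have hquot : z ^ 2 ≤ (((1 + ε * z) ^ p - 1) / ε) ^ 2 := by
    rw [sq_le_sq, abs_div, abs_of_pos hε, le_div_iff₀ hε]
    simpa [abs_mul, abs_of_pos hε, mul_comm] using abs_sub_one_le_abs_rpow_sub_one hp hq.le
  rw [sub_eq_add_neg, Real.exp_add, rescaledSummand]
  gcongr

lemma rescaledSummand_le_gaussian {y : ℝ} (hp : 1 ≤ p) (hε : 0 < ε) (hε1 : ε ≤ 1)
    (hz : ε ^ 2 ≤ 1 + ε * z) (hzy : |z - y| ≤ 1) :
    rescaledSummand p α ε z ≤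
      Real.exp (|α| + 8 * α ^ 2 + 1 / 2) * Real.exp (-(1 / 4) * y ^ 2) := by
  refine (rescaledSummand_le hp hε hε1 hz).trans ?_
  rw [← Real.exp_add]
  gcongr
  have hy : y ^ 2 ≤ 2 * z ^ 2 + 2 := by
    nlinarith [(sq_le_one_iff_abs_le_one _).2 hzy, sq_nonneg (2 * z - y)]
  nlinarith [sq_nonneg (|z| - 4 * |α|), sq_abs z, sq_abs α]

-- In the coordinate `x = ε ^ (-2/p) * (1 + ε * z)` the hypothesis `hz` says `1 ≤ x`.
lemma sq_le_one_add_mul (hp : 1 ≤ p) (hε : 0 < ε) (hε1 : ε ≤ 1)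
    (hz : (ε ^ (2 / p) - 1) / ε ≤ z) : ε ^ 2 ≤ 1 + ε * z :=
  calc ε ^ 2 = ε ^ (2 : ℝ) := (Real.rpow_ofNat ε 2).symm
    _ ≤ ε ^ (2 / p) := Real.rpow_le_rpow_of_exponent_ge hε hε1 (div_le_self zero_le_two hp)
    _ ≤ 1 + ε * z := by linarith [(div_le_iff₀' hε).1 hz]

lemma tendsto_rpow_nhdsGT_zero {b : ℝ} (hb : 0 < b) :
    Tendsto (fun x : ℝ => x ^ b) (𝓝[>] 0) (𝓝[>] 0) := by
  have hzero : Tendsto (fun x : ℝ => x ^ b) (𝓝 0) (𝓝 0) := by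
    simpa [Real.zero_rpow hb.ne'] using (Real.continuousAt_rpow_const 0 b (.inr hb.le)).tendsto
  exact tendsto_nhdsWithin_iff.2 ⟨hzero.mono_left nhdsWithin_le_nhds,
    eventually_mem_nhdsWithin.mono fun _ hx => Real.rpow_pos_of_pos hx b⟩

lemma tendsto_mul_tsum_rescaledSummand (hp1 : 1 ≤ p) (hp2 : p < 2) :
    Tendsto (fun ε : ℝ => ε ^ (2 / p - 1) *
        ∑' n : ℕ, rescaledSummand p α ε ((ε ^ (2 / p) - 1) / ε + ε ^ (2 / p - 1) * n))
      (𝓝[>] 0) (𝓝 (√Real.pi / p)) := by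
  have hp : 0 < p := by linarith
  have hexp : 0 < 2 / p - 1 := by rw [sub_pos, lt_div_iff₀ hp]; linarith
  have hstart : Tendsto (fun ε : ℝ => (ε ^ (2 / p) - 1) / ε) (𝓝[>] 0) atBot := by
    have := tendsto_rpow_nhdsGT_zero (b := 2 / p) (by positivity)
    exact ((this.mono_right nhdsWithin_le_nhds).sub_const 1).neg_mul_atTop (by norm_num)
      tendsto_inv_nhdsGT_zero
  have hint : Integrable fun y : ℝ =>
      Real.exp (|α| + 8 * α ^ 2 + 1 / 2) * Real.exp (-(1 / 4) * y ^ 2) :=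
    (integrable_exp_neg_mul_sq (by norm_num)).const_mul _
  have hgauss : ∫ y : ℝ, Real.exp (-(p ^ 2) * y ^ 2) = √Real.pi / p := by
    rw [integral_gaussian, Real.sqrt_div Real.pi_pos.le, Real.sqrt_sq hp.le]
  rw [← hgauss]
  refine tendsto_smul_tsum_integral_of_dominated_s13 hstart
    (tendsto_rpow_nhdsGT_zero hexp) hint ?_ fun y z hz =>
      tendsto_rescaledSummand (tendsto_id.mono_right (nhdsGT_le_nhdsNE 0)) hz
  filter_upwards [Ioo_mem_nhdsGT zero_lt_one] with ε ⟨hε, hε1⟩ y z hz hzy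
  have hq := sq_le_one_add_mul hp1 hε hε1.le hz
  rw [Real.norm_of_nonneg (rescaledSummand_nonneg ((sq_nonneg ε).trans hq))]
  exact rescaledSummand_le_gaussian hp1 hε hε1.le hq
    (hzy.trans (Real.rpow_le_one hε.le hε1.le hexp.le))

lemma tsum_eq_mul_tsum_rescaledSummand (hp : p ≠ 0) (hε : 0 < ε) :
    ∑' m : ℕ, ((m : ℝ) + 1) ^ α *
        Real.exp (2 * ((m : ℝ) + 1) ^ p - ((m : ℝ) + 1) ^ (2 * p) * ε ^ 2) =
      ε ^ (-2 * α / p) * Real.exp (1 / ε ^ 2) *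
        ∑' n : ℕ, rescaledSummand p α ε ((ε ^ (2 / p) - 1) / ε + ε ^ (2 / p - 1) * n) := by
  rw [← tsum_mul_left]
  congr! 2 with m
  have hcoord : 1 + ε * ((ε ^ (2 / p) - 1) / ε + ε ^ (2 / p - 1) * m) =
      ε ^ (2 / p) * (m + 1) := by
    rw [Real.rpow_sub_one hε.ne']
    field_simp
    ring
  refine rpow_mul_exp_eq_mul_rescaledSummand hp hε (by rw [hcoord]; positivity) ?_
  rw [hcoord, ← mul_assoc, neg_div, ← Real.rpow_add hε, neg_add_cancel, Real.rpow_zero, one_mul]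

end RescaledSummand

theorem sum_asymptotic_two_sqrt_pi_over_three_general {p : ℝ} (hp1 : 1 ≤ p) (hp2 : p < 2)
    (α : ℝ) :
    Tendsto (fun t : ℝ =>
        (∑' m : ℕ, ((m : ℝ) + 1) ^ α *
            Real.exp (2 * ((m : ℝ) + 1) ^ p - ((m : ℝ) + 1) ^ (2 * p) * t)) /
          (√Real.pi / p * t ^ (1 / 2 - (α + 1) / p) * Real.exp (1 / t)))
      (𝓝[>] 0) (𝓝 1) := by
  have hp : p ≠ 0 := by linarith
  have hsqrt : Tendsto (fun t : ℝ => √t) (𝓝[>] 0) (𝓝[>] 0) := by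
    simpa only [Real.sqrt_eq_rpow] using tendsto_rpow_nhdsGT_zero one_half_pos
  have hlim := ((tendsto_mul_tsum_rescaledSummand (α := α) hp1 hp2).comp hsqrt).div_const
    (√Real.pi / p)
  rw [div_self (by positivity)] at hlim
  refine hlim.congr' ?_
  filter_upwards [self_mem_nhdsWithin] with t (ht : 0 < t)
  have hε := Real.sqrt_pos.2 ht
  have hsum := tsum_eq_mul_tsum_rescaledSummand (α := α) hp hε
  have hscale : t ^ (1 / 2 - (α + 1) / p) * √t ^ (2 / p - 1) = √t ^ (-2 * α / p) := by
    rw [Real.sqrt_eq_rpow, ← Real.rpow_mul ht.le, ← Real.rpow_mul ht.le, ← Real.rpow_add ht]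
    congr 1
    field_simp
    ring
  rw [Real.sq_sqrt ht.le, ← hscale] at hsum
  rw [hsum, Function.comp_apply]
  field_simp

/-- As `t → 0⁺`, `∑_{m≥1} m^{-1/4} e^{2m^{3/2} - m³t} ~ (2√π/3) e^{1/t}`. -/
theorem sum_asymptotic_two_sqrt_pi_over_three :
    Tendsto (fun t : ℝ =>
        (∑' m : ℕ, ((m:ℝ) + 1) ^ (-(1/4) : ℝ) *
            Real.exp (2 * ((m:ℝ) + 1) ^ ((3:ℝ)/2) - ((m:ℝ) + 1) ^ 3 * t)) /
          (2 * Real.sqrt Real.pi / 3 * Real.exp (1/t)))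
      (𝓝[>] (0:ℝ)) (𝓝 1) := by
  refine (sum_asymptotic_two_sqrt_pi_over_three_general (p := 3 / 2) (by norm_num) (by norm_num)
    (-(1 / 4))).congr fun t => ?_
  norm_num [div_div_eq_mul_div, mul_comm]
end
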